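/- For every integer r ≥ 2 and every ε > 0 there exists d₀ = d₀(r, ε) such that for every fixed integer d ≥ d₀ the following holds with high probability: |χ(H_r(n,d)) − X| ≤ ε·X, where X := ((r−1)d/(r log d))^{1/(r−1)}. -/

import Mathlib

/-!
A random `d`-regular `r`-uniform hypergraph is studied through the configuration model: a word that
contains every vertex `d` times is rearranged by a uniformly random permutation of its `m * r = d * n`
slots, and is then read as `m` rows of length `r`, the edges. The word is *simple* if its rows are sets
and are pairwise distinct. Each regular hypergraph comes from the same number of simple words
(`card_words_of_regular`), and a switching argument shows that a random word is simple with probability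
bounded away from zero (`permProb_defect_free`). Hence it suffices to bound the probability of bad
events for random words (`tendsto_of_rare`).

A random rearrangement is compared with a word of independent letters: by a weak form of Stirling's
formula, probabilities increase by at most a polynomial factor (`permProb_le_iid`). Write
`q = k ^ (1 - r)` for the probability that a uniformly random edge is monochromatic.

*Lower bound on the chromatic number.* The expected number of proper `k`-colorings is at most
`(1 - q) ^ m * k ^ n` up to a polynomial factor, which tends to zero if `log k < (d / r) q`
(`rare_colorable`). This covers all `k < (1 - ε) X`.

*Upper bound.* Let `k` be `(1 + ε / 2) X`, rounded up.

* In the second moment of the number of proper colorings whose classes have size at most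
  `(1 + η) n / k`, the contribution of a pair of colorings depends on the frequencies `a i j` of pairs
  of colors only. The termwise inequality `termIneq_of` between `y ^ r - 1 - r (y - 1)` and the
  relative entropy `y log y - y + 1`, at `y = k ^ 2 * a i j`, bounds the second moment by a polynomial
  factor times `((1 - q) ^ m * k ^ n) ^ 2` (`second_moment_upper`). For the first moment, an explicit
  list of nonconstant rows in which all nonconstant words occur almost equally often
  (`exists_balanced`) shows that a fixed balanced coloring is proper with probability at least
  `(1 - q) ^ m` up to a polynomial factor. Thus a proper `k`-coloring exists with at least inverse
  polynomial probability (`exists_proper_inv_poly`).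
* The minimal number of monochromatic edges of a `k`-coloring changes by at most `2` under a
  transposition of two slots, so it is concentrated on the scale `sqrt n` (`permProb_concentration`).
  As it vanishes with inverse polynomial probability, it is at most `γ n` with high probability, for
  any fixed `γ > 0` (`rare_many_mono`).
* Small sets of vertices span few edges (`rare_dense`). Hence, after one vertex is picked from each
  monochromatic edge, the hypergraph induced on these vertices can be colored greedily with `5 * r` new
  colors (`exists_proper_of_few_mono`), and `k + 5 * r ≤ (1 + ε) X` if `d` is large.
-/

open Finset Filter Real

open scoped Classical

/-- A coloring `c` of the vertices is proper for the hypergraph with edge set `E`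
if no edge has all its vertices of the same color. -/
def ProperColoring {n k : ℕ} (E : Finset (Finset (Fin n))) (c : Fin n → Fin k) : Prop :=
  ∀ e ∈ E, ∃ v ∈ e, ∃ w ∈ e, c v ≠ c w

/-- The chromatic number of the hypergraph with edge set `E`. -/
noncomputable def chromaticNumber {n : ℕ} (E : Finset (Finset (Fin n))) : ℕ :=
  sInf {k : ℕ | ∃ c : Fin n → Fin k, ProperColoring E c}

/-- The family of all `d`-regular `r`-uniform hypergraphs on vertex set `Fin n`. -/
noncomputable def regularFamily (n r d : ℕ) : Finset (Finset (Finset (Fin n))) :=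
  Finset.univ.filter (fun E : Finset (Finset (Fin n)) =>
    (∀ e ∈ E, e.card = r) ∧ ∀ v : Fin n, (E.filter (fun e => v ∈ e)).card = d)

/-- The probability that a uniformly random element of `family` satisfies `P`. -/
noncomputable def uniformProb {α : Type*} (family : Finset α) (P : α → Prop) : ℝ :=
  ((family.filter (fun x => P x)).card : ℝ) / (family.card : ℝ)

set_option linter.unusedSectionVars false

/-! ### Counting rearrangements of a word -/

section Words

variable {S K : Type*} [Fintype S] [DecidableEq S] [Fintype K] [DecidableEq K]

/-- The number of occurrences of the letter `κ` in the word `w`. -/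
def cnt (w : S → K) (κ : K) : ℕ := (univ.filter (fun s => w s = κ)).card

/-- The proportion of permutations of `S` with the property `P`. -/
noncomputable def permProb (P : Equiv.Perm S → Prop) : ℝ :=
  uniformProb (univ : Finset (Equiv.Perm S)) P

lemma sum_cnt (w : S → K) : ∑ κ, cnt w κ = Fintype.card S := by
  unfold cnt
  rw [← Finset.card_univ (α := S)]
  exact (Finset.card_eq_sum_card_fiberwise (f := w) (t := univ) (by simp)).symm

lemma cnt_comp_perm (w : S → K) (σ : Equiv.Perm S) : cnt (w ∘ σ) = cnt w := by
  funext κ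
  unfold cnt
  refine Finset.card_bij (fun s _ => σ s) (by simp) (by simp) ?_
  intro b hb
  exact ⟨σ.symm b, by simpa using hb, by simp⟩

lemma exists_perm_of_cnt_eq (w₀ w : S → K) (h : cnt w = cnt w₀) :
    ∃ σ : Equiv.Perm S, w₀ ∘ σ = w := by
  have e : ∀ c, {a // w a = c} ≃ {b // w₀ b = c} := fun c =>
    Fintype.equivOfCardEq (by
      have := congrFun h c
      unfold cnt at this
      rw [Fintype.card_subtype, Fintype.card_subtype]
      convert this)
  exact ⟨Equiv.ofFiberEquiv e, funext fun a => Equiv.ofFiberEquiv_map e a⟩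

/-- The permutations carrying `w₀` to a given rearrangement of it form a coset of the stabilizer of `w₀`. -/
lemma card_perm_comp_eq (w₀ w : S → K) (h : cnt w = cnt w₀) :
    (univ.filter (fun σ : Equiv.Perm S => w₀ ∘ σ = w)).card = ∏ κ, (cnt w₀ κ).factorial := by
  obtain ⟨τ, rfl⟩ := exists_perm_of_cnt_eq w₀ w h
  have h1 := DomMulAct.stabilizer_card w₀
  have h2 : (univ.filter (fun σ : Equiv.Perm S => w₀ ∘ σ = w₀ ∘ τ)).card
      = (univ.filter (fun σ : Equiv.Perm S => w₀ ∘ σ = w₀)).card := by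
    refine Finset.card_bij (fun σ _ => σ * τ⁻¹) ?_ ?_ ?_
    · intro σ hσ
      simp only [mem_filter, mem_univ, true_and] at hσ ⊢
      funext s
      have := congrFun hσ (τ⁻¹ s)
      simpa using this
    · intro a _ b _ hab
      simpa using hab
    · intro σ hσ
      refine ⟨σ * τ, ?_, by simp⟩
      simp only [mem_filter, mem_univ, true_and] at hσ ⊢
      funext s
      have := congrFun hσ (τ s)
      simpa using this
  rw [h2, ← Fintype.card_subtype]
  convert h1 using 2
  unfold cnt
  rw [Fintype.card_subtype]

lemma card_perm_filter (w₀ : S → K) (A : (S → K) → Prop) :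
    (univ.filter (fun σ : Equiv.Perm S => A (w₀ ∘ σ))).card
      = (univ.filter (fun w : S → K => cnt w = cnt w₀ ∧ A w)).card
        * ∏ κ, (cnt w₀ κ).factorial := by
  rw [Finset.card_eq_sum_card_fiberwise (f := fun σ : Equiv.Perm S => w₀ ∘ σ)
    (t := univ.filter (fun w : S → K => cnt w = cnt w₀ ∧ A w))]
  · rw [Finset.sum_const_nat (m := ∏ κ, (cnt w₀ κ).factorial)]
    intro w hw
    simp only [mem_filter, mem_univ, true_and] at hw
    rw [← card_perm_comp_eq w₀ w hw.1]
    congr 1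
    ext σ
    simp only [mem_filter, mem_univ, true_and, and_iff_right_iff_imp]
    rintro rfl
    exact hw.2
  · intro σ hσ
    simp only [coe_filter, mem_univ, true_and, Set.mem_ofPred_eq] at hσ ⊢
    exact ⟨cnt_comp_perm w₀ σ, hσ⟩

lemma card_words_mul (w₀ : S → K) :
    (univ.filter (fun w : S → K => cnt w = cnt w₀)).card * ∏ κ, (cnt w₀ κ).factorial
      = (Fintype.card S).factorial := by
  have := card_perm_filter w₀ (fun _ => True)
  simp only [filter_true, and_true, card_univ, Fintype.card_perm] at this
  exact this.symm

end Words

/-- A weak form of the upper bound in Stirling's formula. -/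
lemma factorial_upper (c : ℕ) :
    (c.factorial : ℝ) ≤ exp 1 * (c + 1) * ((c : ℝ) ^ c * exp (-c)) := by
  have key : ∀ c : ℕ, ((c+1).factorial : ℝ) ≤
      exp 1 * (c + 1) * (((c+1 : ℕ) : ℝ) ^ (c+1) * exp (-((c+1 : ℕ) : ℝ))) := by
    intro c
    induction c with
    | zero => simp [← exp_add]
    | succ c ih =>
      have hc : (0:ℝ) < (c:ℝ) + 1 := by positivity
      have h1 : exp 1 ≤ (((c:ℝ) + 2)/(c+1)) ^ (c+2) := by
        have h2 : 1/((c:ℝ)+2) ≤ log (((c:ℝ) + 2)/(c+1)) := by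
          have := Real.log_le_sub_one_of_pos (x := ((c:ℝ)+1)/(c+2)) (by positivity)
          have h3 : log (((c:ℝ) + 2)/(c+1)) = - log (((c:ℝ)+1)/(c+2)) := by
            rw [← Real.log_inv, inv_div]
          have h4 : ((c:ℝ)+1)/(c+2) - 1 = -(1/((c:ℝ)+2)) := by
            field_simp; ring
          rw [h3]; linarith
        rw [← Real.le_log_iff_exp_le (by positivity), Real.log_pow]
        push_cast
        calc (1:ℝ) = (c+2) * (1/((c:ℝ)+2)) := by field_simp
          _ ≤ _ := by gcongr
      rw [Nat.factorial_succ]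
      push_cast at ih ⊢
      have h5 : (((c:ℝ) + 2)/(c+1)) ^ (c+2) * (c+1)^(c+2) = (c+2)^(c+2) := by
        rw [← mul_pow]; congr 1; field_simp
      have h6 : exp (-((c:ℝ)+1)) = exp 1 * exp (-((c:ℝ)+1+1)) := by
        rw [← exp_add]; congr 1; ring
      calc ((c:ℝ)+1+1) * ((c+1).factorial:ℝ)
          ≤ ((c:ℝ)+1+1) * (exp 1 * (c+1) * (((c:ℝ)+1)^(c+1) * exp (-((c:ℝ)+1)))) := by gcongr
        _ = ((c:ℝ)+1+1) * exp 1 * (exp 1 * (c+1)^(c+2)) * exp (-((c:ℝ)+1+1)) := by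
            rw [h6]; ring
        _ ≤ ((c:ℝ)+1+1) * exp 1 * (c+2)^(c+2) * exp (-((c:ℝ)+1+1)) := by
            gcongr
            rw [← h5]; gcongr
        _ = _ := by ring
  rcases c with _ | c
  · simp
  · refine (key c).trans ?_
    gcongr
    linarith

section Words2

variable {S K : Type*} [Fintype S] [DecidableEq S] [Fintype K] [DecidableEq K]

/-- The empirical frequency of the letter `κ` in the word `w`. -/
noncomputable def freq (w : S → K) (κ : K) : ℝ := (cnt w κ : ℝ) / Fintype.card S

lemma freq_nonneg (w : S → K) (κ : K) : 0 ≤ freq w κ := by unfold freq; positivity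

lemma sum_freq [Nonempty S] (w : S → K) : ∑ κ, freq w κ = 1 := by
  unfold freq
  rw [← Finset.sum_div, ← Nat.cast_sum, sum_cnt]
  exact div_self (by simp)

lemma prod_comp_eq (w : S → K) (a : K → ℝ) : ∏ s, a (w s) = ∏ κ, a κ ^ cnt w κ := by
  unfold cnt
  rw [← Finset.prod_fiberwise_of_maps_to (g := w) (t := univ) (by simp)]
  refine Finset.prod_congr rfl fun κ _ => ?_
  rw [Finset.prod_congr rfl (g := fun _ => a κ), Finset.prod_const]
  intro x hx
  simp at hx
  rw [hx]

/-- The polynomial loss in passing from independent letters to a uniform rearrangement. -/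
noncomputable def loss (N k : ℕ) : ℝ := (exp 1 * (N + 1)) ^ k

lemma loss_pos (N k : ℕ) : 0 < loss N k := by unfold loss; positivity

/-- The multinomial distribution puts at least inverse-polynomial mass on its mean vector. -/
lemma prod_factorial_le (w : S → K) :
    (∏ κ, ((cnt w κ).factorial : ℝ)) ≤
      loss (Fintype.card S) (Fintype.card K) * (Fintype.card S).factorial
        * ∏ κ, freq w κ ^ cnt w κ := by
  set N := Fintype.card S with hN
  have h1 : ∏ κ, ((cnt w κ).factorial : ℝ) ≤
      ∏ κ, (exp 1 * (N + 1) * (((cnt w κ : ℕ) : ℝ) ^ cnt w κ * exp (-(cnt w κ)))) := by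
    refine Finset.prod_le_prod (fun _ _ => by positivity) fun κ _ => ?_
    refine (factorial_upper _).trans ?_
    gcongr
    rw [hN]
    exact Finset.card_le_univ _
  refine h1.trans ?_
  rw [Finset.prod_mul_distrib, Finset.prod_const, Finset.card_univ, Finset.prod_mul_distrib,
    ← Real.exp_sum]
  have h2 : ∏ κ, freq w κ ^ cnt w κ = (∏ κ, (cnt w κ : ℝ) ^ cnt w κ) / (N:ℝ)^N := by
    unfold freq
    simp_rw [div_pow]
    rw [Finset.prod_div_distrib, Finset.prod_pow_eq_pow_sum, sum_cnt]
  rw [h2, Finset.sum_neg_distrib, ← Nat.cast_sum, sum_cnt, ← hN, mul_assoc]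
  unfold loss
  gcongr ?_ * ?_
  rcases Nat.eq_zero_or_pos N with h0 | h0
  · simp [h0]
  have h3 : (N:ℝ)^N / N.factorial ≤ exp N := Real.pow_div_factorial_le_exp _ (by positivity) _
  rw [div_le_iff₀ (by positivity)] at h3
  have hNN : (0:ℝ) < (N:ℝ)^N := by positivity
  rw [← mul_div_assoc, le_div_iff₀ hNN]
  have : 0 ≤ ∏ κ, (cnt w κ : ℝ) ^ cnt w κ := Finset.prod_nonneg fun _ _ => by positivity
  calc (∏ κ, (cnt w κ : ℝ) ^ cnt w κ) * exp (-N) * (N:ℝ)^N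
      ≤ (∏ κ, (cnt w κ : ℝ) ^ cnt w κ) * exp (-N) * (exp N * N.factorial) := by gcongr
    _ = N.factorial * (∏ κ, (cnt w κ : ℝ) ^ cnt w κ) * (exp (-N) * exp N) := by ring
    _ = _ := by rw [← exp_add]; simp

lemma permProb_eq (w₀ : S → K) (A : (S → K) → Prop) :
    permProb (fun σ : Equiv.Perm S => A (w₀ ∘ σ)) =
      ((univ.filter (fun w : S → K => cnt w = cnt w₀ ∧ A w)).card : ℝ)
        * (∏ κ, ((cnt w₀ κ).factorial : ℝ)) / (Fintype.card S).factorial := by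
  unfold permProb uniformProb
  rw [card_perm_filter]
  simp [Fintype.card_perm]

/-- A uniform rearrangement of `w₀` has a property with probability at most a polynomial factor
times the probability for a word of independent letters with the letter frequencies of `w₀`. -/
lemma permProb_le_iid (w₀ : S → K) (A : (S → K) → Prop) :
    permProb (fun σ : Equiv.Perm S => A (w₀ ∘ σ)) ≤
      loss (Fintype.card S) (Fintype.card K) *
        ∑ w ∈ univ.filter (fun w : S → K => A w), ∏ s, freq w₀ (w s) := by
  rw [permProb_eq, div_le_iff₀ (by positivity)]
  have h1 : ((univ.filter (fun w : S → K => cnt w = cnt w₀ ∧ A w)).card : ℝ)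
      * ∏ κ, freq w₀ κ ^ cnt w₀ κ
      ≤ ∑ w ∈ univ.filter (fun w : S → K => A w), ∏ s, freq w₀ (w s) := by
    rw [← nsmul_eq_mul, ← Finset.sum_const]
    refine le_trans (le_of_eq ?_) (Finset.sum_le_sum_of_subset_of_nonneg (s := univ.filter (fun w : S → K => cnt w = cnt w₀ ∧ A w)) ?_ ?_)
    · refine Finset.sum_congr rfl fun w hw => ?_
      simp only [mem_filter, mem_univ, true_and] at hw
      rw [prod_comp_eq, hw.1]
    · intro w; simp +contextual
    · intro w _ _
      exact Finset.prod_nonneg fun _ _ => freq_nonneg _ _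
  calc _ ≤ ((univ.filter (fun w : S → K => cnt w = cnt w₀ ∧ A w)).card : ℝ) *
        (loss (Fintype.card S) (Fintype.card K) * (Fintype.card S).factorial
        * ∏ κ, freq w₀ κ ^ cnt w₀ κ) := by
          gcongr
          exact prod_factorial_le w₀
    _ = loss (Fintype.card S) (Fintype.card K) * (((univ.filter (fun w : S → K => cnt w = cnt w₀ ∧ A w)).card : ℝ) * ∏ κ, freq w₀ κ ^ cnt w₀ κ) *  (Fintype.card S).factorial := by ring
    _ ≤ _ := by
        have := (loss_pos (Fintype.card S) (Fintype.card K)).le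
        gcongr

/-- If no letter of `w₀` occurs more than `|S|/|K| + C` times, then up to a polynomial factor all
words are rearrangements of `w₀`. -/
lemma card_words_ge [Nonempty S] [Nonempty K] (w₀ : S → K) (C : ℝ) (_hC : 0 ≤ C)
    (h : ∀ κ, (cnt w₀ κ : ℝ) ≤ (Fintype.card S : ℝ) / Fintype.card K + C) :
    (Fintype.card K : ℝ) ^ Fintype.card S ≤
      loss (Fintype.card S) (Fintype.card K) * exp (C * Fintype.card K) *
      (univ.filter (fun w : S → K => cnt w = cnt w₀)).card := by
  set N := Fintype.card S with hN
  set k := Fintype.card K with hk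
  have hN0 : (0:ℝ) < N := by rw [hN]; exact_mod_cast Fintype.card_pos
  have hk0 : (0:ℝ) < k := by rw [hk]; exact_mod_cast Fintype.card_pos
  have h1 := prod_factorial_le w₀
  have h2 : ((univ.filter (fun w : S → K => cnt w = cnt w₀)).card : ℝ) * ∏ κ, ((cnt w₀ κ).factorial : ℝ)
      = (N.factorial : ℝ) := by
    have := card_words_mul w₀
    exact_mod_cast this
  have h3 : ∏ κ, freq w₀ κ ^ cnt w₀ κ ≤ exp (C * k) / k ^ N := by
    have h4 : ∀ κ, freq w₀ κ ≤ exp (C * k / N) / k := by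
      intro κ
      unfold freq
      rw [← hN, div_le_div_iff₀ hN0 hk0]
      have := h κ
      have h5 := Real.add_one_le_exp (C * k / N)
      calc (cnt w₀ κ : ℝ) * k ≤ (N / k + C) * k := by gcongr
        _ = (C * k / N + 1) * N := by field_simp; ring
        _ ≤ _ := by gcongr
    calc ∏ κ, freq w₀ κ ^ cnt w₀ κ ≤ ∏ κ, (exp (C * k / N) / k) ^ cnt w₀ κ := by
          refine Finset.prod_le_prod (fun _ _ => pow_nonneg (freq_nonneg _ _) _) fun κ _ => ?_
          exact pow_le_pow_left₀ (freq_nonneg _ _) (h4 κ) _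
      _ = (exp (C * k / N) / k) ^ N := by rw [Finset.prod_pow_eq_pow_sum, sum_cnt]
      _ = _ := by
          rw [div_pow, ← Real.exp_nat_mul]; congr 2; field_simp
  set W : ℝ := ((univ.filter (fun w : S → K => cnt w = cnt w₀)).card : ℝ)
  have hW : 0 ≤ W := by positivity
  have hl := loss_pos N k
  have h6 : (N.factorial : ℝ) ≤ W * (loss N k * N.factorial * (exp (C * k) / k ^ N)) := by
    rw [← h2]
    rw [← h2] at h1
    refine mul_le_mul_of_nonneg_left ?_ hW
    refine h1.trans ?_
    have : 0 ≤ ∏ κ, ((cnt w₀ κ).factorial : ℝ) := by positivity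
    gcongr
  have hf : (0:ℝ) < N.factorial := by positivity
  have h7 : (1:ℝ) ≤ W * loss N k * exp (C*k) / k^N := by
    have : (N.factorial : ℝ) * 1 ≤ N.factorial * (W * loss N k * exp (C*k) / k^N) := by
      rw [mul_one]; refine h6.trans (le_of_eq ?_); ring
    exact le_of_mul_le_mul_left this hf
  rw [le_div_iff₀ (by positivity)] at h7
  linarith

/-- Lower bound for the probability that a uniform rearrangement has a property. -/
lemma permProb_ge_card (w₀ : S → K) (A : (S → K) → Prop) :
    ((univ.filter (fun w : S → K => cnt w = cnt w₀ ∧ A w)).card : ℝ) ≤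
      (Fintype.card K : ℝ) ^ Fintype.card S * permProb (fun σ : Equiv.Perm S => A (w₀ ∘ σ)) := by
  have h2 : ((univ.filter (fun w : S → K => cnt w = cnt w₀)).card : ℝ) * ∏ κ, ((cnt w₀ κ).factorial : ℝ)
      = ((Fintype.card S).factorial : ℝ) := by
    have := card_words_mul w₀
    exact_mod_cast this
  have h3 : ((univ.filter (fun w : S → K => cnt w = cnt w₀)).card : ℝ) ≤
      (Fintype.card K : ℝ) ^ Fintype.card S := by
    have : (univ.filter (fun w : S → K => cnt w = cnt w₀)).card ≤ Fintype.card (S → K) :=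
      Finset.card_le_univ _
    rw [Fintype.card_fun] at this
    exact_mod_cast this
  rw [permProb_eq, mul_div_assoc', le_div_iff₀ (by positivity), ← h2]
  have : 0 ≤ ∏ κ, ((cnt w₀ κ).factorial : ℝ) := by positivity
  calc _ = ((univ.filter (fun w : S → K => cnt w = cnt w₀)).card : ℝ) *
    (((univ.filter (fun w : S → K => cnt w = cnt w₀ ∧ A w)).card : ℝ) * ∏ κ, ((cnt w₀ κ).factorial : ℝ)) := by ring
    _ ≤ _ := by gcongr

/-- Summing the self-likelihood of all words costs only the number of count vectors. -/
lemma sum_prod_freq_le [Nonempty S] :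
    ∑ w : S → K, ∏ s, freq w (w s) ≤ ((Fintype.card S : ℝ) + 1) ^ Fintype.card K := by
  set T : Finset (K → ℕ) := Fintype.piFinset (fun _ => Finset.range (Fintype.card S + 1))
  have hT : ∀ w : S → K, cnt w ∈ T := by
    intro w
    simp only [T, Fintype.mem_piFinset, mem_range]
    intro κ
    exact Nat.lt_succ_of_le (Finset.card_le_univ _)
  rw [← Finset.sum_fiberwise_of_maps_to (s := univ) (t := T) (g := fun w : S → K => cnt w) (fun w _ => hT w)]
  have h1 : ∀ c ∈ T, ∑ w ∈ univ.filter (fun w : S → K => cnt w = c), ∏ s, freq w (w s) ≤ 1 := by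
    intro c _
    by_cases hc : ∃ w₀ : S → K, cnt w₀ = c
    · obtain ⟨w₀, rfl⟩ := hc
      calc _ = ∑ w ∈ univ.filter (fun w : S → K => cnt w = cnt w₀), ∏ s, freq w₀ (w s) := by
            refine Finset.sum_congr rfl fun w hw => ?_
            simp only [mem_filter, mem_univ, true_and] at hw
            have : freq w = freq w₀ := by funext κ; unfold freq; rw [hw]
            rw [this]
        _ ≤ ∑ w : S → K, ∏ s, freq w₀ (w s) :=
            Finset.sum_le_sum_of_subset_of_nonneg (Finset.subset_univ _)
              fun _ _ _ => Finset.prod_nonneg fun _ _ => freq_nonneg _ _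
        _ = ∏ s : S, ∑ κ, freq w₀ κ := by
            rw [Finset.prod_univ_sum, Fintype.piFinset_univ]
        _ = 1 := by rw [sum_freq]; simp
    · rw [Finset.sum_eq_zero]
      · norm_num
      · intro w hw
        simp only [mem_filter, mem_univ, true_and] at hw
        exact absurd ⟨w, hw⟩ hc
  refine (Finset.sum_le_sum h1).trans ?_
  simp [T]

end Words2

/-! ### Concentration for random permutations -/

/-- Hoeffding's lemma for bounded values with mean zero. -/
lemma sum_exp_le_of_sum_zero {ι : Type*} (s : Finset ι) (x : ι → ℝ) (a : ℝ) (ha : 0 ≤ a)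
    (h0 : ∑ i ∈ s, x i = 0) (hx : ∀ i ∈ s, |x i| ≤ a) :
    ∑ i ∈ s, exp (x i) ≤ s.card * exp (a ^ 2 / 2) := by
  rcases ha.eq_or_lt with rfl | ha
  · rw [Finset.sum_congr rfl (g := fun _ => (1:ℝ))]
    · simp
    · intro i hi
      have := hx i hi
      have : x i = 0 := by simpa using this
      simp [this]
  have h1 : ∀ i ∈ s, exp (x i) ≤ Real.cosh a + x i * (Real.sinh a / a) := by
    intro i hi
    have hi' := abs_le.1 (hx i hi)
    have := (convexOn_exp).2 (Set.mem_univ a) (Set.mem_univ (-a))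
      (div_nonneg (by linarith) (by linarith) : 0 ≤ (a + x i) / (2 * a))
      (div_nonneg (by linarith) (by linarith) : 0 ≤ (a - x i) / (2 * a))
      (by field_simp; ring)
    have e1 : ((a + x i) / (2 * a)) • a + ((a - x i) / (2 * a)) • (-a) = x i := by
      simp only [smul_eq_mul]; field_simp; ring
    rw [e1] at this
    refine this.trans (le_of_eq ?_)
    rw [Real.cosh_eq, Real.sinh_eq]
    simp only [smul_eq_mul]; field_simp; ring
  calc ∑ i ∈ s, exp (x i) ≤ ∑ i ∈ s, (Real.cosh a + x i * (Real.sinh a / a)) := Finset.sum_le_sum h1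
    _ = s.card * Real.cosh a := by
        rw [Finset.sum_add_distrib, ← Finset.sum_mul, h0]; simp
    _ ≤ _ := by
        gcongr
        exact Real.cosh_le_exp_half_sq a

/-- The average of a function over all permutations. -/
noncomputable def permMean {α : Type*} [Fintype α] [DecidableEq α] (F : Equiv.Perm α → ℝ) : ℝ :=
  (∑ σ, F σ) / (Fintype.card α).factorial

lemma permMean_mono {α : Type*} [Fintype α] [DecidableEq α] {F G : Equiv.Perm α → ℝ} (h : ∀ σ, F σ ≤ G σ) :
    permMean F ≤ permMean G := by
  unfold permMean
  gcongr
  exact h _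

lemma permMean_const {α : Type*} [Fintype α] [DecidableEq α] (c : ℝ) : permMean (fun _ : Equiv.Perm α => c) = c := by
  unfold permMean
  simp [Fintype.card_perm, Nat.factorial_ne_zero]

lemma permMean_add {α : Type*} [Fintype α] [DecidableEq α] (F G : Equiv.Perm α → ℝ) :
    permMean (fun σ => F σ + G σ) = permMean F + permMean G := by
  unfold permMean
  rw [Finset.sum_add_distrib, add_div]

/-- Conditioning on the image of `none`. -/
lemma permMean_option {α : Type*} [Fintype α] [DecidableEq α] (F : Equiv.Perm (Option α) → ℝ) :
    permMean F = (∑ p : Option α, permMean (fun τ : Equiv.Perm α =>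
      F (Equiv.swap none p * Equiv.optionCongr τ))) / (Fintype.card (Option α)) := by
  unfold permMean
  rw [← Finset.sum_div, ← (Equiv.Perm.decomposeOption (α := α)).symm.sum_comp F,
    Fintype.sum_prod_type, div_div]
  congr 1
  rw [Fintype.card_option, Nat.factorial_succ]
  push_cast; ring

/-- Subgaussian bound for functions of a uniform permutation that change by at most `c` under a
transposition, by induction on the size of the set: the image of one point is exposed at a time. -/
lemma permMean_exp_le (α : Type) [Fintype α] [DecidableEq α] : ∀ (F : Equiv.Perm α → ℝ) (c : ℝ), 0 ≤ c →
    (∀ σ a b, |F (Equiv.swap a b * σ) - F σ| ≤ c) →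
    permMean (fun σ => exp (F σ)) ≤ exp (permMean F + 2 * c ^ 2 * Fintype.card α) := by
  refine Fintype.induction_empty_option (P := fun α _ => ∀ [DecidableEq α], ∀ (F : Equiv.Perm α → ℝ) (c : ℝ), 0 ≤ c →
    (∀ σ a b, |F (Equiv.swap a b * σ) - F σ| ≤ c) →
    permMean (fun σ => exp (F σ)) ≤ exp (permMean F + 2 * c ^ 2 * Fintype.card α)) ?_ ?_ ?_ α
  · intro α β _ e ih _ F c hc hF
    let _ : Fintype α := Fintype.ofEquiv _ e.symm
    have hm : ∀ G : Equiv.Perm β → ℝ, permMean G = permMean (fun σ : Equiv.Perm α => G (e.permCongr σ)) := by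
      intro G
      unfold permMean
      rw [← (e.permCongr).sum_comp, Fintype.card_congr e]
    rw [hm, hm F, ← Fintype.card_congr e]
    refine ih (fun σ => F (e.permCongr σ)) c hc ?_
    intro σ a b
    have : e.permCongr (Equiv.swap a b * σ) = Equiv.swap (e a) (e b) * e.permCongr σ := by
      ext x
      simp [Equiv.permCongr_apply, Equiv.swap_apply_def]
      split_ifs <;> simp_all
    rw [this]
    exact hF _ _ _
  · intro inst F c hc hF
    unfold permMean
    simp
  · intro α _ ih inst F c hc hF
    obtain rfl : inst = Option.instDecidableEq := Subsingleton.elim _ _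
    set Fp : Option α → Equiv.Perm α → ℝ := fun p τ => F (Equiv.swap none p * Equiv.optionCongr τ)
    have hFp : ∀ p σ a b, |Fp p (Equiv.swap a b * σ) - Fp p σ| ≤ c := by
      intro p σ a b
      have e1 : Equiv.optionCongr (Equiv.swap a b * σ) =
          Equiv.swap (some a) (some b) * Equiv.optionCongr σ := by
        rw [← Equiv.optionCongr_swap]
        ext x; cases x <;> rfl
      have e2 : Equiv.swap none p * Equiv.optionCongr (Equiv.swap a b * σ) =
          Equiv.swap (Equiv.swap none p (some a)) (Equiv.swap none p (some b)) *
            (Equiv.swap none p * Equiv.optionCongr σ) := by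
        rw [e1, ← mul_assoc, ← mul_assoc, ← Equiv.mul_swap_eq_swap_mul]
      simp only [Fp]
      rw [e2]
      exact hF _ _ _
    have hdiff : ∀ p, |permMean (Fp p) - permMean (Fp none)| ≤ c := by
      intro p
      have hb : ∀ τ, |Fp p τ - Fp none τ| ≤ c := by
        intro τ
        simp only [Fp, Equiv.swap_self]
        exact hF _ _ _
      rw [abs_le]
      constructor
      · have := permMean_mono (F := Fp none) (G := fun τ => Fp p τ + c)
          (fun τ => by have := (abs_le.1 (hb τ)).1; linarith)
        rw [permMean_add, permMean_const] at this
        linarith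
      · have := permMean_mono (F := Fp p) (G := fun τ => Fp none τ + c)
          (fun τ => by have := (abs_le.1 (hb τ)).2; linarith)
        rw [permMean_add, permMean_const] at this
        linarith
    have hn : (0:ℝ) < Fintype.card (Option α) := by exact_mod_cast Fintype.card_pos
    have hmean : permMean F = (∑ p, permMean (Fp p)) / Fintype.card (Option α) := permMean_option F
    have hdev : ∀ p, |permMean (Fp p) - permMean F| ≤ 2 * c := by
      intro p
      have : |permMean F - permMean (Fp none)| ≤ c := by
        have e : permMean F - permMean (Fp none) =
            (∑ p, (permMean (Fp p) - permMean (Fp none))) / Fintype.card (Option α) := by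
          rw [hmean, Finset.sum_sub_distrib, sub_div]
          congr 1
          rw [Finset.sum_const, Finset.card_univ, nsmul_eq_mul]
          field_simp
        rw [e, abs_div, abs_of_pos hn, div_le_iff₀ hn]
        refine (Finset.abs_sum_le_sum_abs _ _).trans ((Finset.sum_le_sum fun p _ => hdiff p).trans ?_)
        rw [Finset.sum_const, Finset.card_univ, nsmul_eq_mul, mul_comm]
      have h2 := hdiff p
      rw [abs_le] at *
      constructor <;> linarith [this.1, this.2, h2.1, h2.2]
    rw [permMean_option, div_le_iff₀ hn]
    have step : ∑ p, exp (permMean (Fp p) - permMean F) ≤ (Fintype.card (Option α)) * exp ((2*c)^2/2) := by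
      have := sum_exp_le_of_sum_zero univ (fun p => permMean (Fp p) - permMean F) (2*c) (by linarith)
        (by
          rw [Finset.sum_sub_distrib, hmean, Finset.sum_const, Finset.card_univ, nsmul_eq_mul]
          field_simp
          ring) (fun p _ => hdev p)
      simpa using this
    calc ∑ p, permMean (fun τ => exp (Fp p τ))
        ≤ ∑ p, exp (permMean (Fp p) + 2 * c^2 * Fintype.card α) :=
          Finset.sum_le_sum fun p _ => ih (Fp p) c hc (hFp p)
      _ = exp (permMean F + 2 * c^2 * Fintype.card α) * ∑ p, exp (permMean (Fp p) - permMean F) := by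
          rw [Finset.mul_sum]
          refine Finset.sum_congr rfl fun p _ => ?_
          rw [← exp_add]; congr 1; ring
      _ ≤ exp (permMean F + 2 * c^2 * Fintype.card α) * ((Fintype.card (Option α)) * exp ((2*c)^2/2)) := by
          gcongr
      _ = _ := by
          rw [mul_comm (Fintype.card (Option α) : ℝ), ← mul_assoc, ← exp_add]
          congr 2
          rw [Fintype.card_option]; push_cast; ring

/-- If a function with transposition-Lipschitz constant `2` is nonpositive with not too small
probability, then it is small with high probability: the lower tail bound shows that its mean is at
most `t`, and the upper tail bound then applies. -/
lemma permProb_concentration {α : Type} [Fintype α] [DecidableEq α] (F : Equiv.Perm α → ℝ)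
    (hF : ∀ σ a b, |F (Equiv.swap a b * σ) - F σ| ≤ 2) (t p : ℝ) (ht : 0 ≤ t)
    (hp : p ≤ permProb (fun σ => F σ ≤ 0)) (hbig : exp (- (t ^ 2 / (32 * Fintype.card α))) < p)
    (hN : 0 < Fintype.card α) :
    permProb (fun σ => 2 * t ≤ F σ) ≤ exp (- (t ^ 2 / (32 * Fintype.card α))) := by
  set N : ℝ := (Fintype.card α : ℝ)
  have hN0 : (0:ℝ) < N := by simp only [N]; exact_mod_cast hN
  have hfac : (0:ℝ) < (Fintype.card α).factorial := by positivity
  have mgf : ∀ l : ℝ, permMean (fun σ => exp (l * F σ)) ≤ exp (l * permMean F + 8 * l ^ 2 * N) := by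
    intro l
    have := permMean_exp_le α (fun σ => l * F σ) (|l| * 2) (by positivity) (by
      intro σ a b
      rw [← mul_sub, abs_mul]
      have := hF σ a b
      gcongr)
    refine this.trans (le_of_eq ?_)
    have e : permMean (fun σ => l * F σ) = l * permMean F := by
      unfold permMean; rw [← Finset.mul_sum]; ring
    rw [e]
    congr 2
    rw [mul_pow, sq_abs]; ring
  have markov : ∀ (Q : Equiv.Perm α → Prop) (G : Equiv.Perm α → ℝ) (b : ℝ), 0 < b → (∀ σ, 0 ≤ G σ) → (∀ σ, Q σ → b ≤ G σ) →
      permProb Q * b ≤ permMean G := by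
    intro Q G b hb hG hQ
    unfold permProb uniformProb permMean
    rw [Finset.card_univ, Fintype.card_perm, div_mul_eq_mul_div]
    refine div_le_div_of_nonneg_right ?_ hfac.le
    rw [← nsmul_eq_mul, ← Finset.sum_const]
    refine le_trans (Finset.sum_le_sum (s := univ.filter Q) (f := fun _ => b) (g := G) ?_) ?_
    · intro σ hσ
      exact hQ σ (by simpa using hσ)
    · convert Finset.sum_le_sum_of_subset_of_nonneg (Finset.subset_univ (univ.filter Q)) (fun σ _ _ => hG σ)
  have hmu : permMean F < t := by
    by_contra hcon
    push Not at hcon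
    have h1 := markov (fun σ => F σ ≤ 0) (fun σ => exp (-(t / (16*N)) * F σ)) 1 one_pos
      (fun _ => (exp_pos _).le) (fun σ hσ => by
        rw [Real.one_le_exp_iff]
        have : 0 ≤ t / (16*N) := by positivity
        nlinarith)
    have h2 := mgf (-(t / (16*N)))
    rw [mul_one] at h1
    have h3 : exp (-(t / (16*N)) * permMean F + 8 * (-(t / (16*N))) ^ 2 * N) ≤ exp (- (t^2/(32*N))) := by
      rw [Real.exp_le_exp]
      have : (t / (16*N)) * t ≤ (t / (16*N)) * permMean F := by gcongr
      have e : 8 * (-(t / (16*N))) ^ 2 * N = t^2/(32*N) := by field_simp; ring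
      have e2 : (t / (16*N)) * t = 2 * (t^2/(32*N)) := by field_simp; ring
      rw [e]; linarith
    linarith
  have h1 := markov (fun σ => 2 * t ≤ F σ) (fun σ => exp ((t / (16*N)) * F σ)) (exp ((t / (16*N)) * (2*t))) (exp_pos _)
      (fun _ => (exp_pos _).le) (fun σ hσ => by
        rw [Real.exp_le_exp]
        gcongr)
  have h2 := mgf (t / (16*N))
  rw [← le_div_iff₀ (exp_pos _)] at h1
  refine h1.trans ((div_le_div_of_nonneg_right h2 (exp_pos _).le).trans ?_)
  rw [← Real.exp_sub, Real.exp_le_exp]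
  have : (t / (16*N)) * permMean F ≤ (t / (16*N)) * t := by gcongr
  have e : 8 * (t / (16*N)) ^ 2 * N = t^2/(32*N) := by field_simp; ring
  have e2 : (t / (16*N)) * t = 2 * (t^2/(32*N)) := by field_simp; ring
  have e3 : (t / (16*N)) * (2*t) = 4 * (t^2/(32*N)) := by field_simp; ring
  rw [e, e3]; linarith

/-! ### Switching away defects -/

section Switching

variable {n m r : ℕ}

/-- The defects of a word, read as a list of `m` rows (edges) of length `r`: two distinct slots in a
row and two distinct slots in a row carrying the same two vertices, where the first slots differ.
A repeated vertex in a row and a pair of rows sharing two vertices both give rise to a defect. -/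
noncomputable def defects (f : Fin m × Fin r → Fin n) :
    Finset ((Fin m × Fin r) × (Fin m × Fin r) × (Fin m × Fin r) × (Fin m × Fin r)) :=
  univ.filter (fun q => q.1 ≠ q.2.1 ∧ q.1.1 = q.2.1.1 ∧ q.2.2.1 ≠ q.2.2.2 ∧
    q.2.2.1.1 = q.2.2.2.1 ∧ q.1 ≠ q.2.2.1 ∧ f q.1 = f q.2.2.1 ∧ f q.2.1 = f q.2.2.2)

lemma mem_defects (f : Fin m × Fin r → Fin n) (a b c e : Fin m × Fin r) :
    (a, b, c, e) ∈ defects f ↔ a ≠ b ∧ a.1 = b.1 ∧ c ≠ e ∧ c.1 = e.1 ∧ a ≠ c ∧ f a = f c ∧ f b = f e := by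
  simp [defects]

/-- The slots in the row of `s`. -/
noncomputable def rowOf (s : Fin m × Fin r) : Finset (Fin m × Fin r) :=
  univ.filter (fun t => t.1 = s.1)

lemma mem_rowOf (s t : Fin m × Fin r) : t ∈ rowOf s ↔ t.1 = s.1 := by simp [rowOf]

lemma card_rowOf (s : Fin m × Fin r) : (rowOf s).card = r := by
  have : rowOf s = univ.image (fun i : Fin r => (s.1, i)) := by
    ext t
    simp only [mem_rowOf, mem_image, mem_univ, true_and]
    constructor
    · intro h; exact ⟨t.2, by rw [← h]⟩
    · rintro ⟨i, rfl⟩; rfl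
  rw [this, Finset.card_image_of_injective _ (fun i j h => by simpa using h)]
  simp

/-- The slots carrying the same vertex as the slot `s`. -/
noncomputable def fiberOf (f : Fin m × Fin r → Fin n) (s : Fin m × Fin r) : Finset (Fin m × Fin r) :=
  univ.filter (fun t => f t = f s)

lemma mem_fiberOf (f : Fin m × Fin r → Fin n) (s t : Fin m × Fin r) :
    t ∈ fiberOf f s ↔ f t = f s := by simp [fiberOf]

lemma card_fiberOf (f : Fin m × Fin r → Fin n) (d : ℕ) (hf : ∀ v, cnt f v = d) (s : Fin m × Fin r) :
    (fiberOf f s).card = d := by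
  rw [← hf (f s)]
  rfl

lemma card_biUnion_le_of {α β : Type*} [DecidableEq β] {s : Finset α} {f : α → Finset β} {a b : ℕ}
    (hs : s.card ≤ a) (hf : ∀ x ∈ s, (f x).card ≤ b) : (s.biUnion f).card ≤ a * b :=
  (Finset.card_biUnion_le_card_mul _ _ _ hf).trans (Nat.mul_le_mul_right b hs)

/-- Undoing a switch: few pairs of a defect and a slot arise from a given word. -/
lemma card_reverse_le (g : Fin m × Fin r → Fin n) (d : ℕ) (hg : ∀ v, cnt g v = d) :
    (univ.filter (fun p : ((Fin m × Fin r) × (Fin m × Fin r) × (Fin m × Fin r) × (Fin m × Fin r)) × (Fin m × Fin r) =>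
      p.2.1 ≠ p.1.1.1 ∧ p.2.1 ≠ p.1.2.2.1.1 ∧ p.1 ∈ defects (g ∘ Equiv.swap p.1.1 p.2))).card
      ≤ 2 * (m * r) * r ^ 2 * d ^ 2 := by
  set A1 := (univ : Finset (Fin m × Fin r)).biUnion (fun q2 => (rowOf q2).biUnion fun q1 =>
    (fiberOf g q2).biUnion fun q4 => (rowOf q4).biUnion fun q3 =>
      (fiberOf g q3).image fun t => ((q1, q2, q3, q4), t)) with hA1
  set A2 := (univ : Finset (Fin m × Fin r)).biUnion (fun q1 => (rowOf q1).biUnion fun q2 =>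
    (rowOf q1).biUnion fun q3 =>
      (fiberOf g q3).image fun t => ((q1, q2, q3, q1), t)) with hA2
  have hN : (univ : Finset (Fin m × Fin r)).card = m * r := by simp
  have h1 : A1.card ≤ (m * r) * (r * (d * (r * d))) := by
    refine card_biUnion_le_of hN.le fun q2 _ => ?_
    refine card_biUnion_le_of (card_rowOf q2).le fun q1 _ => ?_
    refine card_biUnion_le_of (card_fiberOf g d hg q2).le fun q4 _ => ?_
    refine card_biUnion_le_of (card_rowOf q4).le fun q3 _ => ?_
    exact Finset.card_image_le.trans (card_fiberOf g d hg q3).le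
  have h2 : A2.card ≤ (m * r) * (r * (r * d)) := by
    refine card_biUnion_le_of hN.le fun q1 _ => ?_
    refine card_biUnion_le_of (card_rowOf q1).le fun q2 _ => ?_
    refine card_biUnion_le_of (card_rowOf q1).le fun q3 _ => ?_
    exact Finset.card_image_le.trans (card_fiberOf g d hg q3).le
  have hsub : (univ.filter (fun p : ((Fin m × Fin r) × (Fin m × Fin r) × (Fin m × Fin r) × (Fin m × Fin r)) × (Fin m × Fin r) =>
      p.2.1 ≠ p.1.1.1 ∧ p.2.1 ≠ p.1.2.2.1.1 ∧ p.1 ∈ defects (g ∘ Equiv.swap p.1.1 p.2))) ⊆ A1 ∪ A2 := by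
    rintro ⟨⟨q1, q2, q3, q4⟩, t⟩ hp
    simp only [mem_filter, mem_univ, true_and, mem_defects, Function.comp] at hp
    obtain ⟨ht1, ht3, h12, hr12, h34, hr34, h13, hv13, hv24⟩ := hp
    have e1 : Equiv.swap q1 t q1 = t := Equiv.swap_apply_left _ _
    have e2 : Equiv.swap q1 t q2 = q2 := Equiv.swap_apply_of_ne_of_ne h12.symm
      (by rintro rfl; exact ht1 hr12.symm)
    have e3 : Equiv.swap q1 t q3 = q3 := Equiv.swap_apply_of_ne_of_ne h13.symm
      (by rintro rfl; exact ht3 rfl)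
    rw [e1, e3] at hv13
    rw [e2] at hv24
    by_cases h41 : q4 = q1
    · subst h41
      refine mem_union_right _ ?_
      simp only [hA2, mem_biUnion, mem_univ, true_and, mem_image, mem_rowOf, mem_fiberOf]
      exact ⟨q4, q2, hr12.symm, q3, hr34, t, hv13, rfl⟩
    · have e4 : Equiv.swap q1 t q4 = q4 := Equiv.swap_apply_of_ne_of_ne h41
        (by rintro rfl; exact ht3 hr34.symm)
      rw [e4] at hv24
      refine mem_union_left _ ?_
      simp only [hA1, mem_biUnion, mem_univ, true_and, mem_image, mem_rowOf, mem_fiberOf]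
      exact ⟨q2, q1, hr12, q4, hv24.symm, q3, hr34, t, hv13, rfl⟩
  refine (Finset.card_le_card hsub).trans ((Finset.card_union_le _ _).trans ?_)
  have h3 : d ≤ d ^ 2 := Nat.le_self_pow two_ne_zero d
  nlinarith [Nat.zero_le (m * r * r ^ 2), Nat.mul_le_mul_left (m * r * r^2) h3]

/-- `t` is a good partner for switching with `s`: no row meets both the row of `s` and the row of `t`,
and the vertex at `t` occurs only once in the row of `t`. -/
def GoodPartner (f : Fin m × Fin r → Fin n) (s t : Fin m × Fin r) : Prop :=
  (∀ a b : Fin m × Fin r, a.1 = b.1 → ∀ u w : Fin m × Fin r, u.1 = s.1 → w.1 = t.1 →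
    f a = f u → f b = f w → False) ∧
  ∀ u : Fin m × Fin r, u.1 = t.1 → f u = f t → u = t

lemma GoodPartner.disj {f : Fin m × Fin r → Fin n} {s t : Fin m × Fin r} (h : GoodPartner f s t)
    {u w : Fin m × Fin r} (hu : u.1 = s.1) (hw : w.1 = t.1) : f u ≠ f w :=
  fun e => h.1 u u rfl u w hu hw rfl e

/-- Switching a defective slot with a good partner destroys the defect and creates none. -/
lemma card_defects_switch_lt (f : Fin m × Fin r → Fin n) (s t q2 q3 q4 : Fin m × Fin r)
    (hq : (s, q2, q3, q4) ∈ defects f) (h : GoodPartner f s t) :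
    (defects (f ∘ Equiv.swap s t)).card < (defects f).card := by
  rw [mem_defects] at hq
  have hst : s.1 ≠ t.1 := fun e => h.disj (u := s) (w := s) rfl e rfl
  have hsn : s ≠ t := fun e => hst (by rw [e])
  set f' := f ∘ Equiv.swap s t with hf'
  have fs : f' s = f t := by simp [hf']
  have ft : f' t = f s := by simp [hf']
  have fo : ∀ a, a ≠ s → a ≠ t → f' a = f a := fun a h1 h2 => by
    simp [hf', Equiv.swap_apply_of_ne_of_ne h1 h2]
  -- two slots carrying equal vertices after the switch, with a second such pair in the same rows
  have key : ∀ a b c e : Fin m × Fin r, a ≠ b → a.1 = b.1 → c ≠ e → c.1 = e.1 → a ≠ c → b ≠ e →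
      f' a = f' c → f' b = f' e → a ≠ s ∧ a ≠ t := by
    intro a b c e hab hrab hce hrce hac hbe h1 h2
    constructor
    · rintro rfl
      rw [fs] at h1
      by_cases hct : c = t
      · subst hct; rw [ft] at h1; exact h.disj rfl rfl h1.symm
      rw [fo c hac.symm hct] at h1
      have hbt : b ≠ t := by rintro rfl; exact hst hrab
      rw [fo b hab.symm hbt] at h2
      by_cases hes : e = a
      · subst hes; exact h.disj hrce rfl h1.symm
      by_cases het : e = t
      · subst het; exact hce (h.2 c hrce h1.symm)
      rw [fo e hes het] at h2
      exact h.1 e c hrce.symm b t hrab.symm rfl h2.symm h1.symm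
    · rintro rfl
      rw [ft] at h1
      by_cases hcs : c = s
      · subst hcs; rw [fs] at h1; exact h.disj rfl rfl h1
      rw [fo c hcs hac.symm] at h1
      have hbs : b ≠ s := by rintro rfl; exact hst hrab.symm
      rw [fo b hbs hab.symm] at h2
      by_cases het : e = a
      · subst het; exact h.disj rfl hrce h1
      by_cases hes : e = s
      · subst hes
        rw [fs] at h2
        exact hab (h.2 b hrab.symm h2).symm
      rw [fo e hes het] at h2
      exact h.1 c e hrce s b rfl hrab.symm h1.symm h2.symm
  have key2 : ∀ a c : Fin m × Fin r, a ≠ c → a.1 = c.1 → f' a = f' c → a ≠ s ∧ a ≠ t := by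
    intro a c hac hrac h1
    constructor
    · rintro rfl
      have hct : c ≠ t := by rintro rfl; exact hst hrac
      rw [fs, fo c hac.symm hct] at h1
      exact h.disj hrac.symm rfl h1.symm
    · rintro rfl
      have hcs : c ≠ s := by rintro rfl; exact hst hrac.symm
      rw [ft, fo c hcs hac.symm] at h1
      exact h.disj rfl hrac.symm h1
  refine Finset.card_lt_card (Finset.ssubset_iff_subset_ne.2 ⟨?_, ?_⟩)
  · rintro ⟨a, b, c, e⟩ hd
    rw [mem_defects] at hd ⊢
    obtain ⟨hab, hrab, hce, hrce, hac, h1, h2⟩ := hd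
    refine ⟨hab, hrab, hce, hrce, hac, ?_⟩
    by_cases hbe : b = e
    · subst hbe
      have hr : a.1 = c.1 := hrab.trans hrce.symm
      have k1 := key2 a c hac hr h1
      have k2 := key2 c a hac.symm hr.symm h1.symm
      rw [fo a k1.1 k1.2, fo c k2.1 k2.2] at h1
      exact ⟨h1, rfl⟩
    · have k1 := key a b c e hab hrab hce hrce hac hbe h1 h2
      have k2 := key c e a b hce hrce hab hrab hac.symm (Ne.symm hbe) h1.symm h2.symm
      have k3 := key b a e c hab.symm hrab.symm hce.symm hrce.symm hbe hac h2 h1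
      have k4 := key e c b a hce.symm hrce.symm hab.symm hrab.symm (Ne.symm hbe) hac.symm h2.symm h1.symm
      rw [fo a k1.1 k1.2, fo c k2.1 k2.2] at h1
      rw [fo b k3.1 k3.2, fo e k4.1 k4.2] at h2
      exact ⟨h1, h2⟩
  · intro heq
    have hmem : (s, q2, q3, q4) ∈ defects f' := by
      rw [heq, mem_defects]; exact hq
    rw [mem_defects] at hmem
    obtain ⟨-, -, -, -, h13, hv, -⟩ := hq
    obtain ⟨-, -, -, -, -, hv', -⟩ := hmem
    have h3t : q3.1 ≠ t.1 := fun e => h.disj rfl e hv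
    rw [fs, fo q3 h13.symm (fun e => h3t (by rw [e]))] at hv'
    exact h.disj rfl rfl (hv.trans hv'.symm)

/-- A slot violating the first condition on good partners is reached from `s` by a path of bounded length,
and one violating the second condition is the first slot of a defect. -/
lemma card_bad_partner_le (f : Fin m × Fin r → Fin n) (d : ℕ) (hf : ∀ v, cnt f v = d)
    (s : Fin m × Fin r) :
    (univ.filter (fun t => ¬ GoodPartner f s t)).card ≤ r ^ 3 * d ^ 2 + (defects f).card * r := by
  set A1 := (rowOf s).biUnion fun u => (fiberOf f u).biUnion fun a => (rowOf a).biUnion fun b =>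
    (fiberOf f b).biUnion fun w => rowOf w with hA1
  set A2 := (defects f).biUnion fun q => rowOf q.1 with hA2
  have h1 : A1.card ≤ r * (d * (r * (d * r))) := by
    refine card_biUnion_le_of (card_rowOf s).le fun u _ => ?_
    refine card_biUnion_le_of (card_fiberOf f d hf u).le fun a _ => ?_
    refine card_biUnion_le_of (card_rowOf a).le fun b _ => ?_
    refine card_biUnion_le_of (card_fiberOf f d hf b).le fun w _ => ?_
    exact (card_rowOf w).le
  have h2 : A2.card ≤ (defects f).card * r :=
    Finset.card_biUnion_le_card_mul _ _ _ fun q _ => (card_rowOf q.1).le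
  have hsub : (univ.filter (fun t => ¬ GoodPartner f s t)) ⊆ A1 ∪ A2 := by
    intro t ht
    simp only [mem_filter, mem_univ, true_and] at ht
    by_contra hcon
    apply ht
    simp only [mem_union, not_or, hA1, hA2, mem_biUnion, mem_rowOf, mem_fiberOf, not_exists, not_and] at hcon
    constructor
    · intro a b hab u w hu hw h1 h2
      exact hcon.1 u hu a h1 b hab.symm w h2.symm hw.symm
    · intro u hu huv
      by_contra hne
      refine hcon.2 (t, u, u, t) ?_ rfl
      rw [mem_defects]
      exact ⟨Ne.symm hne, hu.symm, hne, hu, Ne.symm hne, huv.symm, huv⟩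
  refine (Finset.card_le_card hsub).trans ((Finset.card_union_le _ _).trans ?_)
  refine Nat.add_le_add (h1.trans (le_of_eq (by ring))) h2

/-- Quadruples of slots, the type of defects. -/
abbrev Slot4 (m r : ℕ) := (Fin m × Fin r) × (Fin m × Fin r) × (Fin m × Fin r) × (Fin m × Fin r)

/-- Double counting of switches from a set `B` of permutations into a set `B'`. -/
lemma switch_double_count (f : Fin m × Fin r → Fin n) (d : ℕ) (hf : ∀ v, cnt f v = d)
    (B B' : Finset (Equiv.Perm (Fin m × Fin r))) (ok : Equiv.Perm (Fin m × Fin r) → Slot4 m r → Fin m × Fin r → Prop)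
    (hok : ∀ σ ∈ B, ∀ q ∈ defects (f ∘ σ), ∀ t, ok σ q t →
      t.1 ≠ q.1.1 ∧ t.1 ≠ q.2.2.1.1 ∧ σ * Equiv.swap q.1 t ∈ B')
    (hcount : ∀ σ ∈ B, ∀ q ∈ defects (f ∘ σ), m * r ≤ 2 * (univ.filter (fun t => ok σ q t)).card) :
    (m * r) * ∑ σ ∈ B, (defects (f ∘ σ)).card ≤ 2 * (B'.card * (2 * (m * r) * r ^ 2 * d ^ 2)) := by
  set X : Finset (Σ _ : Equiv.Perm (Fin m × Fin r), Σ _ : Slot4 m r, Fin m × Fin r) :=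
    B.sigma fun σ => (defects (f ∘ σ)).sigma fun q => univ.filter (fun t => ok σ q t)
  set Y : Finset (Σ _ : Equiv.Perm (Fin m × Fin r), Slot4 m r × (Fin m × Fin r)) :=
    B'.sigma fun σ => univ.filter (fun p : Slot4 m r × (Fin m × Fin r) =>
      p.2.1 ≠ p.1.1.1 ∧ p.2.1 ≠ p.1.2.2.1.1 ∧ p.1 ∈ defects ((f ∘ σ) ∘ Equiv.swap p.1.1 p.2))
  have hX : (m * r) * ∑ σ ∈ B, (defects (f ∘ σ)).card ≤ 2 * X.card := by
    rw [Finset.card_sigma, Finset.mul_sum, Finset.mul_sum]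
    refine Finset.sum_le_sum fun σ hσ => ?_
    rw [Finset.card_sigma, Finset.mul_sum, mul_comm, ← smul_eq_mul, ← Finset.sum_const]
    exact Finset.sum_le_sum fun q hq => hcount σ hσ q hq
  have hY : Y.card ≤ B'.card * (2 * (m * r) * r ^ 2 * d ^ 2) := by
    rw [Finset.card_sigma, ← smul_eq_mul, ← Finset.sum_const]
    refine Finset.sum_le_sum fun σ hσ => ?_
    refine card_reverse_le (f ∘ σ) d ?_
    rw [cnt_comp_perm]; exact hf
  have hXY : X.card ≤ Y.card := by
    refine Finset.card_le_card_of_injOn (fun x => ⟨x.1 * Equiv.swap x.2.1.1 x.2.2, x.2.1, x.2.2⟩) ?_ ?_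
    · rintro ⟨σ, q, t⟩ hx
      simp only [X, coe_sigma, Set.mem_sigma_iff, mem_coe, mem_filter, mem_univ, true_and] at hx
      obtain ⟨hσ, hq, ht⟩ := hx
      obtain ⟨h1, h2, h3⟩ := hok σ hσ q hq t ht
      simp only [Y, coe_sigma, Set.mem_sigma_iff, mem_coe, mem_filter, mem_univ, true_and]
      refine ⟨h3, h1, h2, ?_⟩
      have : (f ∘ ⇑(σ * Equiv.swap q.1 t)) ∘ ⇑(Equiv.swap q.1 t) = f ∘ σ := by
        funext x; simp
      rw [this]; exact hq
    · rintro ⟨σ, q, t⟩ _ ⟨σ', q', t'⟩ _ h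
      simp only [Sigma.mk.injEq, heq_eq_eq, Prod.mk.injEq] at h
      obtain ⟨h1, h2, h3⟩ := h
      subst h2 h3
      simp at h1
      subst h1
      rfl
  omega

/-- The proportion of defect-free permutations is bounded below: the mean number of defects is bounded,
so half of the permutations have a bounded number of defects, and each of these can be removed by a
switch at the cost of a constant factor. -/
lemma permProb_defect_free (r d : ℕ) (hr : 1 ≤ r) (hd : 1 ≤ d) :
    ∃ c : ℝ, 0 < c ∧ ∃ N₀ : ℕ, ∀ m n : ℕ, N₀ ≤ m * r → ∀ f : Fin m × Fin r → Fin n,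
      (∀ v, cnt f v = d) →
      c ≤ permProb (fun σ : Equiv.Perm (Fin m × Fin r) => defects (f ∘ σ) = ∅) := by
  set C := 4 * r ^ 2 * d ^ 2 with hC
  set J := 2 * C with hJ
  refine ⟨1 / (2 * (1 + C) ^ J), by positivity, 2 * (r ^ 3 * d ^ 2 + J * r) + 4 * r, ?_⟩
  intro m n hN f hf
  have hmr : 0 < m * r := by omega
  set D : Equiv.Perm (Fin m × Fin r) → ℕ := fun σ => (defects (f ∘ σ)).card with hD
  set F := Fintype.card (Equiv.Perm (Fin m × Fin r)) with hF
  have hFpos : 0 < F := Fintype.card_pos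
  have hmean : ∑ σ, D σ ≤ C * F := by
    have := switch_double_count f d hf univ univ (fun _ q t => t ∉ rowOf q.1 ∪ rowOf q.2.2.1) ?_ ?_
    · rw [Finset.card_univ, ← hF] at this
      have h2 : (m * r) * ∑ σ, D σ ≤ (m * r) * (C * F) := by
        refine this.trans (le_of_eq ?_); rw [hC]; ring
      exact Nat.le_of_mul_le_mul_left h2 hmr
    · intro σ _ q _ t ht
      simp only [mem_union, mem_rowOf, not_or] at ht
      exact ⟨ht.1, ht.2, mem_univ _⟩
    · intro σ _ q _
      have e : (univ.filter (fun t => t ∉ rowOf q.1 ∪ rowOf q.2.2.1)) = (rowOf q.1 ∪ rowOf q.2.2.1)ᶜ := by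
        ext t; simp
      have h1 : (rowOf q.1 ∪ rowOf q.2.2.1).card ≤ r + r :=
        (Finset.card_union_le _ _).trans (by rw [card_rowOf, card_rowOf])
      have e' := congrArg Finset.card e
      rw [Finset.card_compl] at e'
      have h2 : Fintype.card (Fin m × Fin r) = m * r := by simp
      rw [h2] at e'
      refine le_trans (b := 2 * (m * r - (rowOf q.1 ∪ rowOf q.2.2.1).card)) (by omega)
        (Nat.mul_le_mul_left 2 (e'.symm.le.trans (le_of_eq ?_)))
      congr!
  have hstep : ∀ j, 1 ≤ j → j ≤ J → (univ.filter (fun σ => D σ = j)).card ≤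
      C * (univ.filter (fun σ => D σ < j)).card := by
    intro j hj hjJ
    have := switch_double_count f d hf (univ.filter (fun σ => D σ = j)) (univ.filter (fun σ => D σ < j))
      (fun σ q t => GoodPartner (f ∘ σ) q.1 t) ?_ ?_
    · rw [Finset.sum_congr rfl (g := fun _ => j) (fun σ hσ => by simpa using hσ), Finset.sum_const, smul_eq_mul] at this
      have h2 : (m * r) * ((univ.filter (fun σ => D σ = j)).card * j) ≤
          (m * r) * (C * (univ.filter (fun σ => D σ < j)).card) := by
        refine this.trans (le_of_eq ?_); rw [hC]; ring
      have h3 := Nat.le_of_mul_le_mul_left h2 hmr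
      exact (Nat.le_mul_of_pos_right _ hj).trans h3
    · rintro σ hσ ⟨q1, q2, q3, q4⟩ hq t ht
      simp only [mem_filter, mem_univ, true_and] at hσ ⊢
      have hq' := (mem_defects _ _ _ _ _).1 hq
      refine ⟨?_, ?_, ?_⟩
      · intro e; exact ht.disj (u := q1) (w := q1) rfl e.symm rfl
      · intro e; exact ht.disj (u := q1) (w := q3) rfl e.symm hq'.2.2.2.2.2.1
      · have := card_defects_switch_lt (f ∘ σ) q1 t q2 q3 q4 hq ht
        rw [← hσ]
        exact this
    · rintro σ hσ ⟨q1, q2, q3, q4⟩ hq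
      simp only [mem_filter, mem_univ, true_and] at hσ
      have h1 := card_bad_partner_le (f ∘ σ) d (by rw [cnt_comp_perm]; exact hf) q1
      have h2 := Finset.card_filter_add_card_filter_not (s := (univ : Finset (Fin m × Fin r))) (fun t => GoodPartner (f ∘ σ) q1 t)
      have h3 : (univ : Finset (Fin m × Fin r)).card = m * r := by simp
      have h4 : (defects (f ∘ σ)).card * r ≤ J * r := Nat.mul_le_mul_right _ (by
        have : (defects (f ∘ σ)).card = j := hσ
        omega)
      simp only at h1 h2 ⊢
      omega
  have hgrow : ∀ j, j ≤ J → (univ.filter (fun σ => D σ < j + 1)).card ≤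
      (1 + C) ^ j * (univ.filter (fun σ => D σ = 0)).card := by
    intro j
    induction j with
    | zero => intro _; simp
    | succ j ih =>
      intro hj
      have h1 := ih (by omega)
      have h2 := hstep (j + 1) (by omega) hj
      have h3 : (univ.filter (fun σ => D σ < j + 1 + 1)) =
          (univ.filter (fun σ => D σ < j + 1)) ∪ (univ.filter (fun σ => D σ = j + 1)) := by
        ext σ; simp; omega
      rw [h3]
      refine (Finset.card_union_le _ _).trans ?_
      calc _ ≤ (1 + C) * (univ.filter (fun σ => D σ < j + 1)).card := by linarith
        _ ≤ (1 + C) * ((1 + C) ^ j * (univ.filter (fun σ => D σ = 0)).card) := by gcongr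
        _ = _ := by ring
  have hCpos : 0 < C := by positivity
  have hmarkov : 2 * (univ.filter (fun σ => ¬ D σ < J + 1)).card ≤ F := by
    have h1 : (univ.filter (fun σ => ¬ D σ < J + 1)).card * J ≤ C * F := by
      refine le_trans ?_ hmean
      rw [← smul_eq_mul, ← Finset.sum_const]
      refine (Finset.sum_le_sum (g := D) fun σ hσ => ?_).trans (Finset.sum_le_sum_of_subset (Finset.subset_univ _))
      simp at hσ; omega
    have h2 : C * (2 * (univ.filter (fun σ => ¬ D σ < J + 1)).card) ≤ C * F := by
      rw [hJ] at h1 ⊢; linarith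
    exact Nat.le_of_mul_le_mul_left h2 hCpos
  have hsum := Finset.card_filter_add_card_filter_not (s := (univ : Finset (Equiv.Perm (Fin m × Fin r)))) (fun σ => D σ < J + 1)
  rw [Finset.card_univ, ← hF] at hsum
  have hfin : F ≤ 2 * ((1 + C) ^ J * (univ.filter (fun σ => D σ = 0)).card) := by
    have := hgrow J le_rfl
    omega
  unfold permProb uniformProb
  rw [Finset.card_univ, ← hF, div_le_div_iff₀ (by positivity) (by exact_mod_cast hFpos), one_mul]
  have e : (univ.filter (fun σ : Equiv.Perm (Fin m × Fin r) => defects (f ∘ σ) = ∅)) = univ.filter (fun σ => D σ = 0) := by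
    ext σ; simp [hD]
  have hle : (F : ℝ) ≤ ((2 * ((1 + C) ^ J * (univ.filter (fun σ => D σ = 0)).card) : ℕ) : ℝ) := by
    exact_mod_cast hfin
  rw [← e] at hle
  push_cast at hle
  refine hle.trans (le_of_eq ?_)
  rw [mul_comm _ (2 * (1 + (C : ℝ)) ^ J), mul_assoc]
  congr!

end Switching

/-! ### Words read in rows -/

section Rows

variable {n m r : ℕ} {K : Type*} [Fintype K] [DecidableEq K]

/-- For a product measure, the rows of a word are independent. -/
lemma sum_rows_prod (good : Fin m → (Fin r → K) → Prop) (a : K → ℝ) :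
    ∑ w ∈ univ.filter (fun w : Fin m × Fin r → K => ∀ e, good e (fun i => w (e, i))), ∏ s, a (w s)
      = ∏ e, ∑ x ∈ univ.filter (good e), ∏ i, a (x i) := by
  rw [Finset.prod_univ_sum]
  refine Finset.sum_bij' (fun w _ e i => w (e, i)) (fun x _ s => x s.1 s.2) ?_ ?_ ?_ ?_ ?_
  · intro w hw
    simpa using hw
  · intro x hx
    simpa using hx
  · intro w _; rfl
  · intro x _; rfl
  · intro w _
    exact Fintype.prod_prod_type _

/-- The probability of a row-wise event for a random rearrangement of `w₀` is at most a polynomial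
factor times the probability of that event for a word with independent letters. -/
lemma permProb_le_rows (w₀ : Fin m × Fin r → K) (good : Fin m → (Fin r → K) → Prop) :
    permProb (fun σ => ∀ e, good e (fun i => (w₀ ∘ σ) (e, i))) ≤
      loss (Fintype.card (Fin m × Fin r)) (Fintype.card K) *
        ∏ e, ∑ x ∈ univ.filter (good e), ∏ i, freq w₀ (x i) := by
  refine (permProb_le_iid w₀ (fun w => ∀ e, good e (fun i => w (e, i)))).trans (le_of_eq ?_)
  rw [← sum_rows_prod]
  congr!

/-- A word of length `r` which is not constant. -/
def NonMono (x : Fin r → K) : Prop := ∃ i j, x i ≠ x j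

/-- No row of the word `w` is constant. -/
def RowProper (w : Fin m × Fin r → K) : Prop := ∀ e, NonMono (fun i => w (e, i))

lemma sum_all_prod (a : K → ℝ) : ∑ x : Fin r → K, ∏ i, a (x i) = (∑ κ, a κ) ^ r := by
  have := Finset.prod_univ_sum (fun _ : Fin r => (univ : Finset K)) (fun _ κ => a κ)
  simp only [Finset.prod_const, card_univ, Fintype.card_fin, Fintype.piFinset_univ] at this
  exact this.symm

lemma sum_mono_prod (hr : 1 ≤ r) (a : K → ℝ) :
    ∑ x ∈ univ.filter (fun x : Fin r → K => ¬ NonMono x), ∏ i, a (x i) = ∑ κ, a κ ^ r := by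
  symm
  refine Finset.sum_bij (fun κ _ => fun _ => κ) ?_ ?_ ?_ ?_
  · intro κ _; simp [NonMono]
  · intro κ _ κ' _ h
    exact congrFun h ⟨0, hr⟩
  · intro x hx
    simp only [NonMono, mem_filter, mem_univ, true_and, not_exists, not_not] at hx
    exact ⟨x ⟨0, hr⟩, mem_univ _, funext fun i => hx _ _⟩
  · intro κ _; simp

lemma sum_nonMono_prod (hr : 1 ≤ r) (a : K → ℝ) :
    ∑ x ∈ univ.filter (fun x : Fin r → K => NonMono x), ∏ i, a (x i) = (∑ κ, a κ) ^ r - ∑ κ, a κ ^ r := by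
  rw [← sum_all_prod, ← sum_mono_prod hr, ← Finset.sum_filter_add_sum_filter_not univ (fun x : Fin r → K => NonMono x)]
  ring

/-- The probability that a uniformly random word of length `r` over `k` colors is constant. -/
noncomputable def monoProb (k r : ℕ) : ℝ := ((k : ℝ) ^ (r - 1))⁻¹

lemma monoProb_nonneg (k r : ℕ) : 0 ≤ monoProb k r := by unfold monoProb; positivity

lemma monoProb_le_one (k r : ℕ) (hk : 1 ≤ k) : monoProb k r ≤ 1 := by
  unfold monoProb
  exact inv_le_one_of_one_le₀ (one_le_pow₀ (by exact_mod_cast hk))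

/-- Power mean inequality. -/
lemma monoProb_le_sum_pow {k : ℕ} (hk : 1 ≤ k) (hr : 1 ≤ r) (a : Fin k → ℝ) (ha : ∀ κ, 0 ≤ a κ)
    (hs : ∑ κ, a κ = 1) : monoProb k r ≤ ∑ κ, a κ ^ r := by
  have hk0 : (0 : ℝ) < k := by exact_mod_cast hk
  have h := Real.pow_arith_mean_le_arith_mean_pow univ (fun _ : Fin k => (k : ℝ)⁻¹) a
    (fun _ _ => by positivity) (by simp [hk0.ne']) (fun κ _ => ha κ) r
  rw [← Finset.mul_sum, ← Finset.mul_sum, hs, mul_one] at h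
  unfold monoProb
  obtain ⟨s, rfl⟩ : ∃ s, r = s + 1 := ⟨r - 1, by omega⟩
  rw [pow_succ', ] at h
  rw [Nat.add_sub_cancel, ← inv_pow]
  exact le_of_mul_le_mul_left h (by positivity)

lemma cnt_comp_word {d : ℕ} {S : Type*} [Fintype S] [DecidableEq S] (f : S → Fin n)
    (hf : ∀ v, cnt f v = d) (c : Fin n → K) (κ : K) : cnt (c ∘ f) κ = d * cnt c κ := by
  unfold cnt
  rw [Finset.card_eq_sum_card_fiberwise (f := f) (t := univ.filter (fun v => c v = κ))]
  · rw [Finset.sum_const_nat (m := d), mul_comm]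
    intro v hv
    rw [← hf v]
    unfold cnt
    congr 1
    ext s
    simp only [mem_filter, mem_univ, true_and, Function.comp] at hv ⊢
    constructor
    · exact fun h => h.2
    · rintro rfl; exact ⟨hv, rfl⟩
  · intro s hs
    simpa using hs

lemma freq_comp_word {d : ℕ} (hd : 1 ≤ d) {S : Type*} [Fintype S] [DecidableEq S] (f : S → Fin n)
    (hf : ∀ v, cnt f v = d) (hS : Fintype.card S = d * n) (c : Fin n → K) (κ : K) :
    freq (c ∘ f) κ = freq c κ := by
  unfold freq
  rw [cnt_comp_word f hf, hS, Fintype.card_fin]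
  push_cast
  rw [mul_div_mul_left]
  positivity

lemma permProb_mono {S : Type*} [Fintype S] [DecidableEq S] {P Q : Equiv.Perm S → Prop}
    (h : ∀ σ, P σ → Q σ) : permProb P ≤ permProb Q := by
  unfold permProb uniformProb
  gcongr
  exact h _

lemma permProb_nonneg {S : Type*} [Fintype S] [DecidableEq S] (P : Equiv.Perm S → Prop) :
    0 ≤ permProb P := by
  unfold permProb uniformProb
  positivity

lemma permProb_exists_le {S ι : Type*} [Fintype S] [DecidableEq S] (I : Finset ι)
    (P : ι → Equiv.Perm S → Prop) :
    permProb (fun σ => ∃ i ∈ I, P i σ) ≤ ∑ i ∈ I, permProb (P i) := by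
  unfold permProb uniformProb
  rw [← Finset.sum_div]
  gcongr
  rw [← Nat.cast_sum, Nat.cast_le]
  refine le_trans (Finset.card_le_card ?_) (Finset.card_biUnion_le (s := I)
    (t := fun i => univ.filter (fun σ => P i σ)))
  intro σ hσ
  simpa using hσ

lemma permProb_or_le {S : Type*} [Fintype S] [DecidableEq S] (P Q : Equiv.Perm S → Prop) :
    permProb (fun σ => P σ ∨ Q σ) ≤ permProb P + permProb Q := by
  unfold permProb uniformProb
  rw [← add_div]
  gcongr
  rw [← Nat.cast_add, Nat.cast_le]
  refine le_trans (Finset.card_le_card ?_) (Finset.card_union_le _ _)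
  intro σ hσ
  simpa using hσ

/-- A property of words `Fin m × Fin r → Fin n` whose probability for a uniformly random `d`-regular
word tends to zero as `n → ∞`. -/
def Rare (r d : ℕ) (Bad : (m n : ℕ) → (Fin m × Fin r → Fin n) → Prop) : Prop :=
  ∀ δ : ℝ, 0 < δ → ∃ n₀ : ℕ, ∀ n, n₀ ≤ n → ∀ m, m * r = d * n → ∀ f : Fin m × Fin r → Fin n,
    (∀ v, cnt f v = d) → permProb (fun σ => Bad m n (f ∘ σ)) ≤ δ

/-- Polynomial growth. -/
def PolyBound (g : ℕ → ℝ) : Prop := ∃ A : ℝ, 0 < A ∧ ∃ j : ℕ, ∀ n : ℕ, 1 ≤ n → g n ≤ A * (n : ℝ) ^ j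

lemma PolyBound.mul {g h : ℕ → ℝ} (hg : PolyBound g) (hh : PolyBound h) (h0 : ∀ n, 0 ≤ h n) :
    PolyBound (fun n => g n * h n) := by
  obtain ⟨A, hA, i, h1⟩ := hg
  obtain ⟨B, hB, j, h2⟩ := hh
  refine ⟨A * B, by positivity, i + j, fun n hn => ?_⟩
  calc g n * h n ≤ (A * (n : ℝ) ^ i) * (B * (n : ℝ) ^ j) :=
        mul_le_mul (h1 n hn) (h2 n hn) (h0 n) (by positivity)
    _ = _ := by ring

lemma PolyBound.const (c : ℝ) : PolyBound (fun _ => c) :=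
  ⟨|c| + 1, by positivity, 0, fun n _ => by simp; linarith [le_abs_self c]⟩

lemma PolyBound.loss (d k : ℕ) : PolyBound (fun n => loss (d * n) k) := by
  refine ⟨(exp 1 * (d + 1)) ^ k, by positivity, k, fun n hn => ?_⟩
  unfold _root_.loss
  rw [← mul_pow]
  have h1 : (1 : ℝ) ≤ n := by exact_mod_cast hn
  refine pow_le_pow_left₀ (by positivity) ?_ k
  push_cast
  rw [mul_assoc]
  refine mul_le_mul_of_nonneg_left ?_ (exp_pos 1).le
  linarith

/-- Exponential decay beats polynomial growth. -/
lemma PolyBound.mul_exp_small {g : ℕ → ℝ} (hg : PolyBound g) {β : ℝ} (hβ : 0 < β) {δ : ℝ} (hδ : 0 < δ) :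
    ∃ n₀ : ℕ, ∀ n : ℕ, n₀ ≤ n → g n * exp (-(β * n)) ≤ δ := by
  obtain ⟨A, hA, j, h⟩ := hg
  have h1 := (tendsto_pow_mul_exp_neg_atTop_nhds_zero j).comp
    (Tendsto.const_mul_atTop hβ tendsto_natCast_atTop_atTop)
  have h2 := h1.const_mul (A / β ^ j)
  rw [mul_zero] at h2
  have h3 := h2.eventually (eventually_le_nhds hδ)
  rw [eventually_atTop] at h3
  obtain ⟨n₀, hn₀⟩ := h3
  refine ⟨max n₀ 1, fun n hn => ?_⟩
  have := hn₀ n (le_trans (le_max_left _ _) hn)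
  refine le_trans ?_ this
  simp only [Function.comp]
  calc g n * exp (-(β * n)) ≤ (A * (n : ℝ) ^ j) * exp (-(β * n)) := by
        gcongr; exact h n (le_trans (le_max_right _ _) hn)
    _ = _ := by rw [mul_pow]; field_simp

/-- First moment bound: too few colors do not suffice. -/
lemma rare_colorable (r d k : ℕ) (hr : 1 ≤ r) (hd : 1 ≤ d) (hk : 1 ≤ k)
    (h : Real.log k < d / r * monoProb k r) :
    Rare r d (fun _ n g => ∃ c : Fin n → Fin k, RowProper (c ∘ g)) := by
  intro δ hδ
  obtain ⟨n₀, hn₀⟩ := (PolyBound.loss d k).mul_exp_small (β := d / r * monoProb k r - Real.log k)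
    (by linarith) hδ
  refine ⟨max n₀ 1, fun n hn m hmn f hf => ?_⟩
  have hn1 : 1 ≤ n := le_trans (le_max_right _ _) hn
  refine le_trans ?_ (hn₀ n (le_trans (le_max_left _ _) hn))
  have hS : Fintype.card (Fin m × Fin r) = d * n := by simpa using hmn
  have hq0 := monoProb_nonneg k r
  have hq1 := monoProb_le_one k r hk
  have hkpos : (0 : ℝ) < k := by exact_mod_cast hk
  have hNS : Nonempty (Fin m × Fin r) := by
    rw [← Fintype.card_pos_iff, hS]; positivity
  have step : ∀ c : Fin n → Fin k, permProb (fun σ => RowProper ((c ∘ f) ∘ σ)) ≤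
      loss (d * n) k * (1 - monoProb k r) ^ m := by
    intro c
    refine (permProb_le_rows (c ∘ f) (fun _ => NonMono)).trans ?_
    rw [hS, Fintype.card_fin]
    refine mul_le_mul_of_nonneg_left ?_ (loss_pos _ _).le
    rw [Finset.prod_const, card_univ, Fintype.card_fin, sum_nonMono_prod hr, sum_freq, one_pow]
    have := monoProb_le_sum_pow hk hr (freq (c ∘ f)) (freq_nonneg _) (sum_freq _)
    refine pow_le_pow_left₀ ?_ (by linarith) m
    rw [← one_pow r, ← sum_freq (c ∘ f), ← sum_nonMono_prod hr]
    exact Finset.sum_nonneg fun x _ => Finset.prod_nonneg fun i _ => freq_nonneg _ _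
  have h1 := permProb_exists_le (univ : Finset (Fin n → Fin k)) (fun c (σ : Equiv.Perm (Fin m × Fin r)) => RowProper ((c ∘ f) ∘ σ))
  have h2 : ∑ c : Fin n → Fin k, permProb (fun σ => RowProper ((c ∘ f) ∘ σ)) ≤
      (k : ℝ) ^ n * (loss (d * n) k * (1 - monoProb k r) ^ m) := by
    refine (Finset.sum_le_card_nsmul _ _ _ fun c _ => step c).trans (le_of_eq ?_)
    simp [nsmul_eq_mul]
  refine le_trans (permProb_mono ?_) (h1.trans (h2.trans ?_))
  · rintro σ ⟨c, hc⟩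
    exact ⟨c, mem_univ _, hc⟩
  · have hm : (m : ℝ) = d / r * n := by
      have : (m : ℝ) * r = d * n := by exact_mod_cast hmn
      have : (0 : ℝ) < r := by exact_mod_cast hr
      field_simp; linarith
    have h3 : (1 - monoProb k r) ^ m ≤ exp (-(d / r * monoProb k r * n)) := by
      calc (1 - monoProb k r) ^ m ≤ (exp (-monoProb k r)) ^ m := by
            refine pow_le_pow_left₀ (by linarith) ?_ m
            linarith [add_one_le_exp (-monoProb k r)]
        _ = _ := by rw [← exp_nat_mul, hm]; ring_nf
    have h4 : (k : ℝ) ^ n = exp (Real.log k * n) := by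
      rw [mul_comm, exp_nat_mul, exp_log hkpos]
    calc (k : ℝ) ^ n * (loss (d * n) k * (1 - monoProb k r) ^ m)
        ≤ exp (Real.log k * n) * (loss (d * n) k * exp (-(d / r * monoProb k r * n))) := by
          rw [h4]
          have := (loss_pos (d * n) k).le
          gcongr
      _ = loss (d * n) k * (exp (Real.log k * n) * exp (-(d / r * monoProb k r * n))) := by ring
      _ = _ := by rw [← exp_add]; congr 2; ring

end Rows

/-! ### Repairing a coloring with few monochromatic edges -/

section Repair

variable {n m r : ℕ}

/-- The rows of the word `g` all of whose entries lie in `W`. -/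
noncomputable def rowsInside (g : Fin m × Fin r → Fin n) (W : Finset (Fin n)) : Finset (Fin m) :=
  univ.filter (fun e => ∀ i, g (e, i) ∈ W)

/-- The rows of `w` which are constant. -/
noncomputable def monoRows {K : Type*} (w : Fin m × Fin r → K) : Finset (Fin m) :=
  univ.filter (fun e => ¬ NonMono (fun i => w (e, i)))

/-- A locally sparse hypergraph is degenerate, hence can be colored greedily. -/
lemma exists_greedy_coloring (hr : 1 ≤ r) (g : Fin m × Fin r → Fin n)
    (hg : ∀ e, NonMono (fun i => g (e, i))) (W : Finset (Fin n)) :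
    (∀ W' ⊆ W, W'.Nonempty → (rowsInside g W').card < 5 * W'.card) →
    ∃ c : Fin n → Fin (5 * r), ∀ e ∈ rowsInside g W, NonMono (fun i => c (g (e, i))) := by
  induction W using Finset.strongInduction with
  | H W ih =>
  intro hsp
  have hpos : 0 < 5 * r := by omega
  rcases W.eq_empty_or_nonempty with rfl | hne
  · refine ⟨fun _ => ⟨0, hpos⟩, fun e he => ?_⟩
    simp only [rowsInside, mem_filter, mem_univ, true_and] at he
    exact absurd (he ⟨0, hr⟩) (Finset.notMem_empty _)
  -- a vertex lying in fewer than `5 * r` of the edges inside `W`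
  obtain ⟨v, hvW, hv⟩ : ∃ v ∈ W, ((rowsInside g W).filter (fun e => ∃ i, g (e, i) = v)).card < 5 * r := by
    refine Finset.exists_lt_of_sum_lt (f := fun v => ((rowsInside g W).filter (fun e => ∃ i, g (e, i) = v)).card)
      (g := fun _ => 5 * r) ?_
    have h1 := Finset.sum_card_bipartiteAbove_eq_sum_card_bipartiteBelow (s := W) (t := rowsInside g W)
      (fun v e => ∃ i, g (e, i) = v)
    unfold Finset.bipartiteAbove Finset.bipartiteBelow at h1
    rw [h1]
    have h2 : ∀ e ∈ rowsInside g W, (W.filter (fun v => ∃ i, g (e, i) = v)).card ≤ r := by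
      intro e _
      calc (W.filter (fun v => ∃ i, g (e, i) = v)).card ≤ (univ.image (fun i => g (e, i))).card := by
            refine Finset.card_le_card fun v hv => ?_
            simpa using (mem_filter.1 hv).2
        _ ≤ r := Finset.card_image_le.trans (by simp)
    refine lt_of_le_of_lt (Finset.sum_le_card_nsmul _ _ _ h2) ?_
    rw [Finset.sum_const, smul_eq_mul, smul_eq_mul]
    have := hsp W subset_rfl hne
    nlinarith
  obtain ⟨c, hc⟩ := ih (W.erase v) (Finset.erase_ssubset hvW)
    (fun W' hW' => hsp W' (hW'.trans (Finset.erase_subset _ _)))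
  have hother : ∀ e, ∃ j, g (e, j) ≠ v := by
    intro e
    obtain ⟨i, j, hij⟩ := hg e
    by_cases h : g (e, i) = v
    · exact ⟨j, fun h' => hij (h.trans h'.symm)⟩
    · exact ⟨i, h⟩
  choose j hj using hother
  set forb := ((rowsInside g W).filter (fun e => ∃ i, g (e, i) = v)).image (fun e => c (g (e, j e))) with hforb
  obtain ⟨κ, hκ⟩ : ∃ κ, κ ∉ forb := by
    by_contra hcon
    push Not at hcon
    have h1 : forb = univ := Finset.eq_univ_of_forall hcon
    have h2 : forb.card ≤ _ := Finset.card_image_le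
    rw [h1, card_univ, Fintype.card_fin] at h2
    omega
  refine ⟨Function.update c v κ, fun e he => ?_⟩
  by_cases hev : ∃ i, g (e, i) = v
  · obtain ⟨i, hi⟩ := hev
    refine ⟨i, j e, ?_⟩
    beta_reduce
    rw [hi, Function.update_self, Function.update_of_ne (hj e)]
    rintro rfl
    exact hκ (Finset.mem_image_of_mem _ (mem_filter.2 ⟨he, i, hi⟩))
  · push Not at hev
    have he' : e ∈ rowsInside g (W.erase v) := by
      simp only [rowsInside, mem_filter, mem_univ, true_and, mem_erase] at he ⊢
      exact fun i => ⟨hev i, he i⟩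
    obtain ⟨a, b, hab⟩ := hc e he'
    refine ⟨a, b, ?_⟩
    beta_reduce
    rwa [Function.update_of_ne (hev a), Function.update_of_ne (hev b)]

/-- Recoloring one vertex of each monochromatic edge with `5 * r` new colors. -/
lemma exists_proper_of_few_mono (hr : 1 ≤ r) (g : Fin m × Fin r → Fin n)
    (hg : ∀ e, NonMono (fun i => g (e, i))) {k : ℕ} (c : Fin n → Fin k)
    (hsp : ∀ W : Finset (Fin n), W.card ≤ (monoRows (c ∘ g)).card → W.Nonempty →
      (rowsInside g W).card < 5 * W.card) :
    ∃ c' : Fin n → Fin (k + 5 * r), RowProper (c' ∘ g) := by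
  set U := (monoRows (c ∘ g)).image (fun e => g (e, ⟨0, hr⟩)) with hU
  obtain ⟨c₂, hc₂⟩ := exists_greedy_coloring hr g hg U (fun W' hW' =>
    hsp W' ((Finset.card_le_card hW').trans Finset.card_image_le))
  refine ⟨fun v => if v ∈ U then Fin.natAdd k (c₂ v) else Fin.castAdd _ (c v), fun e => ?_⟩
  have hdiff : ∀ (a : Fin k) (b : Fin (5 * r)), Fin.castAdd (5 * r) a ≠ Fin.natAdd k b := by
    intro a b h
    have := congrArg Fin.val h
    simp at this
    omega
  simp only [Function.comp]
  by_cases h1 : ∀ i, g (e, i) ∈ U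
  · obtain ⟨i, j, hij⟩ := hc₂ e (by simpa [rowsInside] using h1)
    refine ⟨i, j, ?_⟩
    simp only [h1, if_true]
    exact fun h => hij (Fin.natAdd_injective _ _ h)
  · push Not at h1
    obtain ⟨i, hi⟩ := h1
    by_cases h2 : ∃ j, g (e, j) ∈ U
    · obtain ⟨j, hj⟩ := h2
      refine ⟨i, j, ?_⟩
      simp only [hi, hj, if_true, if_false]
      exact hdiff _ _
    · push Not at h2
      have : NonMono (fun i => (c ∘ g) (e, i)) := by
        by_contra hcon
        exact h2 ⟨0, hr⟩ (Finset.mem_image_of_mem _ (mem_filter.2 ⟨mem_univ _, hcon⟩))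
      obtain ⟨a, b, hab⟩ := this
      refine ⟨a, b, ?_⟩
      simp only [h2, if_false]
      exact fun h => hab (Fin.castAdd_injective _ _ h)

end Repair

/-! ### Local sparsity -/

section Sparsity

variable {n m r : ℕ}

lemma choose_le_exp (N w : ℕ) (hw : 1 ≤ w) : (N.choose w : ℝ) ≤ (exp 1 * N / w) ^ w := by
  have h1 : (N.choose w : ℝ) ≤ (N : ℝ) ^ w / w.factorial := Nat.choose_le_pow_div w N
  have h2 : (w : ℝ) ^ w / w.factorial ≤ exp w := Real.pow_div_factorial_le_exp _ (by positivity) w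
  have hw0 : (0 : ℝ) < w := by exact_mod_cast hw
  have h3 : exp (w : ℝ) = exp 1 ^ w := by rw [← exp_nat_mul, mul_one]
  refine h1.trans ?_
  rw [div_pow, mul_pow, ← h3]
  rw [div_le_iff₀ (by positivity)] at h2
  rw [div_le_div_iff₀ (by positivity) (by positivity)]
  nlinarith [pow_nonneg (Nat.cast_nonneg (α := ℝ) N) w]

/-- For a fixed set `T` of rows, the probability that all of these lie inside `W`. -/
lemma permProb_rows_inside_le {d : ℕ} (hd : 1 ≤ d) (hn : 1 ≤ n) (hmn : m * r = d * n)
    (f : Fin m × Fin r → Fin n) (hf : ∀ v, cnt f v = d) (W : Finset (Fin n)) (T : Finset (Fin m)) :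
    permProb (fun σ => ∀ e ∈ T, ∀ i, (f ∘ σ) (e, i) ∈ W) ≤
      loss (d * n) 2 * ((W.card : ℝ) / n) ^ (r * T.card) := by
  set c : Fin n → Bool := fun v => decide (v ∈ W) with hc
  have hS : Fintype.card (Fin m × Fin r) = d * n := by simpa using hmn
  have hNS : Nonempty (Fin m × Fin r) := by
    rw [← Fintype.card_pos_iff, hS]; positivity
  have h := permProb_le_rows (m := m) (r := r) (c ∘ f) (fun e x => e ∈ T → ∀ i, x i = true)
  rw [hS, Fintype.card_bool] at h
  refine le_trans (permProb_mono ?_) (h.trans (le_of_eq ?_))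
  · intro σ hσ e he i
    simpa [hc] using hσ e he i
  · congr 1
    have hfr : freq (c ∘ f) true = (W.card : ℝ) / n := by
      rw [freq_comp_word hd f hf hS]
      unfold freq cnt
      rw [Fintype.card_fin]
      congr 2
      congr 1
      ext v
      simp [hc]
    have hrow : ∀ e, ∑ x ∈ univ.filter (fun x : Fin r → Bool => e ∈ T → ∀ i, x i = true),
        ∏ i, freq (c ∘ f) (x i) = if e ∈ T then ((W.card : ℝ) / n) ^ r else 1 := by
      intro e
      split_ifs with he
      · have : univ.filter (fun x : Fin r → Bool => e ∈ T → ∀ i, x i = true) = {fun _ => true} := by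
          ext x
          simp [he, funext_iff]
        rw [this, Finset.sum_singleton, Finset.prod_const, hfr]
        simp
      · simp only [he, false_imp_iff, filter_true]
        rw [sum_all_prod, sum_freq, one_pow]
    refine (Finset.prod_congr rfl (fun e _ => Eq.trans ?_ (hrow e))).trans ?_
    · congr!
    · rw [Finset.prod_ite]
      simp [pow_mul]

/-- Small vertex sets span few edges. -/
lemma rare_dense (r d : ℕ) (hr : 2 ≤ r) (hd : 1 ≤ d) : ∃ γ : ℝ, 0 < γ ∧
    Rare r d (fun _ n g => ∃ W : Finset (Fin n), W.Nonempty ∧ (W.card : ℝ) ≤ γ * n ∧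
      5 * W.card ≤ (rowsInside g W).card) := by
  have hd0 : (1 : ℝ) ≤ d := by exact_mod_cast hd
  set C : ℝ := exp 2 * d ^ 2 with hC
  have hC0 : 0 < C := by positivity
  refine ⟨1 / (2 * C), by positivity, fun δ hδ => ?_⟩
  set A : ℝ := (exp 1 * (d + 1)) ^ 2 * C ^ 4 with hA
  obtain ⟨n₀, hn₀⟩ := exists_nat_gt (A / δ)
  refine ⟨max n₀ 1, fun n hn m hmn f hf => ?_⟩
  have hn1 : 1 ≤ n := le_trans (le_max_right _ _) hn
  have hn0 : (1 : ℝ) ≤ n := by exact_mod_cast hn1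
  have hmd : (m : ℝ) ≤ d * n := by
    have : m ≤ d * n := by rw [← hmn]; exact Nat.le_mul_of_pos_right _ (by omega)
    exact_mod_cast this
  -- union bound over the sets of `5|W|` rows
  have hW : ∀ W : Finset (Fin n), W.Nonempty →
      permProb (fun σ => 5 * W.card ≤ (rowsInside (f ∘ σ) W).card) ≤
      (m.choose (5 * W.card) : ℝ) * (loss (d * n) 2 * ((W.card : ℝ) / n) ^ (r * (5 * W.card))) := by
    intro W _
    have h1 := permProb_exists_le ((univ : Finset (Fin m)).powersetCard (5 * W.card))
      (fun T (σ : Equiv.Perm (Fin m × Fin r)) => ∀ e ∈ T, ∀ i, (f ∘ σ) (e, i) ∈ W)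
    refine le_trans (permProb_mono ?_) (h1.trans ?_)
    · intro σ hσ
      obtain ⟨T, hT, hTc⟩ := Finset.exists_subset_card_eq hσ
      refine ⟨T, mem_powersetCard.2 ⟨subset_univ _, hTc⟩, fun e he => ?_⟩
      have := hT he
      simpa [rowsInside] using this
    · refine (Finset.sum_le_card_nsmul _ _ (loss (d * n) 2 * ((W.card : ℝ) / n) ^ (r * (5 * W.card))) ?_).trans
        (le_of_eq ?_)
      · intro T hT
        have := permProb_rows_inside_le hd hn1 hmn f hf W T
        rwa [(mem_powersetCard.1 hT).2] at this
      · rw [Finset.card_powersetCard, nsmul_eq_mul, card_univ, Fintype.card_fin]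
  have hterm : ∀ w : ℕ, 1 ≤ w → (w : ℝ) ≤ 1 / (2 * C) * n →
      (n.choose w : ℝ) * ((m.choose (5 * w) : ℝ) * (loss (d * n) 2 * ((w : ℝ) / n) ^ (r * (5 * w))))
        ≤ loss (d * n) 2 * (C / n) ^ 4 := by
    intro w hw hwn
    have hw0 : (1 : ℝ) ≤ w := by exact_mod_cast hw
    set x : ℝ := (w : ℝ) / n with hx
    have hx0 : 0 < x := by positivity
    have hx1 : C * x ≤ 1 / 2 := by
      rw [hx, ← mul_div_assoc, div_le_iff₀ (by positivity)]
      have := mul_le_mul_of_nonneg_left hwn hC0.le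
      refine this.trans (le_of_eq ?_)
      field_simp
    have hC1 : 1 ≤ C := by
      rw [hC]
      have := Real.one_le_exp (x := 2) (by norm_num)
      nlinarith [one_le_pow₀ hd0 (n := 2)]
    have hxle : x ≤ 1 := by nlinarith
    have c1 : (n.choose w : ℝ) ≤ (exp 1 / x) ^ w := by
      refine (choose_le_exp n w hw).trans (le_of_eq ?_)
      rw [hx]; field_simp
    have c2 : (m.choose (5 * w) : ℝ) ≤ ((exp 1 * d / x) ^ 5) ^ w := by
      refine (choose_le_exp m (5 * w) (by omega)).trans ?_
      rw [← pow_mul]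
      refine pow_le_pow_left₀ (by positivity) ?_ _
      rw [hx, div_div_eq_mul_div]
      push_cast
      rw [div_le_div_iff₀ (by positivity) (by positivity)]
      have : exp 1 * m ≤ exp 1 * (d * n) := by gcongr
      nlinarith [exp_pos 1, mul_nonneg (exp_pos 1).le (mul_nonneg (by linarith : (0:ℝ) ≤ d) (by linarith : (0:ℝ) ≤ n))]
    have c3 : x ^ (r * (5 * w)) ≤ (x ^ 10) ^ w := by
      rw [← pow_mul]
      exact pow_le_pow_of_le_one hx0.le hxle (by nlinarith)
    have c4 : (C * x) ^ w ≤ C / n := by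
      have h2 : (w : ℝ) ≤ 2 ^ (w - 1) := by
        have : w ≤ 2 ^ (w - 1) := by
          have := Nat.lt_two_pow_self (n := w - 1)
          omega
        exact_mod_cast this
      calc (C * x) ^ w = (C * x) * (C * x) ^ (w - 1) := by
            rw [← pow_succ']; congr 1; omega
        _ ≤ (C * x) * (1 / 2) ^ (w - 1) := by gcongr
        _ = (C / n) * (w / 2 ^ (w - 1)) := by rw [hx, div_pow, one_pow]; field_simp
        _ ≤ (C / n) * 1 := by
            gcongr
            rw [div_le_one (by positivity)]
            exact h2
        _ = C / n := mul_one _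
    have hl := (loss_pos (d * n) 2).le
    calc (n.choose w : ℝ) * ((m.choose (5 * w) : ℝ) * (loss (d * n) 2 * x ^ (r * (5 * w))))
        ≤ (exp 1 / x) ^ w * (((exp 1 * d / x) ^ 5) ^ w * (loss (d * n) 2 * (x ^ 10) ^ w)) := by gcongr
      _ = loss (d * n) 2 * (exp 1 / x * (exp 1 * d / x) ^ 5 * x ^ 10) ^ w := by
          rw [mul_pow, mul_pow]; ring
      _ ≤ loss (d * n) 2 * ((C * x) ^ 4) ^ w := by
          gcongr
          have e1 : exp 1 / x * (exp 1 * d / x) ^ 5 * x ^ 10 = exp 1 ^ 6 * d ^ 5 * x ^ 4 := by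
            field_simp
          rw [e1, mul_pow, hC]
          have e2 : exp (2 : ℝ) = exp 1 ^ 2 := by rw [← exp_nat_mul]; norm_num
          gcongr
          rw [e2, mul_pow, ← pow_mul, ← pow_mul]
          gcongr
          · exact Real.one_le_exp (by norm_num)
          · norm_num
          · norm_num
      _ = loss (d * n) 2 * ((C * x) ^ w) ^ 4 := by rw [← pow_mul, ← pow_mul, mul_comm 4 w]
      _ ≤ _ := by gcongr
  set F : ℕ → ℝ := fun w => if 1 ≤ w ∧ (w : ℝ) ≤ 1 / (2 * C) * n then
    ((m.choose (5 * w) : ℝ) * (loss (d * n) 2 * ((w : ℝ) / n) ^ (r * (5 * w)))) else 0 with hF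
  have hl := (loss_pos (d * n) 2).le
  have h1 := permProb_exists_le ((univ : Finset (Fin n)).powerset.filter
      (fun W => W.Nonempty ∧ (W.card : ℝ) ≤ 1 / (2 * C) * n))
    (fun W (σ : Equiv.Perm (Fin m × Fin r)) => 5 * W.card ≤ (rowsInside (f ∘ σ) W).card)
  have h2 : ∑ W ∈ (univ : Finset (Fin n)).powerset.filter
      (fun W => W.Nonempty ∧ (W.card : ℝ) ≤ 1 / (2 * C) * n),
      permProb (fun σ : Equiv.Perm (Fin m × Fin r) => 5 * W.card ≤ (rowsInside (f ∘ σ) W).card) ≤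
      ∑ W ∈ (univ : Finset (Fin n)).powerset, F W.card := by
    rw [Finset.sum_filter]
    refine Finset.sum_le_sum fun W _ => ?_
    simp only [hF, Nat.one_le_iff_ne_zero, ne_eq, Finset.card_eq_zero, ← Finset.nonempty_iff_ne_empty]
    split_ifs with h
    · exact hW W h.1
    · exact le_rfl
  rw [Finset.sum_powerset_apply_card, card_univ, Fintype.card_fin, Finset.sum_range_succ'] at h2
  have h3 : ∑ w ∈ range n, n.choose (w + 1) • F (w + 1) + n.choose 0 • F 0 ≤
      n * (loss (d * n) 2 * (C / n) ^ 4) := by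
    have : F 0 = 0 := by simp [hF]
    rw [this, smul_zero, add_zero]
    refine (Finset.sum_le_card_nsmul _ _ (loss (d * n) 2 * (C / n) ^ 4) fun w _ => ?_).trans
      (le_of_eq (by rw [card_range, nsmul_eq_mul]))
    rw [nsmul_eq_mul]
    by_cases h : 1 ≤ w + 1 ∧ ((w + 1 : ℕ) : ℝ) ≤ 1 / (2 * C) * n
    · simp only [hF]
      rw [if_pos h]
      exact hterm _ h.1 h.2
    · simp only [hF]
      rw [if_neg h, mul_zero]
      positivity
  refine le_trans (permProb_mono ?_) (h1.trans (h2.trans (h3.trans ?_)))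
  · rintro σ ⟨W, hW1, hW2, hW3⟩
    exact ⟨W, mem_filter.2 ⟨mem_powerset.2 (subset_univ _), hW1, hW2⟩, hW3⟩
  · have hl2 : loss (d * n) 2 ≤ (exp 1 * (d + 1)) ^ 2 * (n : ℝ) ^ 2 := by
      unfold loss
      rw [← mul_pow]
      refine pow_le_pow_left₀ (by positivity) ?_ 2
      push_cast
      rw [mul_assoc]
      refine mul_le_mul_of_nonneg_left ?_ (exp_pos 1).le
      linarith
    calc (n : ℝ) * (loss (d * n) 2 * (C / n) ^ 4)
        ≤ n * ((exp 1 * (d + 1)) ^ 2 * (n : ℝ) ^ 2 * (C / n) ^ 4) := by gcongr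
      _ = A / n := by rw [hA]; field_simp
      _ ≤ δ := by
          rw [div_le_iff₀ (by positivity)]
          rw [div_lt_iff₀ hδ] at hn₀
          have : (n₀ : ℝ) ≤ n := by exact_mod_cast le_trans (le_max_left _ _) hn
          nlinarith

end Sparsity

/-! ### The entropy inequality -/

section Entropy

lemma pow_remainder_le (r : ℕ) (hr : 2 ≤ r) (y : ℝ) (hy : 0 ≤ y) :
    y ^ r - 1 - r * (y - 1) ≤ (r : ℝ) ^ 2 * (1 + y) ^ (r - 2) * (y - 1) ^ 2 := by
  induction r, hr using Nat.le_induction with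
  | base => norm_num; nlinarith [sq_nonneg (y - 1)]
  | succ r hr ih =>
    have e1 : y ^ (r + 1) - 1 - ((r + 1 : ℕ) : ℝ) * (y - 1)
        = y * (y ^ r - 1 - r * (y - 1)) + r * (y - 1) ^ 2 := by push_cast; ring
    have e2 : r + 1 - 2 = (r - 2) + 1 := by omega
    rw [e1, e2, pow_succ (1 + y)]
    set P := (1 + y) ^ (r - 2) with hP
    have hP1 : 1 ≤ P := one_le_pow₀ (by linarith)
    have h1 : y * (y ^ r - 1 - r * (y - 1)) ≤ y * ((r : ℝ) ^ 2 * P * (y - 1) ^ 2) :=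
      mul_le_mul_of_nonneg_left ih hy
    have hr0 : (0 : ℝ) ≤ r := by positivity
    have hs := sq_nonneg (y - 1)
    have h2 : (r : ℝ) * (y - 1) ^ 2 ≤ r * (P * (1 + y)) * (y - 1) ^ 2 := by
      have : 1 ≤ P * (1 + y) := by nlinarith
      nlinarith [mul_nonneg hr0 hs]
    have h3 : 0 ≤ (r : ℝ) ^ 2 * P * (y - 1) ^ 2 := by positivity
    have h4 : 0 ≤ (r + 1 : ℝ) * (P * (1 + y)) * (y - 1) ^ 2 := by positivity
    push_cast
    nlinarith

lemma sq_div_le_entropy (y : ℝ) (hy : 0 ≤ y) :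
    (y - 1) ^ 2 / (2 * (y + 1)) ≤ y * Real.log y - y + 1 := by
  rcases hy.eq_or_lt with rfl | hy
  · norm_num
  obtain ⟨s, hs, rfl⟩ : ∃ s : ℝ, 0 < s ∧ y = s ^ 2 := ⟨√y, Real.sqrt_pos.2 hy, (Real.sq_sqrt hy.le).symm⟩
  have h1 : s - 1 ≤ s * Real.log s := by
    have := Real.one_sub_inv_le_log_of_pos hs
    have h2 := mul_le_mul_of_nonneg_left this hs.le
    rwa [mul_sub, mul_one, mul_inv_cancel₀ hs.ne'] at h2
  have h2 : (s - 1) ^ 2 ≤ s ^ 2 * Real.log (s ^ 2) - s ^ 2 + 1 := by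
    rw [Real.log_pow]
    push_cast
    nlinarith
  refine le_trans ?_ h2
  rw [div_le_iff₀ (by positivity)]
  nlinarith [mul_nonneg (sq_nonneg (s - 1)) (sq_nonneg (s - 1))]

/-- The comparison between the excess of the `r`-th power and relative entropy, at a single point. -/
def TermIneq (r k : ℕ) (Λ η : ℝ) : Prop :=
  ∀ y : ℝ, 0 ≤ y → y ≤ (1 + η) * k →
    Λ * monoProb k r * (y ^ r - 1 - r * (y - 1)) ≤ y * Real.log y - y + 1

/-- The termwise comparison holds once `Λ` is below `log k` by a margin of order `log log k`: small `y` are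
handled by a quadratic lower bound for the entropy, large `y` by the bound `y (log y - 1)`. -/
lemma termIneq_of (r k : ℕ) (hr : 2 ≤ r) (hk : 2 ≤ k) (Λ η : ℝ) (hΛ : 0 ≤ Λ) (hη : 0 ≤ η)
    (h1 : Λ ≤ Real.log k) (h3 : 4 * r ^ 2 * Real.log k ≤ k)
    (h2 : Λ * (1 + η) ^ (r - 1) ≤ Real.log k - Real.log (4 * r ^ 2 * Real.log k) - 1) :
    TermIneq r k Λ η := by
  intro y hy0 hyk
  set L := Real.log k with hL
  have hr2 : (2 : ℝ) ≤ r := by exact_mod_cast hr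
  have hk2 : (2 : ℝ) ≤ k := by exact_mod_cast hk
  have hLpos : 0 < L := Real.log_pos (by linarith)
  have hL12 : 1 / 2 ≤ L := by
    have : Real.log 2 ≤ L := Real.log_le_log (by norm_num) hk2
    linarith [Real.log_two_gt_d9]
  have hrL : 4 ≤ 2 * (r : ℝ) ^ 2 * L := by nlinarith
  unfold monoProb
  have hq : 0 ≤ ((k : ℝ) ^ (r - 1))⁻¹ := by positivity
  obtain ⟨s, rfl⟩ : ∃ s, r = s + 2 := ⟨r - 2, by omega⟩
  have es : s + 2 - 1 = s + 1 := by omega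
  rw [es] at h2 hq ⊢
  by_cases hc : 1 + y ≤ k / (2 * ((s + 2 : ℕ) : ℝ) ^ 2 * L)
  · refine le_trans ?_ (sq_div_le_entropy y hy0)
    have hrem := pow_remainder_le (s + 2) hr y hy0
    rw [Nat.add_sub_cancel] at hrem
    rw [le_div_iff₀ (by positivity)] at hc
    have hx : (1 + y) / k ≤ 1 := by
      rw [div_le_one (by positivity)]
      nlinarith
    have hx0 : 0 ≤ (1 + y) / k := by positivity
    have hx2 : ((1 + y) / k) ^ (s + 1) ≤ (1 + y) / k := by
      rw [pow_succ]
      exact mul_le_of_le_one_left hx0 (pow_le_one₀ hx0 hx)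
    rw [le_div_iff₀ (by positivity)]
    have hkey : Λ * (2 * ((s + 2 : ℕ) : ℝ) ^ 2) * ((1 + y) / k) ^ (s + 1) ≤ 1 := by
      calc Λ * (2 * ((s + 2 : ℕ) : ℝ) ^ 2) * ((1 + y) / k) ^ (s + 1)
          ≤ L * (2 * ((s + 2 : ℕ) : ℝ) ^ 2) * ((1 + y) / k) := by gcongr
        _ = ((1 + y) * (2 * ((s + 2 : ℕ) : ℝ) ^ 2 * L)) / k := by ring
        _ ≤ 1 := by rw [div_le_one (by positivity)]; exact hc
    calc Λ * ((k : ℝ) ^ (s + 1))⁻¹ * (y ^ (s + 2) - 1 - ((s + 2 : ℕ) : ℝ) * (y - 1)) * (2 * (y + 1))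
        ≤ Λ * ((k : ℝ) ^ (s + 1))⁻¹ * (((s + 2 : ℕ) : ℝ) ^ 2 * (1 + y) ^ s * (y - 1) ^ 2) * (2 * (y + 1)) := by
          gcongr
      _ = (Λ * (2 * ((s + 2 : ℕ) : ℝ) ^ 2) * ((1 + y) / k) ^ (s + 1)) * (y - 1) ^ 2 := by
          rw [div_pow, pow_succ (1 + y)]
          field_simp
          ring
      _ ≤ 1 * (y - 1) ^ 2 := by gcongr
      _ = _ := one_mul _
  · push Not at hc
    have hD : 0 < 4 * ((s + 2 : ℕ) : ℝ) ^ 2 * L := by positivity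
    have hy1 : k / (4 * ((s + 2 : ℕ) : ℝ) ^ 2 * L) ≤ y := by
      have e : (k : ℝ) / (2 * ((s + 2 : ℕ) : ℝ) ^ 2 * L) = 2 * (k / (4 * ((s + 2 : ℕ) : ℝ) ^ 2 * L)) := by
        field_simp; norm_num
      have : 1 ≤ k / (4 * ((s + 2 : ℕ) : ℝ) ^ 2 * L) := by
        rw [one_le_div hD]; exact h3
      rw [e] at hc
      linarith
    have hy1' : 1 ≤ y := le_trans (by rw [one_le_div hD]; exact h3) hy1
    have hlog : L - Real.log (4 * ((s + 2 : ℕ) : ℝ) ^ 2 * L) ≤ Real.log y := by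
      have := Real.log_le_log (by positivity) hy1
      rwa [Real.log_div (by positivity) hD.ne'] at this
    have h5 : Λ * ((k : ℝ) ^ (s + 1))⁻¹ * y ^ (s + 1) ≤ Real.log y - 1 := by
      calc Λ * ((k : ℝ) ^ (s + 1))⁻¹ * y ^ (s + 1)
          ≤ Λ * ((k : ℝ) ^ (s + 1))⁻¹ * ((1 + η) * k) ^ (s + 1) := by gcongr
        _ = Λ * (1 + η) ^ (s + 1) := by rw [mul_pow]; field_simp
        _ ≤ _ := by linarith
    have h6 : y ^ (s + 2) - 1 - ((s + 2 : ℕ) : ℝ) * (y - 1) ≤ y ^ (s + 2) := by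
      have : 0 ≤ ((s + 2 : ℕ) : ℝ) * (y - 1) := mul_nonneg (by positivity) (by linarith)
      linarith
    calc Λ * ((k : ℝ) ^ (s + 1))⁻¹ * (y ^ (s + 2) - 1 - ((s + 2 : ℕ) : ℝ) * (y - 1))
        ≤ Λ * ((k : ℝ) ^ (s + 1))⁻¹ * y ^ (s + 2) := by gcongr
      _ = (Λ * ((k : ℝ) ^ (s + 1))⁻¹ * y ^ (s + 1)) * y := by ring
      _ ≤ (Real.log y - 1) * y := by gcongr
      _ ≤ _ := by linarith

/-- Summing the termwise comparison over a probability vector. -/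
lemma entropy_sum_le {K : Type*} [Fintype K] (r k : ℕ) (hr : 1 ≤ r) (hk : 1 ≤ k) (hK : Fintype.card K = k * k)
    (Λ η : ℝ) (hT : TermIneq r k Λ η) (a : K → ℝ) (ha : ∀ κ, 0 ≤ a κ) (hs : ∑ κ, a κ = 1)
    (hb : ∀ κ, k * a κ ≤ 1 + η) :
    Λ * (∑ κ, a κ ^ r - monoProb k r ^ 2) ≤ monoProb k r * ∑ κ, a κ * Real.log (k ^ 2 * a κ) := by
  have hk0 : (0 : ℝ) < k := by exact_mod_cast hk
  have hq : 0 < monoProb k r := by unfold monoProb; positivity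
  have h1 : ∑ κ, Λ * monoProb k r * ((k ^ 2 * a κ) ^ r - 1 - r * (k ^ 2 * a κ - 1)) ≤
      ∑ κ, ((k ^ 2 * a κ) * Real.log (k ^ 2 * a κ) - (k ^ 2 * a κ) + 1) := by
    refine Finset.sum_le_sum fun κ _ => hT _ (mul_nonneg (by positivity) (ha κ)) ?_
    have := mul_le_mul_of_nonneg_left (hb κ) hk0.le
    nlinarith
  have hone : ∑ _κ : K, (1 : ℝ) = k ^ 2 := by
    simp [hK]; ring
  have hy : ∑ κ, (k : ℝ) ^ 2 * a κ = k ^ 2 := by rw [← Finset.mul_sum, hs, mul_one]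
  have e1 : ∑ κ, Λ * monoProb k r * ((k ^ 2 * a κ) ^ r - 1 - r * (k ^ 2 * a κ - 1))
      = Λ * monoProb k r * ((k ^ 2) ^ r * ∑ κ, a κ ^ r - k ^ 2) := by
    rw [← Finset.mul_sum]
    congr 1
    simp only [Finset.sum_sub_distrib, ← Finset.mul_sum, mul_pow, hs, hone, mul_one]
    ring
  have e2 : ∑ κ, ((k ^ 2 * a κ) * Real.log (k ^ 2 * a κ) - (k ^ 2 * a κ) + 1)
      = k ^ 2 * ∑ κ, a κ * Real.log (k ^ 2 * a κ) := by
    rw [Finset.sum_add_distrib, Finset.sum_sub_distrib, hone, hy]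
    simp only [mul_assoc, Finset.mul_sum]
    ring
  rw [e1, e2] at h1
  have e3 : ((k : ℝ) ^ 2) ^ r = k ^ 2 / monoProb k r ^ 2 := by
    unfold monoProb
    obtain ⟨s, rfl⟩ : ∃ s, r = s + 1 := ⟨r - 1, by omega⟩
    rw [Nat.add_sub_cancel]
    field_simp
    ring
  rw [e3] at h1
  have e4 : Λ * monoProb k r * ((k : ℝ) ^ 2 / monoProb k r ^ 2 * ∑ κ, a κ ^ r - k ^ 2)
      = k ^ 2 * (Λ * (∑ κ, a κ ^ r - monoProb k r ^ 2) / monoProb k r) := by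
    field_simp
  rw [e4] at h1
  have h2 := le_of_mul_le_mul_left h1 (by positivity)
  rw [div_le_iff₀ hq] at h2
  linarith

end Entropy

/-! ### Second moment -/

section SecondMoment

variable {n m r : ℕ}

/-- The second moment inequality: Cauchy–Schwarz for the number of events `P i` that occur. -/
lemma permProb_second_moment {S ι : Type*} [Fintype S] [DecidableEq S] (I : Finset ι)
    (P : ι → Equiv.Perm S → Prop) :
    (∑ i ∈ I, permProb (P i)) ^ 2 ≤ permProb (fun σ => ∃ i ∈ I, P i σ) *
      ∑ p ∈ I ×ˢ I, permProb (fun σ => P p.1 σ ∧ P p.2 σ) := by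
  set F : ℝ := ((univ : Finset (Equiv.Perm S)).card : ℝ) with hF
  have hF0 : 0 < F := by
    rw [hF]; exact_mod_cast Finset.card_pos.2 Finset.univ_nonempty
  set A := univ.filter (fun σ : Equiv.Perm S => ∃ i ∈ I, P i σ) with hA
  set Z : Equiv.Perm S → ℝ := fun σ => ∑ i ∈ I, if P i σ then 1 else 0 with hZ
  have hpp : ∀ Q : Equiv.Perm S → Prop, permProb Q = (∑ σ, if Q σ then (1 : ℝ) else 0) / F := by
    intro Q
    unfold permProb uniformProb
    rw [Finset.sum_boole]
  have e1 : ∑ i ∈ I, permProb (P i) = (∑ σ ∈ A, Z σ) / F := by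
    have : ∑ σ ∈ A, Z σ = ∑ σ, Z σ := by
      refine Finset.sum_subset (subset_univ _) fun σ _ hσ => ?_
      refine Finset.sum_eq_zero fun i hi => if_neg fun h => hσ ?_
      exact mem_filter.2 ⟨mem_univ _, i, hi, h⟩
    rw [this, hZ, Finset.sum_comm, Finset.sum_div]
    exact Finset.sum_congr rfl fun i _ => hpp _
  have e2 : ∑ p ∈ I ×ˢ I, permProb (fun σ => P p.1 σ ∧ P p.2 σ) = (∑ σ, Z σ ^ 2) / F := by
    have : ∀ σ, Z σ ^ 2 = ∑ p ∈ I ×ˢ I, if P p.1 σ ∧ P p.2 σ then (1 : ℝ) else 0 := by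
      intro σ
      rw [pow_two, hZ, Finset.sum_mul_sum, ← Finset.sum_product']
      refine Finset.sum_congr rfl fun p _ => ?_
      by_cases h1 : P p.1 σ <;> by_cases h2 : P p.2 σ <;> simp [h1, h2]
    simp_rw [this]
    rw [Finset.sum_comm, Finset.sum_div]
    exact Finset.sum_congr rfl fun i _ => (hpp _).trans (by congr!)
  have e3 : permProb (fun σ => ∃ i ∈ I, P i σ) = A.card / F := by
    unfold permProb uniformProb
    rw [hA, hF]
    congr!
  rw [e1, e2, e3]
  have h1 : (∑ σ ∈ A, Z σ) ^ 2 ≤ A.card * ∑ σ ∈ A, Z σ ^ 2 := sq_sum_le_card_mul_sum_sq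
  have h2 : ∑ σ ∈ A, Z σ ^ 2 ≤ ∑ σ, Z σ ^ 2 :=
    Finset.sum_le_sum_of_subset_of_nonneg (subset_univ _) fun _ _ _ => sq_nonneg _
  rw [div_pow, div_mul_div_comm, ← pow_two]
  gcongr
  exact h1.trans (by gcongr)

/-- Summing a product measure along a projection of the alphabet. -/
lemma sum_prod_map {K K' : Type*} [Fintype K] [DecidableEq K] [Fintype K'] [DecidableEq K'] (p : K → K')
    (a : K → ℝ) (A : (Fin r → K') → Prop) [DecidablePred A] :
    ∑ x ∈ univ.filter (fun x : Fin r → K => A (p ∘ x)), ∏ i, a (x i) =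
      ∑ y ∈ univ.filter (fun y : Fin r → K' => A y), ∏ i, ∑ κ ∈ univ.filter (fun κ => p κ = y i), a κ := by
  rw [← Finset.sum_fiberwise_of_maps_to (g := fun x : Fin r → K => p ∘ x)
    (t := univ.filter (fun y : Fin r → K' => A y)) (by intro x hx; simpa using hx)]
  refine Finset.sum_congr rfl fun y hy => ?_
  rw [Finset.prod_univ_sum]
  refine Finset.sum_congr ?_ fun _ _ => rfl
  ext x
  simp only [mem_filter, mem_univ, true_and, Fintype.mem_piFinset]
  constructor
  · rintro ⟨-, h⟩ i; exact congrFun h i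
  · intro h
    have : p ∘ x = y := funext h
    exact ⟨this ▸ (mem_filter.1 hy).2, this⟩

/-- An upper bound for the probability that a random pair of words of length `r` has both members
nonconstant, by inclusion–exclusion. -/
lemma sum_pair_nonMono_le {k : ℕ} (hk : 1 ≤ k) (hr : 1 ≤ r) (a : Fin k × Fin k → ℝ) (ha : ∀ κ, 0 ≤ a κ)
    (hs : ∑ κ, a κ = 1) :
    ∑ x ∈ univ.filter (fun x : Fin r → Fin k × Fin k => NonMono (Prod.fst ∘ x) ∧ NonMono (Prod.snd ∘ x)),
      ∏ i, a (x i) ≤ 1 - 2 * monoProb k r + ∑ κ, a κ ^ r := by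
  have hone : ∑ x : Fin r → Fin k × Fin k, ∏ i, a (x i) = 1 := by rw [sum_all_prod, hs, one_pow]
  have hmarg : ∀ p : Fin k × Fin k → Fin k,
      monoProb k r ≤ ∑ x ∈ univ.filter (fun x : Fin r → Fin k × Fin k => ¬ NonMono (p ∘ x)), ∏ i, a (x i) := by
    intro p
    rw [sum_prod_map p a (fun y => ¬ NonMono y),
      sum_mono_prod hr (fun i => ∑ κ ∈ univ.filter (fun κ => p κ = i), a κ)]
    refine monoProb_le_sum_pow hk hr _ (fun i => Finset.sum_nonneg fun κ _ => ha κ) ?_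
    rw [Finset.sum_fiberwise, hs]
  have h1 := hmarg Prod.fst
  have h2 := hmarg Prod.snd
  have h3 : ∑ x ∈ univ.filter (fun x : Fin r → Fin k × Fin k => ¬ NonMono x), ∏ i, a (x i) = ∑ κ, a κ ^ r :=
    sum_mono_prod hr a
  rw [Finset.sum_filter] at h1 h2 h3 ⊢
  rw [← h3]
  have hpt : ∀ x : Fin r → Fin k × Fin k,
      (if NonMono (Prod.fst ∘ x) ∧ NonMono (Prod.snd ∘ x) then ∏ i, a (x i) else 0) =
        (∏ i, a (x i)) - (if ¬ NonMono (Prod.fst ∘ x) then ∏ i, a (x i) else 0)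
        - (if ¬ NonMono (Prod.snd ∘ x) then ∏ i, a (x i) else 0)
        + (if ¬ NonMono x then ∏ i, a (x i) else 0) := by
    intro x
    have hx : NonMono x ↔ NonMono (Prod.fst ∘ x) ∨ NonMono (Prod.snd ∘ x) := by
      constructor
      · rintro ⟨i, j, hij⟩
        by_cases h : (x i).1 = (x j).1
        · exact Or.inr ⟨i, j, fun h' => hij (Prod.ext h h')⟩
        · exact Or.inl ⟨i, j, h⟩
      · rintro (⟨i, j, hij⟩ | ⟨i, j, hij⟩)
        · exact ⟨i, j, fun h => hij (congrArg Prod.fst h)⟩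
        · exact ⟨i, j, fun h => hij (congrArg Prod.snd h)⟩
    rw [hx]
    by_cases g1 : NonMono (Prod.fst ∘ x) <;> by_cases g2 : NonMono (Prod.snd ∘ x) <;> simp [g1, g2]
  rw [Finset.sum_congr rfl fun x _ => hpt x, Finset.sum_add_distrib, Finset.sum_sub_distrib,
    Finset.sum_sub_distrib, hone]
  linarith

/-- A pair of colorings is a word `h` over pairs of colors. The excess of the probability that both are
proper over `(1 - q) ^ (2 * m)` is compensated by the relative entropy of the letter frequencies of `h`. -/
lemma pow_le_of_termIneq {d k : ℕ} (hr : 1 ≤ r) (hk : 1 ≤ k) (hn : 1 ≤ n) (hmn : m * r = d * n)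
    (hq : monoProb k r < 1) (η : ℝ)
    (hT : TermIneq r k (d / r * monoProb k r / (1 - monoProb k r) ^ 2) η) (h : Fin n → Fin k × Fin k)
    (hb : ∀ κ, k * freq h κ ≤ 1 + η) :
    (1 - 2 * monoProb k r + ∑ κ, freq h κ ^ r) ^ m ≤
      (1 - monoProb k r) ^ (2 * m) * ((k : ℝ) ^ (2 * n) * ∏ v, freq h (h v)) := by
  set q := monoProb k r with hqd
  have hk0 : (0 : ℝ) < k := by exact_mod_cast hk
  have hr0 : (0 : ℝ) < r := by exact_mod_cast hr
  have hn0 : (0 : ℝ) < n := by exact_mod_cast hn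
  have hq0 : 0 < q := by rw [hqd]; unfold monoProb; positivity
  have : Nonempty (Fin n) := ⟨⟨0, hn⟩⟩
  set a := freq h with ha
  have h1 := entropy_sum_le r k hr hk (by simp) _ η hT a (freq_nonneg h) (sum_freq h) hb
  rw [← hqd] at h1
  set s := ∑ κ, a κ ^ r with hsdef
  set H := ∑ κ, a κ * Real.log (k ^ 2 * a κ) with hH
  have h1q : 0 < 1 - q := by linarith
  have h2 : (d : ℝ) / r * ((s - q ^ 2) / (1 - q) ^ 2) ≤ H := by
    have e : (d : ℝ) / r * q / (1 - q) ^ 2 * (s - q ^ 2) = q * ((d : ℝ) / r * ((s - q ^ 2) / (1 - q) ^ 2)) := by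
      ring
    rw [e] at h1
    exact le_of_mul_le_mul_left h1 hq0
  have hm : (m : ℝ) = d / r * n := by
    have : (m : ℝ) * r = d * n := by exact_mod_cast hmn
    field_simp; linarith
  have hs0 : 0 ≤ s := Finset.sum_nonneg fun κ _ => pow_nonneg (freq_nonneg h κ) r
  have h3 : 1 - 2 * q + s ≤ (1 - q) ^ 2 * exp ((s - q ^ 2) / (1 - q) ^ 2) := by
    have h4 := add_one_le_exp ((s - q ^ 2) / (1 - q) ^ 2)
    calc 1 - 2 * q + s = (1 - q) ^ 2 * ((s - q ^ 2) / (1 - q) ^ 2 + 1) := by field_simp; ring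
      _ ≤ _ := by gcongr
  have h0 : 0 ≤ 1 - 2 * q + s := by
    have : q ^ 2 ≤ s := by
      -- power mean inequality on `k²` cells
      have h5 := Real.pow_arith_mean_le_arith_mean_pow univ (fun _ : Fin k × Fin k => ((k : ℝ) ^ 2)⁻¹) a
        (fun _ _ => by positivity) (by simp; field_simp) (fun κ _ => freq_nonneg h κ) r
      rw [← Finset.mul_sum, ← Finset.mul_sum, sum_freq, mul_one] at h5
      rw [hqd]
      unfold monoProb
      obtain ⟨t, rfl⟩ : ∃ t, r = t + 1 := ⟨r - 1, by omega⟩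
      rw [pow_succ'] at h5
      rw [Nat.add_sub_cancel]
      have h6 := le_of_mul_le_mul_left h5 (by positivity)
      refine le_trans (le_of_eq ?_) h6
      rw [inv_pow, inv_pow, ← pow_mul, ← pow_mul, mul_comm]
    nlinarith [sq_nonneg (1 - q)]
  have h7 : exp (n * H) = (k : ℝ) ^ (2 * n) * ∏ v, a (h v) := by
    have e1 : (k : ℝ) ^ (2 * n) * ∏ v, a (h v) = ∏ v, (fun κ => (k : ℝ) ^ 2 * a κ) (h v) := by
      rw [Finset.prod_mul_distrib, Finset.prod_const, card_univ, Fintype.card_fin, ← pow_mul]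
    rw [e1, prod_comp_eq h (fun κ => (k : ℝ) ^ 2 * a κ), hH, Finset.mul_sum, exp_sum]
    refine Finset.prod_congr rfl fun κ _ => ?_
    have e2 : (n : ℝ) * a κ = cnt h κ := by
      rw [ha]; unfold freq; rw [Fintype.card_fin]; field_simp
    rw [← mul_assoc, e2]
    rcases Nat.eq_zero_or_pos (cnt h κ) with h0 | hpos
    · simp [h0]
    · have : 0 < a κ := by
        rw [ha]; unfold freq; rw [Fintype.card_fin]
        have : (0 : ℝ) < cnt h κ := by exact_mod_cast hpos
        positivity
      rw [exp_nat_mul, exp_log (by positivity)]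
  calc (1 - 2 * q + s) ^ m ≤ ((1 - q) ^ 2 * exp ((s - q ^ 2) / (1 - q) ^ 2)) ^ m := by gcongr
    _ = (1 - q) ^ (2 * m) * exp (m * ((s - q ^ 2) / (1 - q) ^ 2)) := by
        rw [mul_pow, ← pow_mul, ← exp_nat_mul]
    _ ≤ (1 - q) ^ (2 * m) * exp (n * H) := by
        refine mul_le_mul_of_nonneg_left (exp_le_exp.2 ?_) (by positivity)
        rw [hm]
        calc (d : ℝ) / r * n * ((s - q ^ 2) / (1 - q) ^ 2)
            = n * ((d : ℝ) / r * ((s - q ^ 2) / (1 - q) ^ 2)) := by ring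
          _ ≤ _ := by gcongr
    _ = _ := by rw [h7]

/-- The colorings with no class larger than `(1 + η) n / k`. -/
noncomputable def nearlyBalanced (n k : ℕ) (η : ℝ) : Finset (Fin n → Fin k) :=
  univ.filter (fun c => ∀ i, (k : ℝ) * cnt c i ≤ (1 + η) * n)

/-- The second moment of the number of nearly balanced proper colorings exceeds the square of
`(1 - q) ^ m * k ^ n` by at most a polynomial factor. -/
lemma second_moment_upper {d k : ℕ} (hr : 1 ≤ r) (hd : 1 ≤ d) (hk : 1 ≤ k) (hn : 1 ≤ n) (hmn : m * r = d * n)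
    (hq : monoProb k r < 1) (η : ℝ)
    (hT : TermIneq r k (d / r * monoProb k r / (1 - monoProb k r) ^ 2) η)
    (f : Fin m × Fin r → Fin n) (hf : ∀ v, cnt f v = d) :
    ∑ p ∈ nearlyBalanced n k η ×ˢ nearlyBalanced n k η,
      permProb (fun σ => RowProper ((p.1 ∘ f) ∘ σ) ∧ RowProper ((p.2 ∘ f) ∘ σ)) ≤
    loss (d * n) (k * k) * ((n : ℝ) + 1) ^ (k * k) * ((1 - monoProb k r) ^ m * (k : ℝ) ^ n) ^ 2 := by
  have hn0 : (0 : ℝ) < n := by exact_mod_cast hn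
  have hS : Fintype.card (Fin m × Fin r) = d * n := by simpa using hmn
  have hNS : Nonempty (Fin m × Fin r) := by
    rw [← Fintype.card_pos_iff, hS]; positivity
  have hNn : Nonempty (Fin n) := ⟨⟨0, hn⟩⟩
  have hl := (loss_pos (d * n) (k * k)).le
  set B := loss (d * n) (k * k) * ((1 - monoProb k r) ^ m * (k : ℝ) ^ n) ^ 2 with hB
  have hB0 : 0 ≤ B := by positivity
  have step : ∀ p ∈ nearlyBalanced n k η ×ˢ nearlyBalanced n k η,
      permProb (fun σ => RowProper ((p.1 ∘ f) ∘ σ) ∧ RowProper ((p.2 ∘ f) ∘ σ)) ≤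
        B * ∏ v, freq (fun v => (p.1 v, p.2 v)) ((fun v => (p.1 v, p.2 v)) v) := by
    rintro ⟨c, c'⟩ hp
    set h : Fin n → Fin k × Fin k := fun v => (c v, c' v) with hh
    have h1 := permProb_le_rows (m := m) (r := r) (h ∘ f)
      (fun _ x => NonMono (Prod.fst ∘ x) ∧ NonMono (Prod.snd ∘ x))
    have hfr : freq (h ∘ f) = freq h := funext fun κ => freq_comp_word hd f hf hS h κ
    rw [hS, Fintype.card_prod, Fintype.card_fin, hfr, Finset.prod_const, card_univ, Fintype.card_fin] at h1
    refine le_trans (permProb_mono ?_) (h1.trans ?_)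
    · rintro σ ⟨g1, g2⟩ e
      exact ⟨g1 e, g2 e⟩
    · have h2 := sum_pair_nonMono_le hk hr (freq h) (freq_nonneg h) (sum_freq h)
      have hb : ∀ κ, k * freq h κ ≤ 1 + η := by
        intro κ
        have hc := (mem_filter.1 (mem_product.1 hp).1).2 κ.1
        have h3 : cnt h κ ≤ cnt c κ.1 := by
          refine Finset.card_le_card fun v hv => ?_
          simp only [mem_filter, mem_univ, true_and] at hv ⊢
          rw [← hv]
        have h4 : (cnt h κ : ℝ) ≤ cnt c κ.1 := by exact_mod_cast h3
        unfold freq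
        rw [Fintype.card_fin, ← mul_div_assoc, div_le_iff₀ hn0]
        refine le_trans ?_ hc
        gcongr
      have h3 := pow_le_of_termIneq hr hk hn hmn hq η hT h hb
      have h4 : (∑ x ∈ univ.filter (fun x : Fin r → Fin k × Fin k =>
          NonMono (Prod.fst ∘ x) ∧ NonMono (Prod.snd ∘ x)), ∏ i, freq h (x i)) ^ m ≤
          (1 - 2 * monoProb k r + ∑ κ, freq h κ ^ r) ^ m := by
        refine pow_le_pow_left₀ (Finset.sum_nonneg fun x _ => Finset.prod_nonneg fun i _ => freq_nonneg _ _) ?_ m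
        exact h2
      calc _ ≤ loss (d * n) (k * k) * ((1 - monoProb k r) ^ (2 * m) * ((k : ℝ) ^ (2 * n) * ∏ v, freq h (h v))) := by
            refine mul_le_mul_of_nonneg_left (le_trans (le_of_eq ?_) (h4.trans h3)) hl
            congr!
        _ = _ := by rw [hB]; ring
  refine (Finset.sum_le_sum step).trans ?_
  have h5 : ∑ p ∈ nearlyBalanced n k η ×ˢ nearlyBalanced n k η,
      B * ∏ v, freq (fun v => (p.1 v, p.2 v)) ((fun v => (p.1 v, p.2 v)) v) ≤
      ∑ p : (Fin n → Fin k) × (Fin n → Fin k),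
      B * ∏ v, freq (fun v => (p.1 v, p.2 v)) ((fun v => (p.1 v, p.2 v)) v) := by
    refine Finset.sum_le_sum_of_subset_of_nonneg (subset_univ _) fun p _ _ => ?_
    exact mul_nonneg hB0 (Finset.prod_nonneg fun v _ => freq_nonneg _ _)
  refine h5.trans ?_
  have h6 : ∑ p : (Fin n → Fin k) × (Fin n → Fin k),
      B * ∏ v, freq (fun v => (p.1 v, p.2 v)) ((fun v => (p.1 v, p.2 v)) v) =
      ∑ h : Fin n → Fin k × Fin k, B * ∏ v, freq h (h v) := by
    refine (Fintype.sum_equiv (Equiv.arrowProdEquivProdArrow (Fin n) (fun _ => Fin k) (fun _ => Fin k)) _ _ ?_).symm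
    intro h
    rfl
  rw [h6, ← Finset.mul_sum]
  have h7 := sum_prod_freq_le (S := Fin n) (K := Fin k × Fin k)
  rw [Fintype.card_prod, Fintype.card_fin, Fintype.card_fin] at h7
  refine (mul_le_mul_of_nonneg_left h7 hB0).trans (le_of_eq ?_)
  rw [hB]; ring

end SecondMoment

/-! ### A balanced proper coloring of a suitable regular word -/

section Construction

lemma cnt_equiv {S T K : Type*} [Fintype S] [Fintype T] [DecidableEq K] (e : S ≃ T) (w : T → K) (κ : K) :
    cnt (w ∘ e) κ = cnt w κ := by
  unfold cnt
  refine Finset.card_bij (fun s _ => e s) (by simp) (by simp) ?_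
  intro b hb
  exact ⟨e.symm b, by simpa using hb, by simp⟩

lemma cnt_sum {S T K : Type*} [Fintype S] [Fintype T] [DecidableEq K] (w : S ⊕ T → K) (κ : K) :
    cnt w κ = cnt (w ∘ Sum.inl) κ + cnt (w ∘ Sum.inr) κ := by
  simp only [cnt, Finset.card_filter, Fintype.sum_sum_type, Function.comp]

lemma cnt_prod_snd {A B K : Type*} [Fintype A] [Fintype B] [DecidableEq K] (w : B → K) (κ : K) :
    cnt (fun p : A × B => w p.2) κ = Fintype.card A * cnt w κ := by
  simp only [cnt, Finset.card_filter, Fintype.sum_prod_type]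
  simp

/-- The nonconstant words of length `r` over `k` colors. -/
abbrev Good (r k : ℕ) := {x : Fin r → Fin k // NonMono x}

lemma card_good (r k : ℕ) (hr : 1 ≤ r) : Fintype.card (Good r k) + k = k ^ r := by
  have h1 : Fintype.card {x : Fin r → Fin k // ¬ NonMono x} = k := by
    conv_rhs => rw [← Fintype.card_fin k]
    refine (Fintype.card_congr (Equiv.ofBijective (fun i : Fin k => (⟨fun _ => i, by simp [NonMono]⟩ :
      {x : Fin r → Fin k // ¬ NonMono x})) ⟨?_, ?_⟩)).symm
    · intro i j h
      exact congrFun (congrArg Subtype.val h) ⟨0, hr⟩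
    · rintro ⟨x, hx⟩
      simp only [NonMono, not_exists, not_not] at hx
      exact ⟨x ⟨0, hr⟩, Subtype.ext (funext fun i => hx _ _)⟩
  have h4 : Fintype.card (Fin r → Fin k) = k ^ r := by simp
  have h5 : Fintype.card (Good r k) = Fintype.card {x : Fin r → Fin k // NonMono x} := by congr!
  have h6 : Fintype.card {x : Fin r → Fin k // ¬ NonMono x} =
      Fintype.card (Fin r → Fin k) - Fintype.card {x : Fin r → Fin k // NonMono x} := by
    rw [Fintype.card_subtype_compl]
  have h7 : Fintype.card {x : Fin r → Fin k // NonMono x} ≤ Fintype.card (Fin r → Fin k) :=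
    Fintype.card_subtype_le _
  omega

/-- By symmetry all colors occur equally often in the list of all nonconstant words. -/
lemma cnt_good (r k : ℕ) (i : Fin k) :
    k * cnt (fun p : Good r k × Fin r => p.1.1 p.2) i = Fintype.card (Good r k) * r := by
  have hsym : ∀ j, cnt (fun p : Good r k × Fin r => p.1.1 p.2) j = cnt (fun p : Good r k × Fin r => p.1.1 p.2) i := by
    intro j
    have hNM : ∀ x : Fin r → Fin k, NonMono x → NonMono (Equiv.swap i j ∘ x) := by
      rintro x ⟨a, b, hab⟩
      exact ⟨a, b, fun h => hab ((Equiv.swap i j).injective h)⟩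
    let E : Good r k ≃ Good r k :=
      { toFun := fun τ => ⟨Equiv.swap i j ∘ τ.1, hNM _ τ.2⟩
        invFun := fun τ => ⟨Equiv.swap i j ∘ τ.1, hNM _ τ.2⟩
        left_inv := fun τ => Subtype.ext (funext fun l => by simp)
        right_inv := fun τ => Subtype.ext (funext fun l => by simp) }
    rw [← cnt_equiv (E.prodCongr (Equiv.refl (Fin r))) _ i]
    unfold cnt
    congr 1
    ext p
    simp only [mem_filter, mem_univ, true_and, Function.comp, E, Equiv.prodCongr_apply, Equiv.coe_fn_mk,
      Prod.map, Equiv.refl_apply]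
    rw [Equiv.swap_apply_eq_iff, Equiv.swap_apply_left]
  have h := sum_cnt (fun p : Good r k × Fin r => p.1.1 p.2)
  rw [Finset.sum_congr rfl fun j _ => hsym j] at h
  simpa using h

/-- A coloring of a cyclically ordered set in which consecutive elements receive different colors. -/
def cyclicColor (k n : ℕ) (hk : 3 ≤ k) (v : Fin n) : Fin k :=
  if v.1 + 1 = n then ⟨2, hk⟩ else ⟨v.1 % 2, by omega⟩

lemma cyclicColor_ne (k n : ℕ) (hk : 3 ≤ k) (hn : 2 ≤ n) (v w : Fin n) (h : w.1 = (v.1 + 1) % n) :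
    cyclicColor k n hk v ≠ cyclicColor k n hk w := by
  unfold cyclicColor
  have hv := v.2
  by_cases h1 : v.1 + 1 = n
  · rw [h1, Nat.mod_self] at h
    rw [if_pos h1, if_neg (by omega)]
    intro hc
    have := congrArg Fin.val hc
    simp at this
    omega
  · rw [Nat.mod_eq_of_lt (by omega)] at h
    rw [if_neg h1]
    split_ifs with h2
    · intro hc
      have := congrArg Fin.val hc
      simp at this
      omega
    · intro hc
      have := congrArg Fin.val hc
      simp at this
      omega

/-- A bounded number of vertices can be handled by winding the rows around a cycle. -/
lemma exists_leftover (r d k n m : ℕ) (hr : 2 ≤ r) (hk : 3 ≤ k) (hn : 2 ≤ n) (hmn : m * r = d * n) :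
    ∃ (u : Fin m → Good r k) (c : Fin n → Fin k),
      ∀ i, cnt (fun s : Fin m × Fin r => (u s.1).1 s.2) i = d * cnt c i := by
  let E : Fin m × Fin r ≃ Fin d × Fin n :=
    finProdFinEquiv.trans ((finCongr hmn).trans finProdFinEquiv.symm)
  have hE : ∀ s, ((E s).2 : ℕ) = (s.2.1 + r * s.1.1) % n := by
    intro s
    simp [E, finProdFinEquiv, Fin.modNat]
  refine ⟨fun e => ⟨fun l => cyclicColor k n hk (E (e, l)).2, ⟨0, by omega⟩, ⟨1, by omega⟩, ?_⟩,
    cyclicColor k n hk, fun i => ?_⟩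
  · refine cyclicColor_ne k n hk hn _ _ ?_
    rw [hE, hE]
    simp [add_comm]
  · have := cnt_equiv E (fun p : Fin d × Fin n => cyclicColor k n hk p.2) i
    rw [cnt_prod_snd, Fintype.card_fin] at this
    exact this

/-- A list of `m` nonconstant words using all words almost equally often, together with a coloring of
the vertices with almost equal classes, such that the color frequencies match. -/
lemma exists_balanced (r d k : ℕ) (hr : 2 ≤ r) (hk : 3 ≤ k) :
    ∃ (C : ℝ) (n₀ : ℕ), 0 ≤ C ∧ ∀ n, n₀ ≤ n → ∀ m, m * r = d * n →
      ∃ (u : Fin m → Good r k) (c : Fin n → Fin k),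
        (∀ τ, (cnt u τ : ℝ) ≤ (m : ℝ) / Fintype.card (Good r k) + C) ∧
        (∀ i, (cnt c i : ℝ) ≤ (n : ℝ) / k + C) ∧
        ∀ i, cnt (fun s : Fin m × Fin r => (u s.1).1 s.2) i = d * cnt c i := by
  set G := Fintype.card (Good r k) with hG
  have hGpos : 0 < G := by
    have := card_good r k (by omega)
    have h2 : k ^ 1 < k ^ r := Nat.pow_lt_pow_right (by omega) (by omega)
    rw [pow_one] at h2
    omega
  set M := k * r * G with hM
  have hMpos : 2 ≤ M := by
    have : 3 * 2 * 1 ≤ k * r * G := Nat.mul_le_mul (Nat.mul_le_mul hk hr) hGpos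
    omega
  refine ⟨(d + 1) * (2 * M), M, by positivity, fun n hn m hmn => ?_⟩
  obtain ⟨j, n₁, hn1, hn2, hnj⟩ : ∃ j n₁, M ≤ n₁ ∧ n₁ < 2 * M ∧ n = M * j + n₁ := by
    refine ⟨n / M - 1, n % M + M, by omega, by have := Nat.mod_lt n (show 0 < M by omega); omega, ?_⟩
    have h1 := Nat.div_add_mod n M
    have h2 : 1 ≤ n / M := (Nat.one_le_div_iff (by omega)).2 hn
    obtain ⟨t, ht⟩ : ∃ t, n / M = t + 1 := ⟨n / M - 1, by omega⟩
    rw [ht] at h1 ⊢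
    rw [Nat.add_sub_cancel]
    nlinarith
  obtain ⟨m₁, hm1⟩ : ∃ m₁, m = d * k * j * G + m₁ := by
    refine ⟨m - d * k * j * G, ?_⟩
    have : d * k * j * G ≤ m := by
      refine Nat.le_of_mul_le_mul_right (c := r) ?_ (by omega)
      rw [hmn, hnj, hM]
      nlinarith
    omega
  have hm1n : m₁ * r = d * n₁ := by
    rw [hm1, hnj, hM] at hmn
    have e : d * k * j * G * r = d * (k * r * G * j) := by ring
    rw [add_mul, mul_add, e] at hmn
    omega
  obtain ⟨u₁, c₁, h₁⟩ := exists_leftover r d k n₁ m₁ hr hk (by omega) hm1n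
  have cardN : Fintype.card (Fin n) = Fintype.card ((Fin (r * G * j) × Fin k) ⊕ Fin n₁) := by
    simp only [Fintype.card_sum, Fintype.card_prod, Fintype.card_fin]
    rw [hnj, hM]; ring
  have cardM : Fintype.card (Fin m) = Fintype.card ((Fin (d * k * j) × Good r k) ⊕ Fin m₁) := by
    simp only [Fintype.card_sum, Fintype.card_prod, Fintype.card_fin]
    rw [← hG, hm1]
  have EN := Fintype.equivOfCardEq cardN
  have EM := Fintype.equivOfCardEq cardM
  set u₀ : (Fin (d * k * j) × Good r k) ⊕ Fin m₁ → Good r k := Sum.elim Prod.snd u₁ with hu₀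
  set c₀ : (Fin (r * G * j) × Fin k) ⊕ Fin n₁ → Fin k := Sum.elim Prod.snd c₁ with hc₀
  have hcntid : ∀ {K : Type} [Fintype K] [DecidableEq K] (κ : K), cnt (fun x : K => x) κ = 1 := by
    intro K _ _ κ
    exact Finset.card_eq_one.2 ⟨κ, by ext; simp⟩
  have hcu : ∀ τ, cnt (u₀ ∘ EM) τ = d * k * j + cnt u₁ τ := by
    intro τ
    rw [cnt_equiv, cnt_sum, hu₀, Sum.elim_comp_inl, Sum.elim_comp_inr]
    have := cnt_prod_snd (A := Fin (d * k * j)) (fun x : Good r k => x) τ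
    rw [hcntid, Fintype.card_fin, mul_one] at this
    exact congrArg (· + cnt u₁ τ) this
  have hcc : ∀ i, cnt (c₀ ∘ EN) i = r * G * j + cnt c₁ i := by
    intro i
    rw [cnt_equiv, cnt_sum, hc₀, Sum.elim_comp_inl, Sum.elim_comp_inr]
    have := cnt_prod_snd (A := Fin (r * G * j)) (fun x : Fin k => x) i
    rw [hcntid, Fintype.card_fin, mul_one] at this
    exact congrArg (· + cnt c₁ i) this
  refine ⟨u₀ ∘ EM, c₀ ∘ EN, fun τ => ?_, fun i => ?_, fun i => ?_⟩
  · rw [hcu]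
    have h1 : cnt u₁ τ ≤ m₁ := by
      have := Finset.card_le_univ (univ.filter (fun s => u₁ s = τ))
      simpa [cnt] using this
    have h2 : m₁ ≤ d * n₁ := by rw [← hm1n]; exact Nat.le_mul_of_pos_right _ (by omega)
    have h3 : d * n₁ ≤ d * (2 * M) := Nat.mul_le_mul_left _ hn2.le
    have h4 : (cnt u₁ τ : ℝ) ≤ d * (2 * M) := by exact_mod_cast h1.trans (h2.trans h3)
    have h5 : ((d * k * j : ℕ) : ℝ) ≤ m / G := by
      rw [le_div_iff₀ (by exact_mod_cast hGpos)]
      exact_mod_cast (by omega : d * k * j * G ≤ m)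
    have hM0 : (0 : ℝ) ≤ M := by positivity
    push_cast at h5 ⊢
    linarith
  · rw [hcc]
    have h1 : cnt c₁ i ≤ n₁ := by
      have := Finset.card_le_univ (univ.filter (fun s => c₁ s = i))
      simpa [cnt] using this
    have h4 : (cnt c₁ i : ℝ) ≤ 2 * M := by exact_mod_cast h1.trans hn2.le
    have h5 : ((r * G * j : ℕ) : ℝ) ≤ n / k := by
      rw [le_div_iff₀ (by positivity)]
      have : r * G * j * k ≤ n := by rw [hnj, hM]; nlinarith
      exact_mod_cast this
    have hM0 : (0 : ℝ) ≤ d * (2 * M) := by positivity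
    push_cast at h5 ⊢
    linarith
  · rw [hcc]
    have e1 : cnt (fun s : Fin m × Fin r => ((u₀ ∘ EM) s.1).1 s.2) i =
        cnt (fun s : ((Fin (d * k * j) × Good r k) ⊕ Fin m₁) × Fin r => (u₀ s.1).1 s.2) i :=
      cnt_equiv (EM.prodCongr (Equiv.refl (Fin r)))
        (fun s : ((Fin (d * k * j) × Good r k) ⊕ Fin m₁) × Fin r => (u₀ s.1).1 s.2) i
    rw [e1, ← cnt_equiv (Equiv.sumProdDistrib _ _ (Fin r)).symm, cnt_sum]
    have e2 : cnt (((fun s : ((Fin (d * k * j) × Good r k) ⊕ Fin m₁) × Fin r => (u₀ s.1).1 s.2) ∘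
        (Equiv.sumProdDistrib _ _ (Fin r)).symm) ∘ Sum.inr) i = d * cnt c₁ i := h₁ i
    have e3 : cnt (((fun s : ((Fin (d * k * j) × Good r k) ⊕ Fin m₁) × Fin r => (u₀ s.1).1 s.2) ∘
        (Equiv.sumProdDistrib _ _ (Fin r)).symm) ∘ Sum.inl) i =
        d * k * j * cnt (fun p : Good r k × Fin r => p.1.1 p.2) i := by
      have h1 := cnt_equiv (Equiv.prodAssoc (Fin (d * k * j)) (Good r k) (Fin r))
        (fun p : Fin (d * k * j) × (Good r k × Fin r) => p.2.1.1 p.2.2) i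
      rw [cnt_prod_snd (fun p : Good r k × Fin r => p.1.1 p.2), Fintype.card_fin] at h1
      exact h1
    rw [e2, e3]
    have h6 := cnt_good r k i
    rw [← hG] at h6
    calc d * k * j * cnt (fun p : Good r k × Fin r => p.1.1 p.2) i + d * cnt c₁ i
        = d * j * (k * cnt (fun p : Good r k × Fin r => p.1.1 p.2) i) + d * cnt c₁ i := by ring
      _ = _ := by rw [h6]; ring

end Construction

/-! ### Colorability with inverse polynomial probability -/

section InversePoly

lemma card_good_real (r k : ℕ) (hr : 1 ≤ r) (hk : 1 ≤ k) :
    (Fintype.card (Good r k) : ℝ) = (1 - monoProb k r) * (k : ℝ) ^ r := by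
  have h : (Fintype.card (Good r k) : ℝ) + k = (k : ℝ) ^ r := by exact_mod_cast card_good r k hr
  have hk0 : (k : ℝ) ≠ 0 := by positivity
  obtain ⟨j, rfl⟩ : ∃ j, r = j + 1 := ⟨r - 1, by omega⟩
  have e : monoProb k (j + 1) * (k : ℝ) ^ (j + 1) = k := by
    unfold monoProb
    rw [Nat.add_sub_cancel, pow_succ]
    field_simp
  rw [sub_mul, one_mul, e]
  linarith

lemma loss_mono {N N' : ℕ} (h : N ≤ N') (k : ℕ) : loss N k ≤ loss N' k := by
  unfold loss
  have : (N : ℝ) ≤ N' := by exact_mod_cast h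
  gcongr

/-- A single nearly balanced coloring is proper with probability `(1 - q) ^ m`, up to polynomial factors:
rearrangements of the rows of one good word give sufficiently many good words. -/
lemma permProb_rowProper_ge {r d k m n : ℕ} (hr : 2 ≤ r) (hk : 3 ≤ k) (hm : 1 ≤ m) {C : ℝ} (hC : 0 ≤ C)
    (u : Fin m → Good r k) (hu : ∀ τ, (cnt u τ : ℝ) ≤ (m : ℝ) / Fintype.card (Good r k) + C)
    (c₀ c : Fin n → Fin k) (hc : cnt c = cnt c₀)
    (h : ∀ i, cnt (fun s : Fin m × Fin r => (u s.1).1 s.2) i = d * cnt c₀ i)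
    (f : Fin m × Fin r → Fin n) (hf : ∀ v, cnt f v = d) :
    (1 - monoProb k r) ^ m ≤ loss m (Fintype.card (Good r k)) * exp (C * Fintype.card (Good r k)) *
      permProb (fun σ => RowProper ((c ∘ f) ∘ σ)) := by
  have : Nonempty (Fin m) := ⟨⟨0, hm⟩⟩
  have : Nonempty (Good r k) := ⟨u ⟨0, hm⟩⟩
  have h1 := card_words_ge u C hC (by simpa using hu)
  have h2 := permProb_ge_card (c ∘ f) (fun w => RowProper w)
  simp only [Fintype.card_fin, Fintype.card_prod] at h1 h2
  have h3 : (univ.filter (fun w : Fin m → Good r k => cnt w = cnt u)).card ≤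
      (univ.filter (fun w : Fin m × Fin r → Fin k => cnt w = cnt (c ∘ f) ∧ RowProper w)).card := by
    refine Finset.card_le_card_of_injOn (fun u' s => (u' s.1).1 s.2) ?_ ?_
    · intro u' hu'
      simp only [coe_filter, mem_univ, true_and, Set.mem_ofPred_eq] at hu' ⊢
      refine ⟨?_, fun e => (u' e).2⟩
      obtain ⟨σ, rfl⟩ := exists_perm_of_cnt_eq u u' hu'
      funext i
      rw [cnt_comp_word f hf, hc, ← h i]
      exact cnt_equiv (Equiv.prodCongr σ (Equiv.refl (Fin r)))
        (fun s : Fin m × Fin r => (u s.1).1 s.2) i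
    · intro u' _ u'' _ he
      funext e
      exact Subtype.ext (funext fun i => congrFun he (e, i))
  have h3' : ((univ.filter (fun w : Fin m → Good r k => cnt w = cnt u)).card : ℝ) ≤
      (univ.filter (fun w : Fin m × Fin r → Fin k => cnt w = cnt (c ∘ f) ∧ RowProper w)).card := by
    exact_mod_cast h3
  have hk0 : (0 : ℝ) < (k : ℝ) ^ (m * r) := by positivity
  have hL : 0 ≤ loss m (Fintype.card (Good r k)) * exp (C * Fintype.card (Good r k)) := by
    have := (loss_pos m (Fintype.card (Good r k))).le
    positivity
  have h4 : (1 - monoProb k r) ^ m * (k : ℝ) ^ (m * r) =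
      (Fintype.card (Good r k) : ℝ) ^ m := by
    rw [card_good_real r k (by omega) (by omega), mul_pow, ← pow_mul, mul_comm r m]
  refine le_of_mul_le_mul_right ?_ hk0
  rw [h4]
  refine h1.trans ?_
  have h5 := h3'.trans h2
  calc _ ≤ loss m (Fintype.card (Good r k)) * exp (C * Fintype.card (Good r k)) *
        ((k : ℝ) ^ (m * r) * permProb (fun σ => RowProper ((c ∘ f) ∘ σ))) :=
        mul_le_mul_of_nonneg_left (by convert h5) hL
    _ = _ := by ring

/-- The second moment method: a proper `k`-coloring exists with at least inverse polynomial probability. -/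
lemma exists_proper_inv_poly (r d k : ℕ) (hr : 2 ≤ r) (hd : 1 ≤ d) (hk : 3 ≤ k) (η : ℝ) (hη : 0 < η)
    (hq : monoProb k r < 1)
    (hT : TermIneq r k (d / r * monoProb k r / (1 - monoProb k r) ^ 2) η) :
    ∃ g : ℕ → ℝ, PolyBound g ∧ (∀ n, 0 < g n) ∧ ∃ n₀, ∀ n, n₀ ≤ n → ∀ m, m * r = d * n →
      ∀ f : Fin m × Fin r → Fin n, (∀ v, cnt f v = d) →
        1 ≤ g n * permProb (fun σ => ∃ c : Fin n → Fin k, RowProper (c ∘ (f ∘ σ))) := by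
  obtain ⟨C, n₁, hC, hbal⟩ := exists_balanced r d k hr hk
  set G := Fintype.card (Good r k) with hG
  set A : ℕ → ℝ := fun n => (loss (1 * n) k * exp (C * k)) * (loss (d * n) G * exp (C * G)) with hA
  have hA0 : ∀ n, 0 < A n := by
    intro n
    have h1 := loss_pos (1 * n) k
    have h2 := loss_pos (d * n) G
    simp only [hA]
    positivity
  set B : ℕ → ℝ := fun n => loss (d * n) (k * k) * loss (1 * n) (k * k) with hB
  have hB0 : ∀ n, 0 < B n := fun n => mul_pos (loss_pos _ _) (loss_pos _ _)
  have hAp : PolyBound A :=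
    ((PolyBound.loss 1 k).mul (PolyBound.const (exp (C * k))) (fun _ => (exp_pos _).le)).mul
      ((PolyBound.loss d G).mul (PolyBound.const (exp (C * G))) (fun _ => (exp_pos _).le))
      (fun n => mul_nonneg (loss_pos _ _).le (exp_pos _).le)
  have hBp : PolyBound B :=
    (PolyBound.loss d (k * k)).mul (PolyBound.loss 1 (k * k)) (fun n => (loss_pos _ _).le)
  refine ⟨fun n => (A n * A n) * B n, (hAp.mul hAp fun n => (hA0 n).le).mul hBp fun n => (hB0 n).le,
    fun n => mul_pos (mul_pos (hA0 n) (hA0 n)) (hB0 n), max (max n₁ 1) ⌈k * C / η⌉₊, ?_⟩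
  intro n hn m hmn f hf
  have hn1 : n₁ ≤ n := le_trans (le_trans (le_max_left _ _) (le_max_left _ _)) hn
  have hn2 : 1 ≤ n := le_trans (le_trans (le_max_right _ _) (le_max_left _ _)) hn
  have hn3 : k * C ≤ η * n := by
    have h1 : k * C / η ≤ n := (Nat.le_ceil _).trans (by exact_mod_cast le_trans (le_max_right _ _) hn)
    rw [div_le_iff₀ hη] at h1
    linarith
  have hm1 : 1 ≤ m := by
    rcases Nat.eq_zero_or_pos m with h | h
    · subst h
      have : 1 ≤ d * n := Nat.mul_pos hd hn2
      omega
    · exact h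
  have hmd : m ≤ d * n := by rw [← hmn]; exact Nat.le_mul_of_pos_right _ (by omega)
  obtain ⟨u, c₀, hu, hc, huc⟩ := hbal n hn1 m hmn
  have : Nonempty (Fin n) := ⟨⟨0, hn2⟩⟩
  have : Nonempty (Fin k) := ⟨⟨0, by omega⟩⟩
  have hk0 : (0 : ℝ) < k := by positivity
  set J := univ.filter (fun c : Fin n → Fin k => cnt c = cnt c₀) with hJ
  have hJn : J ⊆ nearlyBalanced n k η := by
    intro c hcJ
    simp only [hJ, mem_filter, mem_univ, true_and] at hcJ
    simp only [nearlyBalanced, mem_filter, mem_univ, true_and]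
    intro i
    rw [hcJ]
    have h1 := mul_le_mul_of_nonneg_left (hc i) hk0.le
    have h2 : (k : ℝ) * ((n : ℝ) / k + C) = n + k * C := by field_simp
    rw [h2] at h1
    linarith
  have hJc := card_words_ge c₀ C hC (by simpa using hc)
  simp only [Fintype.card_fin] at hJc
  set P : (Fin n → Fin k) → Equiv.Perm (Fin m × Fin r) → Prop := fun c σ => RowProper ((c ∘ f) ∘ σ) with hP
  set I := nearlyBalanced n k η with hI
  set Q := (1 - monoProb k r) ^ m * (k : ℝ) ^ n with hQ
  have hQ0 : 0 < Q := by
    have : 0 < 1 - monoProb k r := by linarith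
    positivity
  have hsum : Q ≤ A n * ∑ c ∈ I, permProb (P c) := by
    have h1 : (J.card : ℝ) * (1 - monoProb k r) ^ m ≤
        (loss (d * n) G * exp (C * G)) * ∑ c ∈ I, permProb (P c) := by
      calc (J.card : ℝ) * (1 - monoProb k r) ^ m = ∑ c ∈ J, (1 - monoProb k r) ^ m := by simp
        _ ≤ ∑ c ∈ J, (loss (d * n) G * exp (C * G)) * permProb (P c) := by
          refine Finset.sum_le_sum fun c hcJ => ?_
          simp only [hJ, mem_filter, mem_univ, true_and] at hcJ
          refine (permProb_rowProper_ge hr hk hm1 hC u hu c₀ c hcJ huc f hf).trans ?_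
          refine mul_le_mul_of_nonneg_right ?_ (permProb_nonneg _)
          exact mul_le_mul_of_nonneg_right (loss_mono hmd _) (exp_pos _).le
        _ ≤ ∑ c ∈ I, (loss (d * n) G * exp (C * G)) * permProb (P c) :=
          Finset.sum_le_sum_of_subset_of_nonneg hJn fun c _ _ =>
            mul_nonneg (mul_nonneg (loss_pos _ _).le (exp_pos _).le) (permProb_nonneg _)
        _ = _ := by rw [Finset.mul_sum]
    have h2 : (k : ℝ) ^ n ≤ loss (1 * n) k * exp (C * k) * J.card := by
      rw [one_mul]; convert hJc
    have h3 : 0 ≤ (1 - monoProb k r) ^ m := pow_nonneg (by linarith) _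
    have h4 : 0 ≤ loss (1 * n) k * exp (C * k) := mul_nonneg (loss_pos _ _).le (exp_pos _).le
    calc Q ≤ (1 - monoProb k r) ^ m * (loss (1 * n) k * exp (C * k) * J.card) :=
          mul_le_mul_of_nonneg_left h2 h3
      _ = (loss (1 * n) k * exp (C * k)) * (J.card * (1 - monoProb k r) ^ m) := by ring
      _ ≤ (loss (1 * n) k * exp (C * k)) * ((loss (d * n) G * exp (C * G)) * ∑ c ∈ I, permProb (P c)) :=
          mul_le_mul_of_nonneg_left h1 h4
      _ = _ := by simp only [hA]; ring
  have hup := second_moment_upper (by omega) hd (by omega) hn2 hmn hq η hT f hf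
  have hsm := permProb_second_moment I P
  have hn1' : ((n : ℝ) + 1) ^ (k * k) ≤ loss (1 * n) (k * k) := by
    unfold loss
    rw [one_mul]
    have : 1 ≤ exp 1 := one_le_exp (by norm_num)
    have h0 : (0 : ℝ) ≤ n + 1 := by positivity
    gcongr
    nlinarith
  set p := permProb (fun σ => ∃ i ∈ I, P i σ) with hp
  have hp0 : 0 ≤ p := permProb_nonneg _
  have hup2 : ∑ q ∈ I ×ˢ I, permProb (fun σ => P q.1 σ ∧ P q.2 σ) ≤ B n * Q ^ 2 := by
    refine hup.trans ?_
    refine mul_le_mul_of_nonneg_right ?_ (sq_nonneg _)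
    exact mul_le_mul_of_nonneg_left hn1' (loss_pos _ _).le
  have hfin : Q ^ 2 ≤ (A n * A n) * B n * p * Q ^ 2 := by
    calc Q ^ 2 ≤ (A n * ∑ c ∈ I, permProb (P c)) ^ 2 := by gcongr
      _ = A n * A n * (∑ c ∈ I, permProb (P c)) ^ 2 := by ring
      _ ≤ A n * A n * (p * (B n * Q ^ 2)) := by
        refine mul_le_mul_of_nonneg_left (hsm.trans (mul_le_mul_of_nonneg_left hup2 hp0)) ?_
        exact mul_nonneg (hA0 n).le (hA0 n).le
      _ = _ := by ring
  have h1 : 1 ≤ (A n * A n) * B n * p := by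
    have hQ2 : 0 < Q ^ 2 := by positivity
    by_contra hlt
    push Not at hlt
    nlinarith
  refine h1.trans ?_
  refine mul_le_mul_of_nonneg_left (permProb_mono ?_) (mul_pos (mul_pos (hA0 n) (hA0 n)) (hB0 n)).le
  rintro σ ⟨c, _, hcσ⟩
  exact ⟨c, hcσ⟩

end InversePoly

/-! ### Few monochromatic rows, by concentration -/

section FewMono

lemma card_monoRows_swap_le {m r n k : ℕ} (f : Fin m × Fin r → Fin n) (c : Fin n → Fin k)
    (σ : Equiv.Perm (Fin m × Fin r)) (a b : Fin m × Fin r) :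
    (monoRows (c ∘ (f ∘ (Equiv.swap a b * σ : Equiv.Perm (Fin m × Fin r))))).card ≤
      (monoRows (c ∘ (f ∘ σ))).card + 2 := by
  have hsub : monoRows (c ∘ (f ∘ (Equiv.swap a b * σ : Equiv.Perm (Fin m × Fin r)))) ⊆
      monoRows (c ∘ (f ∘ σ)) ∪ {(σ⁻¹ a).1, (σ⁻¹ b).1} := by
    intro e he
    by_cases h1 : e = (σ⁻¹ a).1
    · simp [h1]
    by_cases h2 : e = (σ⁻¹ b).1
    · simp [h2]
    refine Finset.mem_union_left _ ?_
    have hsame : ∀ i, (Equiv.swap a b * σ : Equiv.Perm (Fin m × Fin r)) (e, i) = σ (e, i) := by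
      intro i
      rw [Equiv.Perm.mul_apply]
      refine Equiv.swap_apply_of_ne_of_ne ?_ ?_
      · rintro rfl
        simp at h1
      · rintro rfl
        simp at h2
    rw [monoRows, mem_filter] at he ⊢
    refine ⟨mem_univ _, ?_⟩
    have he2 := he.2
    simp only [NonMono, Function.comp, hsame] at he2 ⊢
    exact he2
  refine (Finset.card_le_card hsub).trans ((Finset.card_union_le _ _).trans ?_)
  exact Nat.add_le_add_left Finset.card_le_two _

/-- The least number of monochromatic rows over all colorings is concentrated, and it is zero with inverse
polynomial probability, so it is almost surely smaller than `γ * n`. -/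
lemma rare_many_mono (r d k : ℕ) (hr : 2 ≤ r) (hd : 1 ≤ d) (hk : 3 ≤ k) (η : ℝ) (hη : 0 < η)
    (hq : monoProb k r < 1)
    (hT : TermIneq r k (d / r * monoProb k r / (1 - monoProb k r) ^ 2) η) (γ : ℝ) (hγ : 0 < γ) :
    Rare r d (fun _ n g => ∀ c : Fin n → Fin k, γ * n ≤ (monoRows (c ∘ g)).card) := by
  obtain ⟨G, hGp, hG0, n₁, hG⟩ := exists_proper_inv_poly r d k hr hd hk η hη hq hT
  intro δ hδ
  have hd0 : (0 : ℝ) < d := by exact_mod_cast hd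
  set β := γ ^ 2 / (128 * d) with hβ
  have hβ0 : 0 < β := by positivity
  obtain ⟨n₂, hn₂⟩ := hGp.mul_exp_small hβ0 (show (0 : ℝ) < 1 / 2 by norm_num)
  obtain ⟨n₃, hn₃⟩ := (PolyBound.const 1).mul_exp_small hβ0 hδ
  refine ⟨max (max n₁ n₂) (max n₃ 1), fun n hn m hmn f hf => ?_⟩
  simp only [max_le_iff] at hn
  obtain ⟨⟨hn1, hn2⟩, hn3, hn4⟩ := hn
  have hpos : (0 : ℝ) < n := by exact_mod_cast hn4
  have hne : (univ : Finset (Fin n → Fin k)).Nonempty := ⟨fun _ => ⟨0, by omega⟩, mem_univ _⟩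
  set Y : Equiv.Perm (Fin m × Fin r) → ℕ :=
    fun σ => univ.inf' hne (fun c : Fin n → Fin k => (monoRows (c ∘ (f ∘ σ))).card) with hY
  have hstep : ∀ σ a b, Y (Equiv.swap a b * σ) ≤ Y σ + 2 := by
    intro σ a b
    obtain ⟨c, _, hc⟩ := Finset.exists_mem_eq_inf' hne
      (fun c : Fin n → Fin k => (monoRows (c ∘ (f ∘ σ))).card)
    have h1 : Y σ = (monoRows (c ∘ (f ∘ σ))).card := hc
    rw [h1]
    exact (Finset.inf'_le _ (mem_univ c)).trans (card_monoRows_swap_le f c σ a b)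
  have hstep2 : ∀ σ a b, Y σ ≤ Y (Equiv.swap a b * σ) + 2 := by
    intro σ a b
    have := hstep (Equiv.swap a b * σ) a b
    rwa [← mul_assoc, Equiv.swap_mul_self, one_mul] at this
  have hcard : (Fintype.card (Fin m × Fin r) : ℝ) = d * n := by
    simp only [Fintype.card_prod, Fintype.card_fin]
    exact_mod_cast hmn
  have hexp : (γ * n / 2) ^ 2 / (32 * (Fintype.card (Fin m × Fin r) : ℝ)) = β * n := by
    rw [hcard, hβ]
    field_simp
    ring
  have hconc := permProb_concentration (fun σ => (Y σ : ℝ)) (fun σ a b => by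
      have h1 : (Y (Equiv.swap a b * σ) : ℝ) ≤ Y σ + 2 := by exact_mod_cast hstep σ a b
      have h2 : (Y σ : ℝ) ≤ Y (Equiv.swap a b * σ) + 2 := by exact_mod_cast hstep2 σ a b
      rw [abs_le]
      constructor <;> linarith) (γ * n / 2) (1 / G n) (by positivity) ?_ ?_ ?_
  · rw [hexp] at hconc
    have h3 := hn₃ n hn3
    rw [one_mul] at h3
    refine (permProb_mono fun σ hσ => ?_).trans (hconc.trans h3)
    obtain ⟨c, _, hc⟩ := Finset.exists_mem_eq_inf' hne
      (fun c : Fin n → Fin k => (monoRows (c ∘ (f ∘ σ))).card)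
    have h1 : Y σ = (monoRows (c ∘ (f ∘ σ))).card := hc
    show 2 * (γ * n / 2) ≤ (Y σ : ℝ)
    rw [h1]
    linarith [hσ c]
  · rw [div_le_iff₀ (hG0 n), mul_comm]
    refine (hG n hn1 m hmn f hf).trans (mul_le_mul_of_nonneg_left (permProb_mono ?_) (hG0 n).le)
    rintro σ ⟨c, hc⟩
    have h1 : (monoRows (c ∘ (f ∘ σ))).card = 0 := by
      rw [Finset.card_eq_zero, Finset.eq_empty_iff_forall_notMem]
      intro e he
      simp only [monoRows, mem_filter, mem_univ, true_and] at he
      exact he (hc e)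
    have h2 : Y σ ≤ (monoRows (c ∘ (f ∘ σ))).card := Finset.inf'_le _ (mem_univ c)
    have h3 : Y σ = 0 := by omega
    simp [h3]
  · rw [hexp, lt_div_iff₀ (hG0 n)]
    have := hn₂ n hn2
    linarith
  · simp only [Fintype.card_prod, Fintype.card_fin, hmn]
    exact Nat.mul_pos hd hn4

/-- Repairing a nearly proper coloring on a sparse hypergraph costs `5 * r` additional colors. -/
lemma rare_not_colorable (r d k : ℕ) (hr : 2 ≤ r) (hd : 1 ≤ d) (hk : 3 ≤ k) (η : ℝ) (hη : 0 < η)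
    (hq : monoProb k r < 1)
    (hT : TermIneq r k (d / r * monoProb k r / (1 - monoProb k r) ^ 2) η) :
    Rare r d (fun _ n g => (∀ e, NonMono (fun i => g (e, i))) ∧
      ¬ ∃ c : Fin n → Fin (k + 5 * r), RowProper (c ∘ g)) := by
  obtain ⟨γ, hγ, hdense⟩ := rare_dense r d hr hd
  have hmany := rare_many_mono r d k hr hd hk η hη hq hT γ hγ
  intro δ hδ
  obtain ⟨n₁, h₁⟩ := hdense (δ / 2) (by positivity)
  obtain ⟨n₂, h₂⟩ := hmany (δ / 2) (by positivity)
  refine ⟨max n₁ n₂, fun n hn m hmn f hf => ?_⟩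
  have h1 := h₁ n (le_trans (le_max_left _ _) hn) m hmn f hf
  have h2 := h₂ n (le_trans (le_max_right _ _) hn) m hmn f hf
  refine (permProb_mono ?_).trans ((permProb_or_le _ _).trans ((add_le_add h1 h2).trans (by linarith)))
  rintro σ ⟨hnm, hno⟩
  by_contra hcon
  push Not at hcon
  obtain ⟨hs, c, hc⟩ := hcon
  refine hno (exists_proper_of_few_mono (by omega) (f ∘ σ) hnm c fun W hW hWn => hs W hWn ?_)
  have : (W.card : ℝ) ≤ (monoRows (c ∘ (f ∘ σ))).card := by exact_mod_cast hW
  linarith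

end FewMono

/-! ### From random words to random regular hypergraphs -/

section Transfer

variable {m n r d : ℕ}

/-- The set of vertices in row `e` of the word `g`. -/
noncomputable def rowSet (g : Fin m × Fin r → Fin n) (e : Fin m) : Finset (Fin n) :=
  univ.image (fun i => g (e, i))

/-- The rows of `g` consist of distinct vertices and have distinct underlying sets. -/
def SimpleWord (g : Fin m × Fin r → Fin n) : Prop :=
  (∀ e, Function.Injective (fun i => g (e, i))) ∧ Function.Injective (rowSet g)

/-- The hypergraph whose edges are the rows of `g`. -/
noncomputable def edgesOf (g : Fin m × Fin r → Fin n) : Finset (Finset (Fin n)) :=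
  univ.image (rowSet g)

lemma mem_rowSet (g : Fin m × Fin r → Fin n) (e : Fin m) (v : Fin n) :
    v ∈ rowSet g e ↔ ∃ i, g (e, i) = v := by simp [rowSet]

lemma mem_edgesOf (g : Fin m × Fin r → Fin n) (E : Finset (Fin n)) :
    E ∈ edgesOf g ↔ ∃ e, rowSet g e = E := by simp [edgesOf]

lemma simpleWord_of_defects (hr : 2 ≤ r) (g : Fin m × Fin r → Fin n) (h : defects g = ∅) : SimpleWord g := by
  have hno : ∀ a b c e, ¬ (a ≠ b ∧ a.1 = b.1 ∧ c ≠ e ∧ c.1 = e.1 ∧ a ≠ c ∧ g a = g c ∧ g b = g e) := by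
    intro a b c e hq
    have := (mem_defects g a b c e).2 hq
    rw [h] at this
    exact absurd this (Finset.notMem_empty _)
  have hinj : ∀ e, Function.Injective (fun i => g (e, i)) := by
    intro e i j hij
    by_contra hne
    have h1 : ((e, i) : Fin m × Fin r) ≠ (e, j) := fun hh => hne (Prod.ext_iff.1 hh).2
    exact hno (e, i) (e, j) (e, j) (e, i) ⟨h1, rfl, h1.symm, rfl, h1, hij, hij.symm⟩
  refine ⟨hinj, fun e e' hee => ?_⟩
  by_contra hne
  have hex : ∀ i, ∃ j, g (e', j) = g (e, i) := by
    intro i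
    rw [← mem_rowSet, ← hee, mem_rowSet]
    exact ⟨i, rfl⟩
  obtain ⟨j0, h0⟩ := hex ⟨0, by omega⟩
  obtain ⟨j1, h1⟩ := hex ⟨1, by omega⟩
  have hne01 : ((e, ⟨0, by omega⟩) : Fin m × Fin r) ≠ (e, ⟨1, by omega⟩) := by simp
  refine hno (e, ⟨0, by omega⟩) (e, ⟨1, by omega⟩) (e', j0) (e', j1)
    ⟨hne01, rfl, ?_, rfl, fun hh => hne (Prod.ext_iff.1 hh).1, h0.symm, h1.symm⟩
  intro hh
  have hj : j0 = j1 := (Prod.ext_iff.1 hh).2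
  rw [hj, h1] at h0
  have := hinj e h0
  simp at this

lemma card_rowSet {g : Fin m × Fin r → Fin n} (hg : SimpleWord g) (e : Fin m) : (rowSet g e).card = r := by
  rw [rowSet, Finset.card_image_of_injective _ (hg.1 e), Finset.card_univ, Fintype.card_fin]

/-- In a simple word the degree of a vertex is the number of its occurrences. -/
lemma degree_edgesOf {g : Fin m × Fin r → Fin n} (hg : SimpleWord g) (v : Fin n) :
    ((edgesOf g).filter (fun E => v ∈ E)).card = cnt g v := by
  unfold cnt
  symm
  refine Finset.card_bij (fun s _ => rowSet g s.1) ?_ ?_ ?_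
  · rintro ⟨e, i⟩ hs
    simp only [mem_filter, mem_univ, true_and] at hs ⊢
    exact ⟨(mem_edgesOf _ _).2 ⟨e, rfl⟩, (mem_rowSet _ _ _).2 ⟨i, hs⟩⟩
  · rintro ⟨e, i⟩ hs ⟨e', i'⟩ hs' heq
    simp only [mem_filter, mem_univ, true_and] at hs hs'
    have h1 : e = e' := hg.2 heq
    subst h1
    have h2 : i = i' := hg.1 e (hs.trans hs'.symm)
    rw [h2]
  · intro E hE
    simp only [mem_filter, mem_edgesOf] at hE
    obtain ⟨⟨e, rfl⟩, hv⟩ := hE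
    obtain ⟨i, hi⟩ := (mem_rowSet _ _ _).1 hv
    exact ⟨(e, i), by simpa using hi, rfl⟩

lemma edgesOf_mem {g : Fin m × Fin r → Fin n} (hg : SimpleWord g) :
    edgesOf g ∈ regularFamily n r d ↔ ∀ v, cnt g v = d := by
  simp only [regularFamily, mem_filter, mem_univ, true_and]
  constructor
  · rintro ⟨_, h⟩ v
    rw [← degree_edgesOf hg, ← h v]
  · intro h
    refine ⟨fun E hE => ?_, fun v => ?_⟩
    · obtain ⟨e, rfl⟩ := (mem_edgesOf _ _).1 hE
      exact card_rowSet hg e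
    · rw [← h v, ← degree_edgesOf hg]

lemma card_of_regular (hr : 1 ≤ r) (hmn : m * r = d * n) {E : Finset (Finset (Fin n))}
    (hE : E ∈ regularFamily n r d) : E.card = m := by
  simp only [regularFamily, mem_filter, mem_univ, true_and] at hE
  have h1 : ∑ e ∈ E, e.card = E.card * r := Finset.sum_const_nat hE.1
  have h2 : ∑ e ∈ E, e.card = ∑ v : Fin n, (E.filter (fun e => v ∈ e)).card := by
    simp only [Finset.card_filter]
    rw [Finset.sum_comm]
    refine Finset.sum_congr rfl fun e _ => ?_
    simp
  rw [h1, Finset.sum_const_nat (m := d) (fun v _ => hE.2 v)] at h2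
  simp only [card_univ, Fintype.card_fin] at h2
  rw [mul_comm n d, ← hmn] at h2
  exact Nat.eq_of_mul_eq_mul_right (by omega) h2

lemma exists_word_of_regular (hr : 1 ≤ r) (hmn : m * r = d * n) {E : Finset (Finset (Fin n))}
    (hE : E ∈ regularFamily n r d) : ∃ g : Fin m × Fin r → Fin n, SimpleWord g ∧ edgesOf g = E := by
  have hcard := card_of_regular hr hmn hE
  simp only [regularFamily, mem_filter, mem_univ, true_and] at hE
  let α := (E.equivFinOfCardEq hcard).symm
  let g : Fin m × Fin r → Fin n := fun s => (α s.1).1.orderEmbOfFin (hE.1 _ (α s.1).2) s.2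
  have hrow : ∀ e, rowSet g e = (α e).1 := by
    intro e
    ext v
    rw [mem_rowSet]
    have : v ∈ Set.range ((α e).1.orderEmbOfFin (hE.1 _ (α e).2)) ↔ v ∈ (α e).1 := by
      rw [Finset.range_orderEmbOfFin]; simp
    rw [← this]
    rfl
  refine ⟨g, ⟨fun e i j hij => ?_, fun e e' hee => ?_⟩, ?_⟩
  · exact ((α e).1.orderEmbOfFin (hE.1 _ (α e).2)).injective hij
  · rw [hrow, hrow] at hee
    exact α.injective (Subtype.ext hee)
  · ext x
    rw [mem_edgesOf]
    constructor
    · rintro ⟨e, rfl⟩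
      rw [hrow]
      exact (α e).2
    · intro hx
      refine ⟨α.symm ⟨x, hx⟩, ?_⟩
      rw [hrow, Equiv.apply_symm_apply]

/-- Every regular hypergraph is represented by the same number of simple words, one for each
way of ordering the edges and the vertices in each edge. -/
lemma card_words_of_regular (hr : 1 ≤ r) (hmn : m * r = d * n) {E : Finset (Finset (Fin n))}
    (hE : E ∈ regularFamily n r d) :
    (univ.filter (fun g : Fin m × Fin r → Fin n => SimpleWord g ∧ edgesOf g = E)).card =
      Fintype.card (Equiv.Perm (Fin m) × (Fin m → Equiv.Perm (Fin r))) := by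
  obtain ⟨g₀, hg₀, hE₀⟩ := exists_word_of_regular hr hmn hE
  rw [← Finset.card_univ]
  symm
  have hrow : ∀ (q : Equiv.Perm (Fin m) × (Fin m → Equiv.Perm (Fin r))) (e : Fin m),
      rowSet (fun s : Fin m × Fin r => g₀ (q.1 s.1, q.2 s.1 s.2)) e = rowSet g₀ (q.1 e) := by
    intro q e
    ext v
    rw [mem_rowSet, mem_rowSet]
    constructor
    · rintro ⟨i, hi⟩
      exact ⟨_, hi⟩
    · rintro ⟨i, hi⟩
      refine ⟨(q.2 e).symm i, ?_⟩
      simpa using hi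
  refine Finset.card_bij (fun q _ s => g₀ (q.1 s.1, q.2 s.1 s.2)) ?_ ?_ ?_
  · intro q _
    simp only [mem_filter, mem_univ, true_and]
    refine ⟨⟨fun e i j hij => (q.2 e).injective (hg₀.1 _ hij), fun e e' hee => ?_⟩, ?_⟩
    · rw [hrow, hrow] at hee
      exact q.1.injective (hg₀.2 hee)
    · rw [← hE₀]
      ext x
      simp only [mem_edgesOf, hrow]
      exact ⟨fun ⟨e, he⟩ => ⟨_, he⟩, fun ⟨e, he⟩ => ⟨q.1.symm e, by simpa using he⟩⟩
  · intro q _ q' _ heq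
    have h1 : q.1 = q'.1 := by
      ext1 e
      refine hg₀.2 ?_
      rw [← hrow q e, ← hrow q' e]
      exact congrArg (fun g => rowSet g e) heq
    refine Prod.ext h1 ?_
    funext e
    ext1 i
    have h2 := congrFun heq (e, i)
    simp only [h1] at h2
    exact hg₀.1 _ h2
  · intro g hg
    simp only [mem_filter, mem_univ, true_and] at hg
    obtain ⟨hgs, hgE⟩ := hg
    have hpi : ∀ e, ∃ e', rowSet g₀ e' = rowSet g e := by
      intro e
      rw [← mem_edgesOf, hE₀, ← hgE, mem_edgesOf]
      exact ⟨e, rfl⟩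
    choose ϖ hϖ using hpi
    have hϖi : Function.Injective ϖ := by
      intro e e' hee
      refine hgs.2 ?_
      rw [← hϖ, ← hϖ, hee]
    have hrho : ∀ e i, ∃ j, g₀ (ϖ e, j) = g (e, i) := by
      intro e i
      rw [← mem_rowSet, hϖ, mem_rowSet]
      exact ⟨i, rfl⟩
    choose ρ hρ using hrho
    have hρi : ∀ e, Function.Injective (ρ e) := by
      intro e i j hij
      refine hgs.1 e ?_
      show g (e, i) = g (e, j)
      rw [← hρ, ← hρ, hij]
    refine ⟨(Equiv.ofBijective ϖ (Finite.injective_iff_bijective.1 hϖi),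
      fun e => Equiv.ofBijective (ρ e) (Finite.injective_iff_bijective.1 (hρi e))), mem_univ _, ?_⟩
    funext s
    exact hρ s.1 s.2

/-- Conditioned on being simple, a random word induces a uniformly random regular hypergraph. -/
lemma card_simple_perms (hr : 1 ≤ r) (hmn : m * r = d * n) (f : Fin m × Fin r → Fin n)
    (hf : ∀ v, cnt f v = d) (P : Finset (Finset (Fin n)) → Prop) :
    (univ.filter (fun σ : Equiv.Perm (Fin m × Fin r) =>
      SimpleWord (f ∘ σ) ∧ P (edgesOf (f ∘ σ)))).card =
      ((regularFamily n r d).filter (fun E => P E)).card *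
        (Fintype.card (Equiv.Perm (Fin m) × (Fin m → Equiv.Perm (Fin r))) * ∏ v, (cnt f v).factorial) := by
  have h1 := card_perm_filter f (fun g => SimpleWord g ∧ P (edgesOf g))
  have h2 : (univ.filter (fun g : Fin m × Fin r → Fin n =>
      cnt g = cnt f ∧ SimpleWord g ∧ P (edgesOf g))).card =
      ((regularFamily n r d).filter (fun E => P E)).card *
        Fintype.card (Equiv.Perm (Fin m) × (Fin m → Equiv.Perm (Fin r))) := by
    rw [Finset.card_eq_sum_card_fiberwise (f := fun g : Fin m × Fin r → Fin n => edgesOf g)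
      (t := (regularFamily n r d).filter (fun E => P E))]
    · refine Finset.sum_const_nat fun E hE => ?_
      rw [mem_filter] at hE
      rw [← card_words_of_regular hr hmn hE.1]
      congr 1
      ext g
      simp only [mem_filter, mem_univ, true_and]
      constructor
      · rintro ⟨⟨_, h1, _⟩, h2⟩
        exact ⟨h1, h2⟩
      · rintro ⟨h1, rfl⟩
        refine ⟨⟨?_, h1, hE.2⟩, rfl⟩
        funext v
        rw [hf v, (edgesOf_mem h1).1 hE.1 v]
    · intro g hg
      simp only [coe_filter, mem_univ, true_and, Set.mem_ofPred_eq] at hg ⊢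
      refine ⟨(edgesOf_mem hg.2.1).2 fun v => ?_, hg.2.2⟩
      rw [hg.1, hf v]
  rw [← mul_assoc, ← h2]
  refine Eq.trans ?_ (h1.trans ?_)
  · congr!
  · congr!

lemma permProb_def {S : Type*} [Fintype S] [DecidableEq S] (A : Equiv.Perm S → Prop) [DecidablePred A] :
    permProb A = ((univ.filter A).card : ℝ) / (univ : Finset (Equiv.Perm S)).card := by
  unfold permProb uniformProb
  congr!

lemma permProb_eq_zero {S : Type*} [Fintype S] [DecidableEq S] {A : Equiv.Perm S → Prop} (h : ∀ σ, ¬ A σ) :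
    permProb A = 0 := by
  rw [permProb_def, Finset.filter_eq_empty_iff.2 fun σ _ => h σ]
  simp

lemma permProb_simple (hr : 1 ≤ r) (hmn : m * r = d * n) (f : Fin m × Fin r → Fin n)
    (hf : ∀ v, cnt f v = d) (P : Finset (Finset (Fin n)) → Prop) :
    permProb (fun σ => SimpleWord (f ∘ σ) ∧ P (edgesOf (f ∘ σ))) =
      permProb (fun σ => SimpleWord (f ∘ σ)) * uniformProb (regularFamily n r d) P := by
  have h1 := card_simple_perms hr hmn f hf P
  have h2 := card_simple_perms hr hmn f hf (fun _ => True)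
  simp only [and_true, filter_true] at h2
  set N := Fintype.card (Equiv.Perm (Fin m) × (Fin m → Equiv.Perm (Fin r))) * ∏ v, (cnt f v).factorial
  rw [permProb_def, permProb_def, h1, h2]
  unfold uniformProb
  push_cast
  rcases Nat.eq_zero_or_pos (regularFamily n r d).card with h0 | h0
  · have h3 : ((regularFamily n r d).filter (fun E => P E)).card = 0 := by
      have := Finset.card_filter_le (regularFamily n r d) (fun E => P E)
      omega
    simp [h0, h3]
  · have : ((regularFamily n r d).card : ℝ) ≠ 0 := by positivity
    field_simp

lemma exists_regular_word (hmn : m * r = d * n) :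
    ∃ f : Fin m × Fin r → Fin n, ∀ v, cnt f v = d := by
  let E : Fin m × Fin r ≃ Fin d × Fin n :=
    finProdFinEquiv.trans ((finCongr hmn).trans finProdFinEquiv.symm)
  refine ⟨(fun p : Fin d × Fin n => p.2) ∘ E, fun v => ?_⟩
  rw [cnt_equiv]
  have := cnt_prod_snd (A := Fin d) (fun x : Fin n => x) v
  rw [Fintype.card_fin] at this
  refine this.trans ?_
  have h1 : cnt (fun x : Fin n => x) v = 1 := Finset.card_eq_one.2 ⟨v, by ext; simp⟩
  rw [h1, mul_one]

lemma Rare.or {r d : ℕ} {B₁ B₂ : (m n : ℕ) → (Fin m × Fin r → Fin n) → Prop} (h₁ : Rare r d B₁)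
    (h₂ : Rare r d B₂) : Rare r d (fun m n g => B₁ m n g ∨ B₂ m n g) := by
  intro δ hδ
  obtain ⟨n₁, h₁⟩ := h₁ (δ / 2) (by positivity)
  obtain ⟨n₂, h₂⟩ := h₂ (δ / 2) (by positivity)
  refine ⟨max n₁ n₂, fun n hn m hmn f hf => ?_⟩
  have h1 := h₁ n (le_trans (le_max_left _ _) hn) m hmn f hf
  have h2 := h₂ n (le_trans (le_max_right _ _) hn) m hmn f hf
  exact (permProb_or_le _ _).trans ((add_le_add h1 h2).trans (by linarith))

lemma permProb_add_not {S : Type*} [Fintype S] [DecidableEq S] (A P : Equiv.Perm S → Prop) :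
    permProb A ≤ permProb (fun σ => A σ ∧ P σ) + permProb (fun σ => A σ ∧ ¬ P σ) := by
  refine (permProb_mono ?_).trans (permProb_or_le _ _)
  intro σ h
  by_cases hp : P σ
  · exact Or.inl ⟨h, hp⟩
  · exact Or.inr ⟨h, hp⟩

lemma uniformProb_le_one {α : Type*} (s : Finset α) (P : α → Prop) : uniformProb s P ≤ 1 := by
  unfold uniformProb
  refine div_le_one_of_le₀ ?_ (by positivity)
  exact_mod_cast Finset.card_filter_le _ _

/-- A property of the hypergraph that only fails for rare words holds with high probability, since a random
word is simple with probability bounded away from zero. -/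
lemma tendsto_of_rare (r d : ℕ) (hr : 2 ≤ r) (hd : 1 ≤ d)
    (Bad : (m n : ℕ) → (Fin m × Fin r → Fin n) → Prop) (hBad : Rare r d Bad)
    (P : (n : ℕ) → Finset (Finset (Fin n)) → Prop)
    (hP : ∀ m n, ∀ g : Fin m × Fin r → Fin n, SimpleWord g → ¬ Bad m n g → P n (edgesOf g)) :
    Tendsto (fun n : ℕ => uniformProb (regularFamily n r d) (P n))
      (atTop ⊓ 𝓟 {n : ℕ | r ∣ d * n}) (nhds 1) := by
  obtain ⟨c, hc, N₀, hN₀⟩ := permProb_defect_free r d (by omega) hd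
  rw [Metric.tendsto_nhds]
  intro δ hδ
  obtain ⟨n₁, hn₁⟩ := hBad (c * δ / 2) (by positivity)
  rw [Filter.eventually_inf_principal]
  filter_upwards [eventually_ge_atTop (max n₁ N₀)] with n hn hdvd
  obtain ⟨m, hm⟩ := hdvd
  have hmn : m * r = d * n := by rw [hm, mul_comm]
  obtain ⟨f, hf⟩ := exists_regular_word hmn
  have h1 : c ≤ permProb (fun σ => SimpleWord (f ∘ σ)) := by
    refine (hN₀ m n ?_ f hf).trans (permProb_mono fun σ h => simpleWord_of_defects hr _ h)
    have h2 : N₀ ≤ n := le_trans (le_max_right _ _) hn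
    rw [hmn]
    exact h2.trans (Nat.le_mul_of_pos_left _ hd)
  have h2 := hn₁ n (le_trans (le_max_left _ _) hn) m hmn f hf
  have h3 := permProb_simple (by omega) hmn f hf (P n)
  have h4 := permProb_add_not (fun σ => SimpleWord (f ∘ σ)) (fun σ => P n (edgesOf (f ∘ σ)))
  have h5 : permProb (fun σ => SimpleWord (f ∘ σ) ∧ ¬ P n (edgesOf (f ∘ σ))) ≤
      permProb (fun σ => Bad m n (f ∘ σ)) := by
    refine permProb_mono fun σ h => ?_
    by_contra hb
    exact h.2 (hP m n _ h.1 hb)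
  set p := permProb (fun σ => SimpleWord (f ∘ σ))
  set q := uniformProb (regularFamily n r d) (P n)
  have hq1 : q ≤ 1 := uniformProb_le_one _ _
  rw [h3] at h4
  have h6 : p * (1 - q) ≤ c * δ / 2 := by linarith
  have h7 : c * (1 - q) ≤ c * δ / 2 := le_trans (mul_le_mul_of_nonneg_right h1 (by linarith)) h6
  have h8 : 1 - q ≤ δ / 2 := by
    refine le_of_mul_le_mul_left ?_ hc
    linarith
  rw [Real.dist_eq, abs_lt]
  constructor <;> linarith

lemma properColoring_edgesOf {k : ℕ} (g : Fin m × Fin r → Fin n) (c : Fin n → Fin k) :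
    ProperColoring (edgesOf g) c ↔ RowProper (c ∘ g) := by
  constructor
  · intro h e
    obtain ⟨v, hv, w, hw, hvw⟩ := h _ ((mem_edgesOf g _).2 ⟨e, rfl⟩)
    obtain ⟨i, rfl⟩ := (mem_rowSet _ _ _).1 hv
    obtain ⟨j, rfl⟩ := (mem_rowSet _ _ _).1 hw
    exact ⟨i, j, hvw⟩
  · intro h E hE
    obtain ⟨e, rfl⟩ := (mem_edgesOf _ _).1 hE
    obtain ⟨i, j, hij⟩ := h e
    exact ⟨_, (mem_rowSet _ _ _).2 ⟨i, rfl⟩, _, (mem_rowSet _ _ _).2 ⟨j, rfl⟩, hij⟩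

/-- Bounds on the chromatic number hold with high probability once the first moment with `k₁` colors tends to
zero and the second moment with `k` colors is under control. -/
lemma tendsto_chromatic_between (r d k₁ k : ℕ) (hr : 2 ≤ r) (hd : 1 ≤ d)
    (h₁ : 1 ≤ k₁ → Real.log k₁ < d / r * monoProb k₁ r) (hk : 3 ≤ k) (η : ℝ) (hη : 0 < η)
    (hq : monoProb k r < 1)
    (hT : TermIneq r k (d / r * monoProb k r / (1 - monoProb k r) ^ 2) η)
    (Q : ℕ → Prop) (hQ : ∀ χ, k₁ < χ → χ ≤ k + 5 * r → Q χ) :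
    Tendsto (fun n : ℕ => uniformProb (regularFamily n r d) (fun E => Q (chromaticNumber E)))
      (atTop ⊓ 𝓟 {n : ℕ | r ∣ d * n}) (nhds 1) := by
  have hup := rare_not_colorable r d k hr hd hk η hη hq hT
  have hlow : Rare r d (fun _ n g => ∃ c : Fin n → Fin k₁, RowProper (c ∘ g) ∧ 1 ≤ n) := by
    rcases Nat.eq_zero_or_pos k₁ with h0 | h0
    · subst h0
      intro δ hδ
      refine ⟨0, fun n _ m _ f _ => ?_⟩
      refine le_trans (le_of_eq (permProb_eq_zero ?_)) hδ.le
      rintro σ ⟨c, _, hn⟩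
      exact (c ⟨0, hn⟩).elim0
    · intro δ hδ
      obtain ⟨n₀, hn₀⟩ := rare_colorable r d k₁ (by omega) hd h0 (h₁ h0) δ hδ
      refine ⟨n₀, fun n hn m hmn f hf => (permProb_mono ?_).trans (hn₀ n hn m hmn f hf)⟩
      rintro σ ⟨c, hc, _⟩
      exact ⟨c, hc⟩
  have hpos : Rare r d (fun _ n _ => n = 0) := by
    intro δ hδ
    refine ⟨1, fun n hn m _ f _ => ?_⟩
    refine le_trans (le_of_eq (permProb_eq_zero ?_)) hδ.le
    intro σ h0
    omega
  refine tendsto_of_rare r d hr hd _ ((hup.or hlow).or hpos) (fun n E => Q (chromaticNumber E)) ?_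
  intro m n g hg hbad
  push Not at hbad
  obtain ⟨⟨hb1, hb2⟩, hb3⟩ := hbad
  have hnm : ∀ e, NonMono (fun i => g (e, i)) := fun e =>
    ⟨⟨0, by omega⟩, ⟨1, by omega⟩, fun h => by simpa using hg.1 e h⟩
  obtain ⟨c, hc⟩ := hb1 hnm
  have hmem : (k + 5 * r) ∈ {k : ℕ | ∃ c : Fin n → Fin k, ProperColoring (edgesOf g) c} :=
    ⟨c, (properColoring_edgesOf g c).2 hc⟩
  refine hQ _ ?_ (Nat.sInf_le hmem)
  by_contra hlt
  push Not at hlt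
  obtain ⟨c', hc'⟩ : ∃ c : Fin n → Fin (chromaticNumber (edgesOf g)), ProperColoring (edgesOf g) c :=
    Nat.sInf_mem ⟨_, hmem⟩
  have := hb2 (fun v => Fin.castLE hlt (c' v)) ?_
  · omega
  · rw [← properColoring_edgesOf]
    intro e he
    obtain ⟨v, hv, w, hw, hvw⟩ := hc' e he
    exact ⟨v, hv, w, hw, fun h => hvw (Fin.castLE_injective hlt h)⟩

end Transfer

/-! ### Choice of the number of colors -/

section Parameters

lemma exists_root {b : ℝ} (hb : 1 < b) {j : ℕ} (hj : 1 ≤ j) : ∃ s : ℝ, 1 < s ∧ s ^ j = b := by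
  have hj0 : (0 : ℝ) < j := by exact_mod_cast hj
  refine ⟨b ^ ((j : ℝ)⁻¹), Real.one_lt_rpow hb (by positivity), ?_⟩
  exact Real.rpow_inv_natCast_pow (by linarith) (by omega)

lemma eventually_log_mul_le {C c : ℝ} (hC : 0 < C) (hc : 0 < c) :
    ∀ᶠ y : ℝ in atTop, Real.log (C * y) + 1 ≤ c * y := by
  have h1 := Real.isLittleO_log_id_atTop.bound (show (0 : ℝ) < c / 2 by positivity)
  have h2 : ∀ᶠ y : ℝ in atTop, (Real.log C + 1) / (c / 2) ≤ y := eventually_ge_atTop _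
  filter_upwards [h1, h2, eventually_gt_atTop 0] with y h1 h2 h3
  rw [div_le_iff₀ (by positivity)] at h2
  simp only [id_eq, Real.norm_eq_abs, abs_of_pos h3] at h1
  rw [Real.log_mul hC.ne' h3.ne']
  have := le_abs_self (Real.log y)
  linarith

lemma tendsto_log_nat : Tendsto (fun k : ℕ => Real.log k) atTop atTop :=
  Real.tendsto_log_atTop.comp tendsto_natCast_atTop_atTop

lemma monoProb_le_inv (k r : ℕ) (hr : 2 ≤ r) (hk : 1 ≤ k) : monoProb k r ≤ (k : ℝ)⁻¹ := by
  unfold monoProb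
  have hk1 : (1 : ℝ) ≤ k := by exact_mod_cast hk
  refine inv_anti₀ (by positivity) ?_
  exact le_self_pow₀ hk1 (by omega)

/-- The hypotheses on the number `k` of colors in the second moment argument hold for large `k`. -/
lemma eventually_colors (r : ℕ) (hr : 2 ≤ r) {s : ℝ} (hs : 1 < s) :
    ∀ᶠ k : ℕ in atTop, 3 ≤ k ∧ monoProb k r < 1 ∧ 1 ≤ s * (1 - monoProb k r) ^ 2 ∧
      4 * (r : ℝ) ^ 2 * Real.log k ≤ k ∧
      s⁻¹ * Real.log k ≤ Real.log k - Real.log (4 * r ^ 2 * Real.log k) - 1 := by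
  have hr0 : (0 : ℝ) < 4 * (r : ℝ) ^ 2 := by
    have : (0 : ℝ) < r := by exact_mod_cast (by omega : 0 < r)
    positivity
  have hs0 : s⁻¹ < 1 := inv_lt_one_of_one_lt₀ hs
  have h1 : Tendsto (fun k : ℕ => s * (1 - (k : ℝ)⁻¹) ^ 2) atTop (nhds (s * (1 - 0) ^ 2)) :=
    ((tendsto_const_nhds.sub tendsto_inv_atTop_nhds_zero_nat).pow 2).const_mul s
  have h1' : ∀ᶠ k : ℕ in atTop, 1 < s * (1 - (k : ℝ)⁻¹) ^ 2 :=
    h1.eventually_const_lt (by simpa using hs)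
  have h2 : ∀ᶠ k : ℕ in atTop, ‖Real.log (k : ℝ)‖ ≤ (4 * (r : ℝ) ^ 2)⁻¹ * ‖(id (k : ℝ) : ℝ)‖ :=
    tendsto_natCast_atTop_atTop.eventually
      (Real.isLittleO_log_id_atTop.bound (inv_pos.2 hr0))
  have h3 : ∀ᶠ k : ℕ in atTop, Real.log (4 * (r : ℝ) ^ 2 * Real.log k) + 1 ≤ (1 - s⁻¹) * Real.log k :=
    tendsto_log_nat.eventually (eventually_log_mul_le hr0 (by linarith))
  filter_upwards [h1', h2, h3, eventually_ge_atTop 3] with k h1 h2 h3 hk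
  have hk3 : (3 : ℝ) ≤ k := by exact_mod_cast hk
  have hq := monoProb_le_inv k r hr (by omega)
  have hinv : (k : ℝ)⁻¹ < 1 := inv_lt_one_of_one_lt₀ (by linarith)
  refine ⟨hk, by linarith, ?_, ?_, by linarith⟩
  · refine h1.le.trans (mul_le_mul_of_nonneg_left ?_ (by linarith))
    exact pow_le_pow_left₀ (by linarith) (by linarith) 2
  · simp only [id_eq, Real.norm_eq_abs, Nat.abs_cast] at h2
    have h4 := (le_abs_self _).trans h2
    rwa [inv_mul_eq_div, le_div_iff₀ hr0, mul_comm] at h4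

/-- The asymptotic value of the chromatic number. -/
noncomputable def chromScale (r d : ℕ) : ℝ :=
  (((r : ℝ) - 1) * d / (r * Real.log d)) ^ ((1 : ℝ) / ((r : ℝ) - 1))

/-- With `X = chromScale r d` and `y = log d` one has `(r - 1) log X = y - log (r y / (r - 1))`, so that
`log d / (r - 1)` and `log X` agree asymptotically. -/
lemma eventually_chromScale (r : ℕ) (hr : 2 ≤ r) {s : ℝ} (hs : 1 < s) (M : ℝ) :
    ∀ᶠ d : ℕ in atTop, 1 ≤ d ∧ M ≤ chromScale r d ∧ 0 < chromScale r d ∧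
      (d : ℝ) / r = Real.log d / ((r : ℝ) - 1) * chromScale r d ^ (r - 1) ∧
      Real.log (chromScale r d) ≤ Real.log d / ((r : ℝ) - 1) ∧
      Real.log d / ((r : ℝ) - 1) ≤ s * Real.log (chromScale r d) := by
  have hr2 : (2 : ℝ) ≤ r := by exact_mod_cast hr
  have hρ : (0 : ℝ) < (r : ℝ) - 1 := by linarith
  have hs0 : s⁻¹ < 1 := inv_lt_one_of_one_lt₀ hs
  have h1 : ∀ᶠ d : ℕ in atTop, Real.log (r / ((r : ℝ) - 1) * Real.log d) + 1 ≤ (1 - s⁻¹) * Real.log d :=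
    tendsto_log_nat.eventually (eventually_log_mul_le (by positivity) (by linarith))
  have h2 : ∀ᶠ d : ℕ in atTop, max 1 (s * ((r : ℝ) - 1) * Real.log (max M 1)) ≤ Real.log d :=
    tendsto_log_nat.eventually (eventually_ge_atTop _)
  filter_upwards [h1, h2, eventually_ge_atTop 1] with d h1 h2 hd
  have hd0 : (0 : ℝ) < d := by exact_mod_cast hd
  set y := Real.log d with hy
  have hy1 : 1 ≤ y := (le_max_left _ _).trans h2
  have hyM : s * ((r : ℝ) - 1) * Real.log (max M 1) ≤ y := (le_max_right _ _).trans h2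
  have hbase : 0 < ((r : ℝ) - 1) * d / (r * y) := by positivity
  have hX0 : 0 < chromScale r d := Real.rpow_pos_of_pos hbase _
  have hlog : Real.log (chromScale r d) = (y - Real.log (r / ((r : ℝ) - 1) * y)) / ((r : ℝ) - 1) := by
    have e : ((r : ℝ) - 1) * d / (r * y) = d / (r / ((r : ℝ) - 1) * y) := by field_simp
    unfold chromScale
    rw [Real.log_rpow hbase, e, Real.log_div hd0.ne' (by positivity)]
    ring
  have hup : y / ((r : ℝ) - 1) ≤ s * Real.log (chromScale r d) := by
    rw [hlog, ← mul_div_assoc]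
    refine div_le_div_of_nonneg_right ?_ hρ.le
    have h3 : s⁻¹ * y ≤ y - Real.log (r / ((r : ℝ) - 1) * y) := by linarith
    have h4 := mul_le_mul_of_nonneg_left h3 (show 0 ≤ s by linarith)
    rwa [← mul_assoc, mul_inv_cancel₀ (by linarith), one_mul] at h4
  refine ⟨hd, ?_, hX0, ?_, ?_, hup⟩
  · have h5 : Real.log (max M 1) ≤ Real.log (chromScale r d) := by
      rw [div_le_iff₀ hρ] at hup
      have h6 : (s * ((r : ℝ) - 1)) * Real.log (max M 1) ≤ (s * ((r : ℝ) - 1)) * Real.log (chromScale r d) := by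
        linarith
      exact le_of_mul_le_mul_left h6 (by positivity)
    exact (le_max_left _ _).trans ((Real.log_le_log_iff (by positivity) hX0).1 h5)
  · have e : chromScale r d ^ (r - 1) = ((r : ℝ) - 1) * d / (r * y) := by
      unfold chromScale
      have hc : ((r - 1 : ℕ) : ℝ) = (r : ℝ) - 1 := by
        rw [Nat.cast_sub (by omega), Nat.cast_one]
      rw [← hc, one_div]
      exact Real.rpow_inv_natCast_pow (by rw [hc]; exact hbase.le) (by omega)
    rw [e]
    field_simp
  · rw [hlog]
    refine div_le_div_of_nonneg_right ?_ hρ.le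
    have h3 : 0 ≤ Real.log (r / ((r : ℝ) - 1) * y) := by
      refine Real.log_nonneg ?_
      have : 1 ≤ r / ((r : ℝ) - 1) := by rw [le_div_iff₀ hρ]; linarith
      nlinarith
    linarith

end Parameters

/-- For every integer `r ≥ 2` and every `ε > 0` there exists `d₀ = d₀(r, ε)` such that
for every fixed integer `d ≥ d₀`, w.h.p. (as `n → ∞` along `n` with `r ∣ d·n`)
`|χ(H_r(n,d)) − X| ≤ ε·X` where `X = ((r−1)d/(r log d))^(1/(r−1))`. -/
theorem chromatic_number_of_random_regular_hypergraph (r : ℕ) (hr : 2 ≤ r) (ε : ℝ) (hε : 0 < ε) :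
    ∃ d₀ : ℕ, ∀ d : ℕ, d₀ ≤ d →
      Filter.Tendsto
        (fun n : ℕ =>
          uniformProb (regularFamily n r d)
            (fun E =>
              |(chromaticNumber E : ℝ) -
                  ((((r : ℝ) - 1) * d / (r * Real.log d)) ^ ((1 : ℝ) / ((r : ℝ) - 1)))| ≤
                ε * ((((r : ℝ) - 1) * d / (r * Real.log d)) ^ ((1 : ℝ) / ((r : ℝ) - 1)))))
        (Filter.atTop ⊓ Filter.principal {n : ℕ | r ∣ d * n}) (nhds 1) := by
  -- The factor `1 + ε / 2` is split as `s ^ 4`, to absorb the error terms one factor `s` at a time; the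
  -- colorings considered have classes of size at most `t n / k`, where `t ^ (r - 1) = s`.
  obtain ⟨s, hs, hs4⟩ := exists_root (show 1 < 1 + ε / 2 by linarith) (show 1 ≤ 4 by norm_num)
  obtain ⟨t, ht, htr⟩ := exists_root hs (show 1 ≤ r - 1 by omega)
  obtain ⟨K₀, hK₀⟩ := eventually_atTop.1 (eventually_colors r hr hs)
  obtain ⟨d₀, hd₀⟩ := eventually_atTop.1
    (eventually_chromScale r hr hs (max K₀ ((2 + 10 * r) / ε)))
  refine ⟨d₀, fun d hd => ?_⟩
  obtain ⟨hd1, hXM, hX0, hdr, hlogX, hlogd⟩ := hd₀ d hd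
  have hXdef : (((r : ℝ) - 1) * d / (r * Real.log d)) ^ ((1 : ℝ) / ((r : ℝ) - 1)) = chromScale r d := rfl
  rw [hXdef]
  set X := chromScale r d with hX
  set L := Real.log d / ((r : ℝ) - 1) with hL
  have hXK : (K₀ : ℝ) ≤ X := (le_max_left _ _).trans hXM
  have hXε : 2 + 10 * r ≤ ε * X := by
    have := (le_max_right _ _).trans hXM
    rw [div_le_iff₀ hε] at this
    linarith
  set k := ⌈(1 + ε / 2) * X⌉₊ with hk
  have hkX : (1 + ε / 2) * X ≤ k := Nat.le_ceil _
  have hkX' : (k : ℝ) < (1 + ε / 2) * X + 1 := Nat.ceil_lt_add_one (by positivity)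
  have hXk : X ≤ k := by
    refine le_trans ?_ hkX
    nlinarith
  obtain ⟨hk3, hq1, hqs, hklog, hkent⟩ := hK₀ k (by exact_mod_cast hXK.trans hXk)
  have hk0 : (0 : ℝ) < k := by positivity
  have hlogXk : Real.log X ≤ Real.log k := Real.log_le_log hX0 hXk
  have hlogk0 : 0 ≤ Real.log k := Real.log_natCast_nonneg k
  have hL0 : 0 ≤ L := by
    rw [hL]
    refine div_nonneg (Real.log_natCast_nonneg d) ?_
    have : (2 : ℝ) ≤ r := by exact_mod_cast hr
    linarith
  -- the first factor: `(d / r) q ≤ L / (1 + ε / 2)`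
  have hfirst : (d : ℝ) / r * monoProb k r * s ^ 4 ≤ L := by
    have h1 : (1 + ε / 2) * X ^ (r - 1) ≤ (k : ℝ) ^ (r - 1) := by
      calc (1 + ε / 2) * X ^ (r - 1) ≤ (1 + ε / 2) ^ (r - 1) * X ^ (r - 1) := by
            refine mul_le_mul_of_nonneg_right ?_ (by positivity)
            exact le_self_pow₀ (by linarith) (by omega)
        _ = ((1 + ε / 2) * X) ^ (r - 1) := by rw [mul_pow]
        _ ≤ (k : ℝ) ^ (r - 1) := by gcongr
    have hkp : (0 : ℝ) < (k : ℝ) ^ (r - 1) := by positivity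
    rw [hs4, hdr, monoProb, ← div_eq_mul_inv, div_mul_eq_mul_div, div_le_iff₀ hkp]
    calc L * X ^ (r - 1) * (1 + ε / 2) = L * ((1 + ε / 2) * X ^ (r - 1)) := by ring
      _ ≤ _ := mul_le_mul_of_nonneg_left h1 hL0
  have hqpos : 0 < (1 - monoProb k r) ^ 2 := by
    have : 0 < 1 - monoProb k r := by linarith
    positivity
  set Λ := (d : ℝ) / r * monoProb k r / (1 - monoProb k r) ^ 2 with hΛ
  have hmono0 : 0 ≤ monoProb k r := monoProb_nonneg k r
  have hΛ0 : 0 ≤ Λ := by positivity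
  have hs0 : 0 < s := by linarith
  have hmain : Λ * s ≤ s⁻¹ * Real.log k := by
    have h1 : Λ ≤ s * ((d : ℝ) / r * monoProb k r) := by
      rw [hΛ, div_le_iff₀ hqpos]
      have h0 : 0 ≤ (d : ℝ) / r * monoProb k r := by positivity
      nlinarith
    have h2 : (d : ℝ) / r * monoProb k r * s ^ 4 ≤ s * Real.log k :=
      hfirst.trans (hlogd.trans (mul_le_mul_of_nonneg_left hlogXk hs0.le))
    have h3 : Λ * s * s ≤ Real.log k := by
      refine le_of_mul_le_mul_left ?_ hs0
      calc s * (Λ * s * s) ≤ s * (s * ((d : ℝ) / r * monoProb k r) * s * s) := by gcongr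
        _ = (d : ℝ) / r * monoProb k r * s ^ 4 := by ring
        _ ≤ _ := h2
    rw [inv_mul_eq_div, le_div_iff₀ hs0]
    exact h3
  have hT : TermIneq r k Λ (t - 1) := by
    refine termIneq_of r k hr (by omega) Λ (t - 1) hΛ0 (by linarith) ?_ hklog ?_
    · have h1 : Λ ≤ Λ * s := le_mul_of_one_le_right hΛ0 hs.le
      have h2 : s⁻¹ * Real.log k ≤ Real.log k := mul_le_of_le_one_left hlogk0 (inv_le_one_of_one_le₀ hs.le)
      linarith
    · rw [add_sub_cancel, htr]
      exact hmain.trans hkent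
  refine tendsto_chromatic_between r d (⌈(1 - ε) * X⌉₊ - 1) k hr hd1 ?_ hk3 (t - 1) (by linarith) hq1 hT
    (fun χ => |(χ : ℝ) - X| ≤ ε * X) ?_
  · intro h1
    set k₁ := ⌈(1 - ε) * X⌉₊ - 1 with hk₁
    have hk1lt : (k₁ : ℝ) < (1 - ε) * X := by
      rw [← Nat.lt_ceil]
      omega
    have hεX : 0 < ε * X := by positivity
    have hk1X : (k₁ : ℝ) < X := by linarith
    have hk1pos : (0 : ℝ) < k₁ := by exact_mod_cast h1
    have hLpos : Real.log k₁ < L := (Real.log_lt_log hk1pos hk1X).trans_le hlogX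
    refine hLpos.trans_le ?_
    rw [hdr, monoProb, ← div_eq_mul_inv, le_div_iff₀ (by positivity)]
    refine mul_le_mul_of_nonneg_left ?_ hL0
    gcongr
  · intro χ hχ1 hχ2
    have h1 : (1 - ε) * X ≤ χ := by
      refine (Nat.le_ceil _).trans ?_
      exact_mod_cast (by omega : ⌈(1 - ε) * X⌉₊ ≤ χ)
    have h2 : (χ : ℝ) ≤ k + 5 * r := by exact_mod_cast hχ2
    rw [abs_le]
    rw [sub_mul, one_mul] at h1
    rw [add_mul, one_mul] at hkX'
    constructor <;> linarith
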